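/- Let T > 0, let q : ℝ → ℝ be T-periodic and locally integrable, let g ∈ C²([0,∞)) satisfy (g*), and let R > 0. Define h : ℝ × ℝ → ℝ by h(t,s) = 0 for s < 0, h(t,s) = q(t) g(s) for 0 ≤ s ≤ R, and h(t,s) = q(t)(g(R) + g'(R)(s − R)) for s > R. Suppose that: (i) there exists a T-periodic solution u* of u'' + h(t,u) = 0 such that the principal eigenvalue λ_0 of the T-periodic problem v'' + (λ + ∂_s h(t, u*(t))) v = 0 is negative, i.e. there exist λ < 0 and a T-periodic function v with v(t) > 0 for all t solving v'' + (λ + ∂_s h(t,u*(t))) v = 0 a.e.; (ii) there exists a T-periodic function α ∈ W^{2,1}_loc(ℝ) with α''(t) + h(t, α(t)) ≥ 0 for a.e. t and α(t) < u*(t) for all t. Then there exists an integer k* ≥ 1 such that for every integer k ≥ k* there exists an integer m_k ≥ 1 such that, for every integer j relatively prime with k and with 1 ≤ j ≤ m_k, the equation u'' + h(t,u) = 0 has two subharmonic solutions u_{k,j}^{(1)}, u_{k,j}^{(2)} of order k, not belonging to the same periodicity class, such that for i = 1,2 the function u_{k,j}^{(i)} − u* has exactly 2j zeros in [0, kT)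 and α(t) ≤ u_{k,j}^{(i)}(t) for all t ∈ ℝ. -/

import Mathlib

open MeasureTheory Set Filter

/-- `u` is a solution of `u'' + F(t,u) = 0`: `u` is of class `C¹` and its derivative `u'`
is locally absolutely continuous (it is the integral of a locally integrable function),
with `u'' + F(t, u(t)) = 0` for a.e. `t`. -/
def IsSol (F : ℝ → ℝ → ℝ) (u : ℝ → ℝ) : Prop :=
  ∃ u' : ℝ → ℝ,
    (∀ t, HasDerivAt u (u' t) t) ∧
    MeasureTheory.LocallyIntegrable (fun s => F s (u s)) MeasureTheory.volume ∧
    ∀ t, u' t = u' 0 - ∫ s in (0:ℝ)..t, F s (u s)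

/-- `q ≻ 0` on `I` : `q ≥ 0` a.e. on `I` and `q ≢ 0` on `I`. -/
def PosOn (q : ℝ → ℝ) (I : Set ℝ) : Prop :=
  (∀ᵐ t ∂(MeasureTheory.volume.restrict I), 0 ≤ q t) ∧
  ¬ (∀ᵐ t ∂(MeasureTheory.volume.restrict I), q t = 0)

/-- Condition `(q*)`: `[0,T]` splits into `m` closed intervals where `q ≻ 0`
separated by `m` closed intervals where `q ≺ 0`. -/
def SignCond (q : ℝ → ℝ) (T : ℝ) (m : ℕ) : Prop :=
  ∃ σ : ℕ → ℝ, σ 0 = 0 ∧ σ (2*m) = T ∧ (∀ i < 2*m, σ i < σ (i+1)) ∧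
    (∀ i < m, PosOn q (Set.Icc (σ (2*i)) (σ (2*i+1)))) ∧
    (∀ i < m, PosOn (fun t => - q t) (Set.Icc (σ (2*i+1)) (σ (2*i+2))))

/-- A subharmonic solution of order `k`: `kT`-periodic but not `ℓT`-periodic
for `ℓ = 1, …, k-1`. -/
def IsSubharmonic (u : ℝ → ℝ) (T : ℝ) (k : ℕ) : Prop :=
  Function.Periodic u (k * T) ∧ ∀ ℓ : ℕ, 1 ≤ ℓ → ℓ < k → ¬ Function.Periodic u (ℓ * T)

/-- `u` and `v` belong to the same periodicity class. -/
def SameClass (u v : ℝ → ℝ) (T : ℝ) : Prop :=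
  ∃ ℓ : ℤ, ∀ t, v t = u (t + ℓ * T)

/-- The truncated nonlinearity `h(t,s)`: `0` for `s < 0`, `q(t)g(s)` for `0 ≤ s ≤ R`,
and `q(t)(g(R) + g'(R)(s-R))` for `s > R`. -/
noncomputable def hExt (q g : ℝ → ℝ) (R : ℝ) : ℝ → ℝ → ℝ := fun t s =>
  if s < 0 then 0
  else if s ≤ R then q t * g s
  else q t * (g R + derivWithin g (Set.Ici 0) R * (s - R))

/-!
Writing `u = u* + e`, we look for `kT`-periodic solutions of `e'' + f(t, e) = 0` with
`f(t, x) = h(t, u* + x) - h(t, u*)`, which lie between two barriers once `f` is modified for large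
`x`. For a weight `m` dominating the Lipschitz constant of `f`, let one step send `u` to the
periodic solution `w` of `w'' - m w = -(m u + f(t, u))`. This step is monotone, decreases the action
`∫ (e'² / 2 - F(t, e))`, where `F` is the primitive of `f`, keeps functions between the barriers,
and never increases the number of sign changes.

Since the principal eigenvalue is negative, for large `k` the action is bounded above by a negative
constant on the family `v · (σ + (1 - |σ|) cos (2πt / kT - θ))`, `|σ| ≤ 1`, where `v` is a small
positive eigenfunction. Its members are positive for `σ = 1`, negative for `σ = -1`, and have at
most two sign changes per period. Parameters whose iterates become positive, or negative, form two
disjoint open sets; on the remaining closed set the iterates subconverge to solutions `e` with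
exactly two zeros in `[0, kT)`. Following the angle at which the positive part is centred,
a Poincaré–Miranda argument shows that along this remaining set every angle survives in the limit.
If all solutions obtained in this way were translates of one another by multiples of `T`, only
countably many angles could occur. A solution with exactly two zeros per period has minimal period
`kT`, and a priori bounds make the modification of `f` irrelevant.
-/

/-! ### Planar topology -/

section PlanarTopology

theorem angle_sub_eq_arg_sub {z : ℝ → ℂ} {φ : ℝ → ℝ} (hz : Continuous z) (hφ : Continuous φ)
    (hzφ : ∀ t, z t = ‖z t‖ * Complex.exp (φ t * Complex.I)) {w : ℂ}
    (hw : ∀ t, 0 < (w * z t).re) (a b : ℝ) :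
    φ b - φ a = (w * z b).arg - (w * z a).arg := by
  have hwz : ∀ t, w * z t ≠ 0 := fun t h => by simpa [h] using hw t
  have hd : Continuous fun t => φ t - (w * z t).arg := hφ.sub <|
    continuous_iff_continuousAt.2 fun t =>
      (Complex.continuousAt_arg (Or.inl (hw t))).comp (f := fun t => w * z t)
        (continuous_const.mul hz).continuousAt
  have hexp : ∀ t, w * Complex.exp (((φ t - (w * z t).arg : ℝ) : ℂ) * Complex.I) = ‖w‖ := by
    intro t
    have harg := Complex.norm_mul_exp_arg_mul_I (w * z t)
    have hz0 : z t ≠ 0 := right_ne_zero_of_mul (hwz t)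
    push_cast
    rw [sub_mul, Complex.exp_sub, ← mul_div_assoc, div_eq_iff (Complex.exp_ne_zero _)]
    refine mul_left_cancel₀ (Complex.ofReal_ne_zero.2 (norm_ne_zero_iff.2 hz0)) ?_
    rw [norm_mul, Complex.ofReal_mul] at harg
    linear_combination -(w * hzφ t) - harg
  have hconst := Circle.isCoveringMap_exp.eq_of_comp_eq hd (continuous_const (y := φ a -
    (w * z a).arg)) (funext fun t => Circle.ext <| by
      simpa only [Function.comp, Circle.coe_exp] using
        mul_left_cancel₀ (left_ne_zero_of_mul (hwz t)) ((hexp t).trans (hexp a).symm)) a rfl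
  linarith [congrFun hconst b]

theorem arg_neg_I_mul {z : ℂ} (hre : 0 < z.re) (him : 0 < z.im) :
    (-Complex.I * z).arg = z.arg - Real.pi / 2 := by
  have hz : z ≠ 0 := fun h => by simp [h] at hre
  have h0 : 0 ≤ z.arg := Complex.arg_nonneg_iff.2 him.le
  have h1 := (abs_lt.1 (Complex.abs_arg_lt_pi_div_two_iff.2 (Or.inl hre))).2
  rw [Complex.arg_mul (neg_ne_zero.2 Complex.I_ne_zero) hz, Complex.arg_neg_I]
  · ring
  · rw [Complex.arg_neg_I]
    constructor <;> linarith [Real.pi_pos]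

theorem exists_continuous_angle {H : ℝ × ℝ → ℂ} (hH : Continuous H) (hH0 : ∀ p, H p ≠ 0) :
    ∃ φ : ℝ × ℝ → ℝ, Continuous φ ∧ ∀ p, H p = ‖H p‖ * Complex.exp (φ p * Complex.I) := by
  have : ContractibleSpace (univ : Set (ℝ × ℝ)) :=
    (Homeomorph.Set.univ (ℝ × ℝ)).toHomotopyEquiv.contractibleSpace
  have hsc : IsSimplyConnected (univ : Set (ℝ × ℝ)) :=
    inferInstanceAs (SimplyConnectedSpace (univ : Set (ℝ × ℝ)))
  obtain ⟨f, hfc, hf⟩ := Complex.exists_continuousOn_eqOn_exp_comp hsc isOpen_univ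
    hH.continuousOn (by simpa using hH0)
  refine ⟨fun p => (f p).im, Complex.continuous_im.comp (continuousOn_univ.1 hfc), fun p => ?_⟩
  have hp : H p = Complex.exp (f p) := (hf (mem_univ p)).symm
  rw [hp, Complex.norm_exp, Complex.ofReal_exp, ← Complex.exp_add, Complex.re_add_im]

/-- Otherwise the angle of `F + iG` would increase by `π / 2` along each side of the rectangle,
although it is a continuous function on the whole rectangle. -/
theorem poincare_miranda {a b c d : ℝ} (hab : a ≤ b) (hcd : c ≤ d) {F G : ℝ × ℝ → ℝ}
    (hF : ContinuousOn F (Icc a b ×ˢ Icc c d)) (hG : ContinuousOn G (Icc a b ×ˢ Icc c d))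
    (hleft : ∀ y ∈ Icc c d, F (a, y) < 0) (hright : ∀ y ∈ Icc c d, 0 < F (b, y))
    (hbot : ∀ x ∈ Icc a b, G (x, c) < 0) (htop : ∀ x ∈ Icc a b, 0 < G (x, d)) :
    ∃ p ∈ Icc a b ×ˢ Icc c d, F p = 0 ∧ G p = 0 := by
  by_contra! hcon
  let r : ℝ × ℝ → ℝ × ℝ := fun p => (projIcc a b hab p.1, projIcc c d hcd p.2)
  have hr : Continuous r := by fun_prop
  have hrmem : ∀ p, r p ∈ Icc a b ×ˢ Icc c d := fun p =>
    ⟨(projIcc a b hab p.1).2, (projIcc c d hcd p.2).2⟩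
  let H : ℝ × ℝ → ℂ := fun p => F (r p) + G (r p) * Complex.I
  have hFr := hF.comp_continuous hr hrmem
  have hGr := hG.comp_continuous hr hrmem
  have hre : ∀ p, (H p).re = F (r p) := fun p => by simp [H]
  have him : ∀ p, (H p).im = G (r p) := fun p => by simp [H]
  have hH : Continuous H := (Complex.continuous_ofReal.comp hFr).add
    ((Complex.continuous_ofReal.comp hGr).mul continuous_const)
  obtain ⟨φ, hφ, hHφ⟩ := exists_continuous_angle hH fun p h0 => hcon _ (hrmem p)
    (by rw [← hre, h0, Complex.zero_re]) (by rw [← him, h0, Complex.zero_im])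
  have hL : ∀ y, (H (a, y)).re < 0 := fun y => by
    simpa only [hre, r, projIcc_left] using hleft _ (projIcc c d hcd y).2
  have hR : ∀ y, 0 < (H (b, y)).re := fun y => by
    simpa only [hre, r, projIcc_right] using hright _ (projIcc c d hcd y).2
  have hB : ∀ x, (H (x, c)).im < 0 := fun x => by
    simpa only [him, r, projIcc_left] using hbot _ (projIcc a b hab x).2
  have hT : ∀ x, 0 < (H (x, d)).im := fun x => by
    simpa only [him, r, projIcc_right] using htop _ (projIcc a b hab x).2
  have vert : ∀ x w, (∀ y, 0 < (w * H (x, y)).re) → _ := fun x w hw =>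
    angle_sub_eq_arg_sub (hH.comp (Continuous.prodMk_right x)) (hφ.comp (Continuous.prodMk_right x))
      (fun y => hHφ (x, y)) hw
  have horiz : ∀ y w, (∀ x, 0 < (w * H (x, y)).re) → _ := fun y w hw =>
    angle_sub_eq_arg_sub (hH.comp (Continuous.prodMk_left y)) (hφ.comp (Continuous.prodMk_left y))
      (fun x => hHφ (x, y)) hw
  have right := vert b 1 (by simpa using hR) c d
  have top := horiz d (-Complex.I) (by simpa using hT) b a
  have left := vert a (-1) (by simpa using hL) d c
  have bot := horiz c Complex.I (by simpa using hB) a b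
  have cornerTR := arg_neg_I_mul (hR d) (hT b)
  have cornerTL := arg_neg_I_mul (z := -Complex.I * H (a, d)) (by simpa using hT a)
    (by simpa using hL d)
  have cornerBL := arg_neg_I_mul (z := -1 * H (a, c)) (by simpa using hL c) (by simpa using hB a)
  have cornerBR := arg_neg_I_mul (z := Complex.I * H (b, c)) (by simpa using hB b)
    (by simpa using hR c)
  simp only [Function.comp_apply, neg_mul, neg_neg, one_mul, mul_neg, ← mul_assoc,
    Complex.I_mul_I] at right top left bot cornerTR cornerTL cornerBL cornerBR
  linarith [Real.pi_pos]

theorem exists_eq_of_dist_fst_le {U V : Set (ℝ × ℝ)} (hU : IsOpen U) (hV : IsOpen V)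
    (hUV : Disjoint U V) (hU1 : ∀ θ, (θ, (1 : ℝ)) ∈ U) (hV1 : ∀ θ, (θ, (-1 : ℝ)) ∈ V)
    {A : ℝ × ℝ → ℝ} {C : ℝ} (hA : ContinuousOn A (U ∪ V)ᶜ)
    (hC : ∀ p ∈ (U ∪ V)ᶜ, |A p - p.1| ≤ C) (c : ℝ) :
    ∃ p ∈ (U ∪ V)ᶜ, p.2 ∈ Icc (-1) 1 ∧ A p = c := by
  have hne : (Icc (-|C|) |C|).Nonempty := ⟨0, by simp⟩
  obtain ⟨E, hEmem, hE⟩ := ContinuousMap.exists_restrict_eq_forall_mem_of_closed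
    (t := Icc (-|C|) |C|)
    (⟨_, (hA.sub continuous_fst.continuousOn).domRestrict⟩ : C(((U ∪ V)ᶜ : Set (ℝ × ℝ)), ℝ))
    (fun p => abs_le.1 ((hC p p.2).trans (le_abs_self C))) hne (hU.union hV).isClosed_compl
  have hEA : ∀ p ∈ (U ∪ V)ᶜ, E p = A p - p.1 := fun p hp =>
    DFunLike.congr_fun hE ⟨p, hp⟩
  have hpos : ∀ {W : Set (ℝ × ℝ)} {p : ℝ × ℝ}, IsOpen W → Wᶜ.Nonempty → p ∈ W →
      0 < Metric.infDist p Wᶜ := fun hW hn hp =>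
    (hW.isClosed_compl.notMem_iff_infDist_pos hn).1 (not_not_intro hp)
  have hUc : Uᶜ.Nonempty := ⟨(0, -1), fun h => hUV.notMem_of_mem_left h (hV1 0)⟩
  have hVc : Vᶜ.Nonempty := ⟨(0, 1), hUV.notMem_of_mem_left (hU1 0)⟩
  have hGU : ∀ {p}, p ∈ U → 0 < Metric.infDist p Uᶜ - Metric.infDist p Vᶜ := fun hp => by
    rw [Metric.infDist_zero_of_mem (mem_compl (hUV.notMem_of_mem_left hp)), sub_zero]
    exact hpos hU hUc hp
  have hGV : ∀ {p}, p ∈ V → Metric.infDist p Uᶜ - Metric.infDist p Vᶜ < 0 := fun hp => by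
    rw [Metric.infDist_zero_of_mem (mem_compl (hUV.notMem_of_mem_right hp)), zero_sub]
    exact neg_neg_of_pos (hpos hV hVc hp)
  have hc := abs_le.1 (le_refl |c|)
  set M := |c| + |C| + 1
  have hM0 : -M ≤ M := by linarith [abs_nonneg c, abs_nonneg C]
  obtain ⟨p, hmem, hF, hG⟩ := poincare_miranda hM0 (by norm_num : (-1 : ℝ) ≤ 1)
    (F := fun p => p.1 + E p - c)
    (G := fun p => Metric.infDist p Uᶜ - Metric.infDist p Vᶜ) (by fun_prop)
    ((Metric.continuous_infDist_pt _).sub (Metric.continuous_infDist_pt _)).continuousOn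
    (fun y _ => by linarith [(hEmem (-M, y)).2]) (fun y _ => by linarith [(hEmem (M, y)).1])
    (fun x _ => hGV (hV1 x)) (fun x _ => hGU (hU1 x))
  have hp : p ∈ (U ∪ V)ᶜ := by
    rintro (h | h)
    · exact (hGU h).ne' hG
    · exact (hGV h).ne hG
  exact ⟨p, hp, hmem.2, by linarith [hEA p hp]⟩

theorem mul_conj_mem_slitPlane {u z w : ℂ} (hz : 0 < (u * z).re) (hw : 0 < (u * w).re) :
    z * (starRingEnd ℂ) w ∈ Complex.slitPlane := by
  rw [Complex.mem_slitPlane_iff]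
  by_cases him : (z * (starRingEnd ℂ) w).im = 0
  · left
    have key : (u * z).re * (u * w).re * (Complex.normSq u * (z * (starRingEnd ℂ) w).re) =
        ((u * z).re * (u * w).re) ^ 2 + ((u * z).im * (u * w).re) ^ 2 := by
      simp only [Complex.normSq_apply, Complex.mul_re, Complex.mul_im, Complex.conj_re,
        Complex.conj_im] at *
      linear_combination -(u.re * u.re + u.im * u.im) * (u.re * z.im + u.im * z.re) *
        (u.re * w.re - u.im * w.im) * him
    have hpos : 0 < (u * z).re * (u * w).re := mul_pos hz hw
    have := pos_of_mul_pos_right (key ▸ by positivity :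
      0 < (u * z).re * (u * w).re * (Complex.normSq u * (z * (starRingEnd ℂ) w).re)) hpos.le
    exact pos_of_mul_pos_right this (Complex.normSq_nonneg u)
  · exact Or.inr him

theorem eq_norm_mul_exp_add_arg {z w : ℂ} {a : ℝ} (hz : z = ‖z‖ * Complex.exp (a * Complex.I))
    (h : w * (starRingEnd ℂ) z ∈ Complex.slitPlane) :
    w = ‖w‖ * Complex.exp ((a + (w * (starRingEnd ℂ) z).arg : ℝ) * Complex.I) := by
  have hz0 : z ≠ 0 := by
    rintro rfl
    simp at h
  have harg := Complex.norm_mul_exp_arg_mul_I (w * (starRingEnd ℂ) z)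
  rw [norm_mul, RCLike.norm_conj, Complex.ofReal_mul] at harg
  refine mul_right_cancel₀ (pow_ne_zero 2 (Complex.ofReal_ne_zero.2 (norm_ne_zero_iff.2 hz0))) ?_
  rw [Complex.ofReal_add, add_mul, Complex.exp_add]
  linear_combination ‖w‖ * ‖z‖ * Complex.exp ((w * (starRingEnd ℂ) z).arg * Complex.I) * hz -
    z * harg - w * Complex.mul_conj' z

/-- `A` is a continuous choice on `Γ` of the argument of `Z`, at bounded distance from the first
coordinate. -/
structure IsAngleOn (Γ : Set (ℝ × ℝ)) (Z : ℝ × ℝ → ℂ) (A : ℝ × ℝ → ℝ) : Prop where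
  continuousOn : ContinuousOn A Γ
  exists_dist_le : ∃ C, ∀ p ∈ Γ, |A p - p.1| ≤ C
  eq_norm_mul_exp : ∀ p ∈ Γ, Z p = ‖Z p‖ * Complex.exp (A p * Complex.I)

namespace IsAngleOn

variable {Γ : Set (ℝ × ℝ)} {Z W : ℝ × ℝ → ℂ} {A : ℝ × ℝ → ℝ}

theorem exp_fst : IsAngleOn Γ (fun p => Complex.exp (p.1 * Complex.I)) Prod.fst where
  continuousOn := continuous_fst.continuousOn
  exists_dist_le := ⟨0, by simp⟩
  eq_norm_mul_exp p _ := by rw [Complex.norm_exp_ofReal_mul_I, Complex.ofReal_one, one_mul]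

theorem add_arg (hA : IsAngleOn Γ Z A) (hZ : Continuous Z) (hW : Continuous W)
    (h : ∀ p ∈ Γ, W p * (starRingEnd ℂ) (Z p) ∈ Complex.slitPlane) :
    IsAngleOn Γ W fun p => A p + (W p * (starRingEnd ℂ) (Z p)).arg where
  continuousOn := hA.continuousOn.add
    (Complex.continuousOn_arg.comp (hW.mul (Complex.continuous_conj.comp hZ)).continuousOn h)
  exists_dist_le := by
    obtain ⟨C, hC⟩ := hA.exists_dist_le
    refine ⟨C + Real.pi, fun p hp => ?_⟩
    rw [add_sub_right_comm]
    exact (abs_add_le _ _).trans (add_le_add (hC p hp) (Complex.abs_arg_le_pi _))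
  eq_norm_mul_exp p hp := eq_norm_mul_exp_add_arg (hA.eq_norm_mul_exp p hp) (h p hp)

theorem exists_of_chain {Z W : ℕ → ℝ × ℝ → ℂ} (hZ : ∀ n, Continuous (Z n))
    (hW : ∀ n, Continuous (W n)) (h0 : ∃ A, IsAngleOn Γ (Z 0) A)
    (hZW : ∀ n, ∀ p ∈ Γ, W n p * (starRingEnd ℂ) (Z n p) ∈ Complex.slitPlane)
    (hWZ : ∀ n, ∀ p ∈ Γ, Z (n + 1) p * (starRingEnd ℂ) (W n p) ∈ Complex.slitPlane) (n : ℕ) :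
    ∃ A, IsAngleOn Γ (Z n) A := by
  induction n with
  | zero => exact h0
  | succ n ih =>
    obtain ⟨A, hA⟩ := ih
    exact ⟨_, (hA.add_arg (hZ n) (hW n) (hZW n)).add_arg (hW n) (hZ (n + 1)) (hWZ n)⟩

end IsAngleOn

end PlanarTopology

/-! ### Functions with a locally integrable first or second derivative -/

section LocallyIntegrable

variable {f g : ℝ → ℝ} {a b : ℝ}

theorem intervalIntegrable_of_locallyIntegrable (hf : LocallyIntegrable f volume) (a b : ℝ) :
    IntervalIntegrable f volume a b :=
  (hf.integrableOn_isCompact isCompact_uIcc).intervalIntegrable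

theorem locallyIntegrable_comp_homeomorph (hf : LocallyIntegrable f volume) {e : ℝ ≃ₜ ℝ}
    (he : MeasurePreserving e volume volume) : LocallyIntegrable (f ∘ e) volume :=
  (locallyIntegrable_map_homeomorph e).1 (he.map_eq.symm ▸ hf)

theorem locallyIntegrable_comp_const_sub (hf : LocallyIntegrable f volume) (c : ℝ) :
    LocallyIntegrable (fun t => f (c - t)) volume :=
  locallyIntegrable_comp_homeomorph hf (e := Homeomorph.subLeft c)
    (Measure.measurePreserving_sub_left volume c)

theorem locallyIntegrable_abs (hf : LocallyIntegrable f volume) :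
    LocallyIntegrable (fun t => |f t|) volume :=
  hf.mono hf.aestronglyMeasurable.norm (by simp)

theorem integral_mono_of_ae_Icc (hf : LocallyIntegrable f volume)
    (hg : LocallyIntegrable g volume) (hab : a ≤ b) (h : ∀ᵐ s, s ∈ Icc a b → f s ≤ g s) :
    ∫ s in a..b, f s ≤ ∫ s in a..b, g s :=
  intervalIntegral.integral_mono_ae_restrict hab (intervalIntegrable_of_locallyIntegrable hf _ _)
    (intervalIntegrable_of_locallyIntegrable hg _ _) ((ae_restrict_iff' measurableSet_Icc).2 h)

theorem ae_const_sub {p : ℝ → Prop} (c : ℝ) (h : ∀ᵐ s, p s) : ∀ᵐ s : ℝ, p (c - s) :=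
  (Measure.measurePreserving_sub_left volume c).quasiMeasurePreserving.ae h

end LocallyIntegrable

/-- `u` is locally absolutely continuous with derivative `u'`, i.e. `u ∈ W^{1,1}_loc(ℝ)`. -/
structure HasW11Deriv (u u' : ℝ → ℝ) : Prop where
  locallyIntegrable : LocallyIntegrable u' volume
  integral_eq_sub : ∀ a b, ∫ s in a..b, u' s = u b - u a

namespace HasW11Deriv

variable {u u' v v' : ℝ → ℝ}

theorem intervalIntegrable (hu : HasW11Deriv u u') (a b : ℝ) : IntervalIntegrable u' volume a b :=
  intervalIntegrable_of_locallyIntegrable hu.locallyIntegrable a b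

theorem eq_add_integral (hu : HasW11Deriv u u') (a : ℝ) : u = fun t => u a + ∫ s in a..t, u' s :=
  funext fun t => by rw [hu.integral_eq_sub a t, add_sub_cancel]

theorem of_eq_add_integral (h : LocallyIntegrable u' volume) {a c : ℝ}
    (hu : ∀ t, u t = c + ∫ s in a..t, u' s) : HasW11Deriv u u' where
  locallyIntegrable := h
  integral_eq_sub x y := by
    rw [hu x, hu y, ← intervalIntegral.integral_interval_sub_left
      (intervalIntegrable_of_locallyIntegrable h a y)
      (intervalIntegrable_of_locallyIntegrable h a x)]
    ring

theorem of_hasDerivAt (h : ∀ t, HasDerivAt u (u' t) t) (hu' : Continuous u') :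
    HasW11Deriv u u' where
  locallyIntegrable := hu'.locallyIntegrable
  integral_eq_sub _ _ := intervalIntegral.integral_eq_sub_of_hasDerivAt (fun t _ => h t)
    (hu'.intervalIntegrable _ _)

theorem continuous (hu : HasW11Deriv u u') : Continuous u := by
  rw [hu.eq_add_integral 0]
  exact continuous_const.add (intervalIntegral.continuous_primitive hu.intervalIntegrable 0)

theorem hasDerivAt (hu : HasW11Deriv u u') (hu' : Continuous u') (t : ℝ) :
    HasDerivAt u (u' t) t := by
  rw [hu.eq_add_integral 0]
  exact (hu'.integral_hasStrictDerivAt 0 t).hasDerivAt.const_add _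

theorem ae_hasDerivAt (hu : HasW11Deriv u u') : ∀ᵐ t, HasDerivAt u (u' t) t := by
  filter_upwards [LocallyIntegrable.ae_hasDerivAt_integral hu.locallyIntegrable] with t ht
  rw [hu.eq_add_integral 0]
  exact (ht 0).const_add _

theorem absolutelyContinuousOnInterval (hu : HasW11Deriv u u') (a b : ℝ) :
    AbsolutelyContinuousOnInterval u a b := by
  rw [hu.eq_add_integral a]
  exact (contDiff_const (n := 1)).contDiffOn.absolutelyContinuousOnInterval.fun_add
    ((hu.intervalIntegrable a b).absolutelyContinuousOnInterval_intervalIntegral left_mem_uIcc)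

theorem congr_ae (hu : HasW11Deriv u u') (h : u' =ᵐ[volume] v') : HasW11Deriv u v' where
  locallyIntegrable := hu.locallyIntegrable.congr h
  integral_eq_sub a b := by
    rw [← hu.integral_eq_sub, intervalIntegral.integral_congr_ae (h.mono fun _ hx _ => hx)]

theorem add (hu : HasW11Deriv u u') (hv : HasW11Deriv v v') :
    HasW11Deriv (fun t => u t + v t) fun t => u' t + v' t where
  locallyIntegrable := hu.locallyIntegrable.add hv.locallyIntegrable
  integral_eq_sub a b := by
    rw [intervalIntegral.integral_add (hu.intervalIntegrable a b) (hv.intervalIntegrable a b),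
      hu.integral_eq_sub, hv.integral_eq_sub]
    ring

theorem neg (hu : HasW11Deriv u u') : HasW11Deriv (fun t => -u t) fun t => -u' t where
  locallyIntegrable := hu.locallyIntegrable.neg
  integral_eq_sub a b := by
    rw [intervalIntegral.integral_neg, hu.integral_eq_sub]
    ring

theorem const_mul (hu : HasW11Deriv u u') (c : ℝ) :
    HasW11Deriv (fun t => c * u t) fun t => c * u' t where
  locallyIntegrable := hu.locallyIntegrable.continuous_mul continuous_const
  integral_eq_sub a b := by
    rw [intervalIntegral.integral_const_mul, hu.integral_eq_sub, mul_sub]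

theorem mul (hu : HasW11Deriv u u') (hv : HasW11Deriv v v') :
    HasW11Deriv (fun t => u t * v t) fun t => u' t * v t + u t * v' t where
  locallyIntegrable := (hu.locallyIntegrable.mul_continuous hv.continuous).add
    (hv.locallyIntegrable.continuous_mul hu.continuous)
  integral_eq_sub a b := by
    rw [← (hu.absolutelyContinuousOnInterval a b).integral_deriv_mul_eq_sub
      (hv.absolutelyContinuousOnInterval a b)]
    apply intervalIntegral.integral_congr_ae
    filter_upwards [hu.ae_hasDerivAt, hv.ae_hasDerivAt] with t hut hvt _
    rw [hut.deriv, hvt.deriv]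

theorem comp_const_sub (hu : HasW11Deriv u u') (c : ℝ) :
    HasW11Deriv (fun t => u (c - t)) fun t => -u' (c - t) where
  locallyIntegrable := (locallyIntegrable_comp_const_sub hu.locallyIntegrable c).neg
  integral_eq_sub a b := by
    rw [intervalIntegral.integral_neg, intervalIntegral.integral_comp_sub_left (fun x => u' x),
      hu.integral_eq_sub]
    ring

end HasW11Deriv

/-- `u` is of class `C¹` with derivative `u'`, and `u'` is locally absolutely continuous with
derivative `u''`, i.e. `u ∈ W^{2,1}_loc(ℝ)`. -/
structure HasW21Deriv (u u' u'' : ℝ → ℝ) : Prop where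
  hasDerivAt : ∀ t, HasDerivAt u (u' t) t
  deriv : HasW11Deriv u' u''

namespace HasW21Deriv

variable {u u' u'' v v' v'' : ℝ → ℝ}

theorem continuous (hu : HasW21Deriv u u' u'') : Continuous u :=
  continuous_iff_continuousAt.2 fun t => (hu.hasDerivAt t).continuousAt

theorem continuous_deriv (hu : HasW21Deriv u u' u'') : Continuous u' := hu.deriv.continuous

theorem hasW11Deriv (hu : HasW21Deriv u u' u'') : HasW11Deriv u u' :=
  .of_hasDerivAt hu.hasDerivAt hu.continuous_deriv

theorem add (hu : HasW21Deriv u u' u'') (hv : HasW21Deriv v v' v'') :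
    HasW21Deriv (fun t => u t + v t) (fun t => u' t + v' t) fun t => u'' t + v'' t :=
  ⟨fun t => (hu.hasDerivAt t).add (hv.hasDerivAt t), hu.deriv.add hv.deriv⟩

theorem neg (hu : HasW21Deriv u u' u'') :
    HasW21Deriv (fun t => -u t) (fun t => -u' t) fun t => -u'' t :=
  ⟨fun t => (hu.hasDerivAt t).neg, hu.deriv.neg⟩

theorem const_mul (hu : HasW21Deriv u u' u'') (c : ℝ) :
    HasW21Deriv (fun t => c * u t) (fun t => c * u' t) fun t => c * u'' t :=
  ⟨fun t => (hu.hasDerivAt t).const_mul c, hu.deriv.const_mul c⟩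

theorem sub (hu : HasW21Deriv u u' u'') (hv : HasW21Deriv v v' v'') :
    HasW21Deriv (fun t => u t - v t) (fun t => u' t - v' t) fun t => u'' t - v'' t := by
  simpa only [sub_eq_add_neg] using hu.add hv.neg

theorem add_const (hu : HasW21Deriv u u' u'') (c : ℝ) : HasW21Deriv (fun t => u t + c) u' u'' :=
  ⟨fun t => (hu.hasDerivAt t).add_const c, hu.deriv⟩

theorem congr_ae (hu : HasW21Deriv u u' u'') (h : u'' =ᵐ[volume] v'') : HasW21Deriv u u' v'' :=
  ⟨hu.hasDerivAt, hu.deriv.congr_ae h⟩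

theorem comp_const_sub (hu : HasW21Deriv u u' u'') (c : ℝ) :
    HasW21Deriv (fun t => u (c - t)) (fun t => -u' (c - t)) fun t => u'' (c - t) where
  hasDerivAt t := (hu.hasDerivAt (c - t)).comp_const_sub c t
  deriv := by simpa only [neg_neg] using (hu.deriv.comp_const_sub c).neg

theorem comp_add_const (hu : HasW21Deriv u u' u'') (c : ℝ) :
    HasW21Deriv (fun t => u (t + c)) (fun t => u' (t + c)) fun t => u'' (t + c) := by
  simpa only [neg_neg, zero_sub, sub_neg_eq_add, add_comm c] using
    (hu.comp_const_sub c).comp_const_sub 0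

theorem periodic_deriv (hu : HasW21Deriv u u' u'') {P : ℝ} (hP : Function.Periodic u P) :
    Function.Periodic u' P := fun t =>
  ((funext hP : (fun x => u (x + P)) = u) ▸ (hu.comp_add_const P).hasDerivAt t).unique
    (hu.hasDerivAt t)

end HasW21Deriv

/-! ### The maximum principle for periodic functions -/

section MaximumPrinciple

variable {z z' ρ : ℝ → ℝ} {t₀ P : ℝ}

theorem HasW21Deriv.monotoneOn_Icc_of_pos (hz : HasW21Deriv z z' ρ) (h0' : 0 ≤ z' t₀)
    (hρ : ∀ᵐ s, t₀ ≤ s → (∀ x ∈ Icc t₀ s, 0 < z x) → 0 ≤ ρ s) {t₁ : ℝ}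
    (hpos : ∀ x ∈ Ico t₀ t₁, 0 < z x) : MonotoneOn z (Icc t₀ t₁) := by
  refine monotoneOn_of_hasDerivWithinAt_nonneg (convex_Icc _ _) hz.continuous.continuousOn
    (fun x _ => (hz.hasDerivAt x).hasDerivWithinAt) fun x hx => ?_
  rw [interior_Icc] at hx
  have hint : 0 ≤ ∫ s in t₀..x, ρ s := by
    refine intervalIntegral.integral_nonneg_of_ae_restrict hx.1.le
      ((ae_restrict_iff' measurableSet_Icc).2 ?_)
    filter_upwards [hρ] with s hs hsx
    exact hs hsx.1 fun y hy => hpos y ⟨hy.1, hy.2.trans_lt (hsx.2.trans_lt hx.2)⟩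
  rw [hz.deriv.integral_eq_sub] at hint
  linarith

theorem HasW21Deriv.monotoneOn_Ici_of_pos (hz : HasW21Deriv z z' ρ) (h0 : 0 < z t₀)
    (h0' : 0 ≤ z' t₀) (hρ : ∀ᵐ s, t₀ ≤ s → (∀ x ∈ Icc t₀ s, 0 < z x) → 0 ≤ ρ s) :
    MonotoneOn z (Ici t₀) := by
  have hpos : ∀ t ∈ Ici t₀, 0 < z t := by
    by_contra! hcon
    obtain ⟨t₁, ht₁, hzt₁⟩ := hcon
    obtain ⟨t₂, ⟨ht₂, hzt₂⟩, hmin⟩ := (isCompact_Icc.inter_right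
      (isClosed_le hz.continuous continuous_const)).exists_isLeast (s := Icc t₀ t₁ ∩ {x | z x ≤ 0})
      ⟨t₁, ⟨ht₁, le_rfl⟩, hzt₁⟩
    have hmono := hz.monotoneOn_Icc_of_pos h0' hρ (t₁ := t₂) fun x hx => by
      by_contra! hx0
      exact hx.2.not_ge (hmin ⟨⟨hx.1, hx.2.le.trans ht₂.2⟩, hx0⟩)
    exact (h0.trans_le (hmono ⟨le_rfl, ht₂.1⟩ ⟨ht₂.1, le_rfl⟩ ht₂.1)).not_ge hzt₂
  intro x hx y hy hxy
  exact hz.monotoneOn_Icc_of_pos h0' hρ (fun s hs => hpos s hs.1) ⟨hx, hxy⟩ ⟨hy, le_rfl⟩ hxy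

theorem HasW21Deriv.eq_of_periodic_of_nonneg (hz : HasW21Deriv z z' ρ) (hP : 0 < P)
    (hper : Function.Periodic z P) (h0 : 0 < z t₀)
    (hρ : ∀ᵐ s, (∀ x ∈ uIcc t₀ s, 0 < z x) → 0 ≤ ρ s) (t : ℝ) : z t = z t₀ := by
  wlog h0' : 0 ≤ z' t₀ generalizing z z' ρ t
  · have hper' : Function.Periodic (fun s => z (2 * t₀ - s)) P := fun s => by
      simp only [← sub_sub, hper.sub_eq]
    have := this (hz.comp_const_sub (2 * t₀)) hper' (by rwa [two_mul, add_sub_cancel_right]) (by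
        filter_upwards [ae_const_sub (2 * t₀) hρ] with s hs hpos
        refine hs fun x hx => ?_
        simpa using hpos (2 * t₀ - x) (by
          rw [mem_uIcc] at hx ⊢
          rcases hx with hx | hx
          · exact Or.inr ⟨by linarith, by linarith⟩
          · exact Or.inl ⟨by linarith, by linarith⟩))
      (2 * t₀ - t) (by rw [two_mul, add_sub_cancel_right]; linarith)
    simpa [two_mul] using this
  have hmono := hz.monotoneOn_Ici_of_pos h0 h0' (by
    filter_upwards [hρ] with s hs hts hpos
    exact hs (uIcc_of_le hts ▸ hpos))
  obtain ⟨y, hy, hty⟩ := hper.exists_mem_Ico hP t t₀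
  rw [hty]
  refine le_antisymm ?_ (hmono self_mem_Ici hy.1 hy.1)
  rw [← hper t₀]
  exact hmono hy.1 (by simpa using hP.le) hy.2.le

theorem HasW21Deriv.nonpos_of_periodic (hz : HasW21Deriv z z' ρ) (hP : 0 < P)
    (hper : Function.Periodic z P)
    (hρ : ∀ᵐ s, (∀ x ∈ uIcc t₀ s, 0 < z x) → 0 < ρ s) : z t₀ ≤ 0 := by
  by_contra! h0
  have hconst := hz.eq_of_periodic_of_nonneg hP hper h0 (hρ.mono fun s hs h => (hs h).le)
  have hρpos : ∀ᵐ s, 0 < ρ s := hρ.mono fun s hs => hs fun x _ => hconst x ▸ h0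
  have hz' : ∀ t, z' t = 0 := fun t => (hz.hasDerivAt t).unique
    ((funext hconst : z = fun _ => z t₀) ▸ hasDerivAt_const t _)
  have hint := intervalIntegral.integral_eq_zero_iff_of_nonneg_ae (a := 0) (b := 1)
    (ae_restrict_of_ae (hρpos.mono fun _ hs => hs.le)) (hz.deriv.intervalIntegrable 0 1)
  rw [hz.deriv.integral_eq_sub, hz', hz', sub_self] at hint
  have hfalse : ∀ᵐ _ ∂volume.restrict (Ioc (0 : ℝ) 1 ∪ Ioc 1 0), False := by
    filter_upwards [hint.1 rfl, ae_restrict_of_ae hρpos] with s hs hs'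
    exact hs'.ne' hs
  rw [ae_iff] at hfalse
  simp at hfalse

end MaximumPrinciple

/-! ### Gronwall's inequality and uniqueness -/

section Gronwall

variable {y y' ρ L : ℝ → ℝ} {a b : ℝ}

theorem HasW21Deriv.norm_le_two_mul (hy : HasW21Deriv y y' ρ) (hL : LocallyIntegrable L volume)
    (hL0 : ∀ t, 0 ≤ L t) (hρ : ∀ᵐ s, |ρ s| ≤ L s * |y s|) (hab : a ≤ b)
    (hint : ∫ s in a..b, (1 + L s) ≤ 1 / 2) : |y b| + |y' b| ≤ 2 * (|y a| + |y' a|) := by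
  have hyc := hy.continuous
  have hyc' := hy.continuous_deriv
  obtain ⟨t, ht, hmax⟩ := isCompact_Icc.exists_isMaxOn (nonempty_Icc.2 hab)
    (show ContinuousOn (fun t => |y t| + |y' t|) (Icc a b) by fun_prop)
  set S := |y t| + |y' t|
  have hS : ∀ s ∈ Icc a b, |y s| + |y' s| ≤ S := hmax
  have hS0 : 0 ≤ S := by positivity
  have hL1 : LocallyIntegrable (fun s => 1 + L s) volume :=
    continuous_const.locallyIntegrable.add hL
  have hρabs := locallyIntegrable_abs hy.deriv.locallyIntegrable
  have hdy : |y t - y a| ≤ ∫ s in a..t, |y' s| := by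
    rw [← hy.hasW11Deriv.integral_eq_sub]
    exact intervalIntegral.abs_integral_le_integral_abs ht.1
  have hdy' : |y' t - y' a| ≤ ∫ s in a..t, |ρ s| := by
    rw [← hy.deriv.integral_eq_sub]
    exact intervalIntegral.abs_integral_le_integral_abs ht.1
  have hsum : (∫ s in a..t, |y' s|) + ∫ s in a..t, |ρ s| ≤ ∫ s in a..t, (1 + L s) * S := by
    rw [← intervalIntegral.integral_add (hyc'.abs.intervalIntegrable _ _)
      (intervalIntegrable_of_locallyIntegrable hρabs _ _)]
    refine integral_mono_of_ae_Icc (hyc'.abs.locallyIntegrable.add hρabs)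
      (hL1.mul_continuous continuous_const) ht.1 ?_
    filter_upwards [hρ] with s hs hsat
    have hsS := hS s ⟨hsat.1, hsat.2.trans ht.2⟩
    have hLS : L s * |y s| ≤ L s * S :=
      mul_le_mul_of_nonneg_left (by linarith [abs_nonneg (y' s)]) (hL0 s)
    linarith [abs_nonneg (y s)]
  have hhalf : ∫ s in a..t, (1 + L s) * S ≤ 1 / 2 * S := by
    rw [intervalIntegral.integral_mul_const]
    refine mul_le_mul_of_nonneg_right (le_trans ?_ hint) hS0
    exact intervalIntegral.integral_mono_interval le_rfl ht.1 ht.2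
      (Eventually.of_forall fun s => add_nonneg zero_le_one (hL0 s))
      (intervalIntegrable_of_locallyIntegrable hL1 _ _)
  linarith [abs_sub_abs_le_abs_sub (y t) (y a), abs_sub_abs_le_abs_sub (y' t) (y' a),
    hS b ⟨hab, le_rfl⟩]

theorem HasW21Deriv.norm_le_two_pow_mul (hy : HasW21Deriv y y' ρ)
    (hL : LocallyIntegrable L volume) (hL0 : ∀ t, 0 ≤ L t) (hρ : ∀ᵐ s, |ρ s| ≤ L s * |y s|)
    (n : ℕ) (hab : a ≤ b) (hint : ∫ s in a..b, (1 + L s) ≤ n / 2) :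
    |y b| + |y' b| ≤ 2 ^ n * (|y a| + |y' a|) := by
  have hL1 : LocallyIntegrable (fun s => 1 + L s) volume :=
    continuous_const.locallyIntegrable.add hL
  have hL1i := intervalIntegrable_of_locallyIntegrable hL1
  induction n generalizing b with
  | zero =>
    have h1 : ∫ _ in a..b, (1 : ℝ) ≤ ∫ s in a..b, (1 + L s) :=
      intervalIntegral.integral_mono hab (by simp) (hL1i a b) fun s => by simpa using hL0 s
    rw [intervalIntegral.integral_const, smul_eq_mul, mul_one] at h1
    rw [Nat.cast_zero, zero_div] at hint
    obtain rfl : a = b := by linarith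
    simp
  | succ n ih =>
    obtain ⟨c, hc, hac, hcb⟩ : ∃ c ∈ Icc a b, (∫ s in a..c, (1 + L s)) ≤ n / 2 ∧
        (∫ s in c..b, (1 + L s)) ≤ 1 / 2 := by
      rcases le_or_gt (∫ s in a..b, (1 + L s)) (n / 2) with hle | hlt
      · exact ⟨b, ⟨hab, le_rfl⟩, hle, by simp⟩
      obtain ⟨c, hc, hcn⟩ := intermediate_value_Icc hab
        (intervalIntegral.continuous_primitive hL1i a).continuousOn
        (show (n : ℝ) / 2 ∈ _ from ⟨by rw [intervalIntegral.integral_same]; positivity, hlt.le⟩)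
      replace hcn : ∫ s in a..c, (1 + L s) = n / 2 := hcn
      refine ⟨c, hc, hcn.le, ?_⟩
      rw [← intervalIntegral.integral_interval_sub_left (hL1i a b) (hL1i a c), hcn]
      push_cast at hint
      linarith
    calc |y b| + |y' b| ≤ 2 * (|y c| + |y' c|) := hy.norm_le_two_mul hL hL0 hρ hc.2 hcb
      _ ≤ 2 * (2 ^ n * (|y a| + |y' a|)) := by gcongr; exact ih hc.1 hac
      _ = 2 ^ (n + 1) * (|y a| + |y' a|) := by ring

theorem HasW21Deriv.eq_zero (hy : HasW21Deriv y y' ρ) (hL : LocallyIntegrable L volume)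
    (hL0 : ∀ t, 0 ≤ L t) (hρ : ∀ᵐ s, |ρ s| ≤ L s * |y s|) (h0 : y a = 0) (h0' : y' a = 0)
    (t : ℝ) : y t = 0 := by
  wlog hat : a ≤ t generalizing y y' ρ L t
  · simpa using this (hy.comp_const_sub (2 * a)) (locallyIntegrable_comp_const_sub hL (2 * a))
      (fun _ => hL0 _) (ae_const_sub (2 * a) hρ) (by simpa [two_mul] using h0)
      (by simpa [two_mul] using h0') (2 * a - t) (by linarith)
  obtain ⟨n, hn⟩ := exists_nat_ge (2 * ∫ s in a..t, (1 + L s))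
  have h := hy.norm_le_two_pow_mul hL hL0 hρ n hat (by linarith)
  rw [h0, h0', abs_zero, add_zero, mul_zero] at h
  exact abs_nonpos_iff.1 (by linarith [abs_nonneg (y' t)])

end Gronwall

/-! ### Periodic solutions of linear equations -/

section PeriodicLinear

variable {P : ℝ} {b r : ℝ → ℝ}

/-- Variation of constants: with `β' = b`, the function `y * exp β` is a primitive of
`-r * exp β`, and the constant of integration is fixed by periodicity. -/
theorem exists_periodic_hasW11Deriv (hb : Continuous b) (hbP : Function.Periodic b P)
    (hbint : ∫ s in (0 : ℝ)..P, b s ≠ 0) (hr : LocallyIntegrable r volume)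
    (hrP : Function.Periodic r P) :
    ∃ y, Function.Periodic y P ∧ HasW11Deriv y fun t => -r t - b t * y t := by
  set β : ℝ → ℝ := fun t => ∫ s in (0 : ℝ)..t, b s
  have hβd : ∀ t, HasDerivAt β (b t) t := fun t => (hb.integral_hasStrictDerivAt 0 t).hasDerivAt
  have hβc : Continuous β := continuous_iff_continuousAt.2 fun t => (hβd t).continuousAt
  have hβP : ∀ t, β (t + P) = β t + β P := fun t => by
    simpa using hbP.intervalIntegral_add_eq_add 0 t fun _ _ => hb.intervalIntegrable _ _
  set k : ℝ → ℝ := fun s => -(r s * Real.exp (β s)) with hk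
  have hkP : ∀ s, k (s + P) = Real.exp (β P) * k s := fun s => by
    simp only [hk, hrP s, hβP s, Real.exp_add]
    ring
  have hkl : LocallyIntegrable k volume := (hr.mul_continuous (Real.continuous_exp.comp hβc)).neg
  have hki := intervalIntegrable_of_locallyIntegrable hkl
  have hne : 1 - Real.exp (β P) ≠ 0 := fun h =>
    hbint ((Real.exp_eq_one_iff _).1 (by linarith))
  set c : ℝ := -(∫ s in (0 : ℝ)..P, k s) / (1 - Real.exp (β P))
  set I : ℝ → ℝ := fun t => c + ∫ s in (0 : ℝ)..t, k s with hI
  have hIk : HasW11Deriv I k := .of_eq_add_integral hkl fun t => rfl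
  have hIP : ∀ t, I (t + P) = Real.exp (β P) * I t := by
    intro t
    have hshift : ∫ s in P..(t + P), k s = Real.exp (β P) * ∫ s in (0 : ℝ)..t, k s := by
      have hcomp := intervalIntegral.integral_comp_add_right (a := 0) (b := t) k P
      rw [zero_add] at hcomp
      simp only [← hcomp, hkP, intervalIntegral.integral_const_mul]
    have hcP : c * (1 - Real.exp (β P)) = -∫ s in (0 : ℝ)..P, k s := div_mul_cancel₀ _ hne
    simp only [hI]
    rw [← intervalIntegral.integral_add_adjacent_intervals (hki 0 P) (hki P (t + P)), hshift]
    linarith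
  refine ⟨fun t => I t * Real.exp (-β t), fun t => ?_, ?_⟩
  · simp only [hIP, hβP, neg_add, Real.exp_add, Real.exp_neg (β P)]
    field_simp
  · have hexp : HasW11Deriv (fun t => Real.exp (-β t)) fun t => Real.exp (-β t) * -b t :=
      .of_hasDerivAt (fun t => (hβd t).neg.exp) (by fun_prop)
    refine (hIk.mul hexp).congr_ae (Eventually.of_forall fun t => ?_)
    simp only [hk, Real.exp_neg]
    field_simp
    ring

theorem exists_periodic_hasW11Deriv_sub_average {L : ℝ → ℝ} (hP : 0 < P)
    (hL : LocallyIntegrable L volume) (hLP : Function.Periodic L P) :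
    ∃ B, Function.Periodic B P ∧ HasW11Deriv B fun t => L t - (∫ s in (0 : ℝ)..P, L s) / P := by
  set avg : ℝ := (∫ s in (0 : ℝ)..P, L s) / P with havg
  have hLa : LocallyIntegrable (fun s => L s - avg) volume :=
    hL.sub continuous_const.locallyIntegrable
  refine ⟨fun t => ∫ s in (0 : ℝ)..t, (L s - avg), fun t => ?_,
    .of_eq_add_integral hLa fun t => (zero_add _).symm⟩
  have hLaP : Function.Periodic (fun s => L s - avg) P := fun s => by simp only [hLP s]
  have h0 : ∫ s in (0 : ℝ)..P, (L s - avg) = 0 := by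
    rw [intervalIntegral.integral_sub (intervalIntegrable_of_locallyIntegrable hL _ _) (by simp),
      intervalIntegral.integral_const, smul_eq_mul, sub_zero, havg, mul_div_cancel₀ _ hP.ne',
      sub_self]
  have hadd := hLaP.intervalIntegral_add_eq_add 0 t
    fun _ _ => intervalIntegrable_of_locallyIntegrable hLa _ _
  rw [zero_add, h0, add_zero] at hadd
  exact hadd

theorem hasW21Deriv_of_riccati {b' y w r : ℝ → ℝ} (hb : HasW11Deriv b b')
    (hy : HasW11Deriv y fun t => -r t - b t * y t)
    (hw : HasW11Deriv w fun t => y t + b t * w t) :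
    HasW21Deriv w (fun t => y t + b t * w t) fun t => (b' t + b t ^ 2) * w t - r t where
  hasDerivAt := hw.hasDerivAt (hy.continuous.add (hb.continuous.mul hw.continuous))
  deriv := (hy.add (hb.mul hw)).congr_ae (Eventually.of_forall fun t => by ring)

/-- The potential is sought in the form `m = b' + b²`, so that `w'' - m w` factors as
`(d/dt + b) (d/dt - b) w`. -/
theorem exists_potential_forall_exists_periodic {L : ℝ → ℝ} (hP : 0 < P)
    (hL : LocallyIntegrable L volume) (hL0 : ∀ t, 0 ≤ L t) (hLP : Function.Periodic L P) :
    ∃ m : ℝ → ℝ, LocallyIntegrable m volume ∧ Function.Periodic m P ∧ (∀ t, L t + 1 ≤ m t) ∧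
      ∀ r : ℝ → ℝ, LocallyIntegrable r volume → Function.Periodic r P →
        ∃ w w', Function.Periodic w P ∧ HasW21Deriv w w' fun t => m t * w t - r t := by
  obtain ⟨B, hBP, hB⟩ := exists_periodic_hasW11Deriv_sub_average hP hL hLP
  set avg : ℝ := (∫ s in (0 : ℝ)..P, L s) / P
  have havg : 0 ≤ avg := div_nonneg
    (intervalIntegral.integral_nonneg hP.le fun s _ => hL0 s) hP.le
  obtain ⟨C, hC⟩ := (hBP.isBounded_of_continuous hP.ne' hB.continuous).exists_norm_le
  set b : ℝ → ℝ := fun t => B t + (C + 1 + avg)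
  have hb : HasW11Deriv b fun t => L t - avg := by
    simpa only [add_zero] using hB.add
      (.of_hasDerivAt (fun t => hasDerivAt_const t (C + 1 + avg)) continuous_const)
  have hbP : Function.Periodic b P := fun t => by simp only [b, hBP t]
  have hb1 : ∀ t, 1 + avg ≤ b t := fun t => by
    linarith [(abs_le.1 (hC (B t) (mem_range_self t))).1]
  have hbint : 0 < ∫ s in (0 : ℝ)..P, b s :=
    intervalIntegral.intervalIntegral_pos_of_pos (hb.continuous.intervalIntegrable _ _)
      (fun t => by linarith [hb1 t]) hP
  refine ⟨fun t => L t - avg + b t ^ 2,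
    hb.locallyIntegrable.add (hb.continuous.pow 2).locallyIntegrable,
    fun t => by simp only [hLP t, hbP t], fun t => by nlinarith [hb1 t], fun r hr hrP => ?_⟩
  obtain ⟨y, hyP, hy⟩ := exists_periodic_hasW11Deriv hb.continuous hbP hbint.ne' hr hrP
  obtain ⟨w, hwP, hw⟩ := exists_periodic_hasW11Deriv (P := P) (b := fun t => -b t)
    (r := fun t => -y t)
    hb.continuous.neg (fun t => by simp only [hbP t])
    (by rw [intervalIntegral.integral_neg]; exact neg_ne_zero.2 hbint.ne')
    hy.continuous.neg.locallyIntegrable (fun t => by simp only [hyP t])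
  simp only [neg_neg, neg_mul, sub_neg_eq_add] at hw
  exact ⟨w, _, hwP, hasW21Deriv_of_riccati hb hy hw⟩

end PeriodicLinear

/-! ### The monotone iteration -/

section Arcs

variable {w w' m r : ℝ → ℝ} {P : ℝ}

theorem HasW21Deriv.exists_pos_of_pos (hw : HasW21Deriv w w' fun t => m t * w t - r t)
    (hm : ∀ t, 0 < m t) (hP : 0 < P) (hwP : Function.Periodic w P) {t₀ : ℝ} (h0 : 0 < w t₀) :
    ∃ s, 0 < r s ∧ ∀ x ∈ uIcc t₀ s, 0 < w x := by
  by_contra! hcon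
  refine (hw.nonpos_of_periodic hP hwP (Eventually.of_forall fun s hs => ?_)).not_gt h0
  have hr : r s ≤ 0 := by
    by_contra! hr
    obtain ⟨x, hx, hwx⟩ := hcon s hr
    exact hwx.not_gt (hs x hx)
  linarith [mul_pos (hm s) (hs s right_mem_uIcc)]

theorem HasW21Deriv.exists_neg_of_neg (hw : HasW21Deriv w w' fun t => m t * w t - r t)
    (hm : ∀ t, 0 < m t) (hP : 0 < P) (hwP : Function.Periodic w P) {t₀ : ℝ} (h0 : w t₀ < 0) :
    ∃ s, r s < 0 ∧ ∀ x ∈ uIcc t₀ s, w x < 0 := by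
  have hneg : HasW21Deriv (fun t => -w t) (fun t => -w' t) fun t => m t * -w t - -r t :=
    hw.neg.congr_ae (Eventually.of_forall fun t => by ring)
  simpa only [neg_pos] using
    hneg.exists_pos_of_pos hm hP (fun t => congrArg Neg.neg (hwP t)) (neg_pos.2 h0)

theorem lt_of_disjoint_uIcc {a b c d : ℝ} (hac : a < c) (h : Disjoint (uIcc a b) (uIcc c d)) :
    b < d := by
  have hbc : b < c := by
    by_contra! hcb
    exact disjoint_left.1 h (mem_uIcc_of_le hac.le hcb) left_mem_uIcc
  by_contra! hdb
  exact disjoint_left.1 h right_mem_uIcc (mem_uIcc_of_ge hdb hbc.le)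

/-- `u` changes sign at most twice per period `P`: the pattern `+ - + -` does not occur within one
period. -/
def AtMostTwoSignChanges (P : ℝ) (u : ℝ → ℝ) : Prop :=
  ¬ ∃ t₁ t₂ t₃ t₄, t₁ < t₂ ∧ t₂ < t₃ ∧ t₃ < t₄ ∧ t₄ < t₁ + P ∧
    0 < u t₁ ∧ u t₂ < 0 ∧ 0 < u t₃ ∧ u t₄ < 0

/-- Every arc on which `w` has a sign contains a point at which `r` has the same sign. -/
theorem HasW21Deriv.atMostTwoSignChanges (hw : HasW21Deriv w w' fun t => m t * w t - r t)
    (hm : ∀ t, 0 < m t) (hP : 0 < P) (hwP : Function.Periodic w P)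
    (hr : AtMostTwoSignChanges P r) : AtMostTwoSignChanges P w := by
  rintro ⟨t₁, t₂, t₃, t₄, h12, h23, h34, h41, p₁, p₂, p₃, p₄⟩
  obtain ⟨s₁, q₁, k₁⟩ := hw.exists_pos_of_pos hm hP hwP p₁
  obtain ⟨s₂, q₂, k₂⟩ := hw.exists_neg_of_neg hm hP hwP p₂
  obtain ⟨s₃, q₃, k₃⟩ := hw.exists_pos_of_pos hm hP hwP p₃
  obtain ⟨s₄, q₄, k₄⟩ := hw.exists_neg_of_neg hm hP hwP p₄
  have k₁' : ∀ x ∈ uIcc (t₁ + P) (s₁ + P), 0 < w x := fun x hx => by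
    rw [← hwP.sub_eq x]
    exact k₁ _ ((mem_uIcc.1 hx).elim (fun h => mem_uIcc_of_le (by linarith) (by linarith))
      fun h => mem_uIcc_of_ge (by linarith) (by linarith))
  refine hr ⟨s₁, s₂, s₃, s₄, lt_of_disjoint_uIcc h12 ?_, lt_of_disjoint_uIcc h23 ?_,
    lt_of_disjoint_uIcc h34 ?_, lt_of_disjoint_uIcc h41 ?_, q₁, q₂, q₃, q₄⟩
  · exact disjoint_left.2 fun x hx hx' => (k₁ x hx).not_gt (k₂ x hx')
  · exact disjoint_left.2 fun x hx hx' => (k₂ x hx).not_gt (k₃ x hx')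
  · exact disjoint_left.2 fun x hx hx' => (k₃ x hx).not_gt (k₄ x hx')
  · exact disjoint_left.2 fun x hx hx' => (k₄ x hx).not_gt (k₁' x hx')

end Arcs

/-- The equation `e'' + f(t, e) = 0` with `f` periodic in `t`, vanishing at `e = 0` and Lipschitz in
`e` with a locally integrable weight `L`; `F` is a primitive of `f` in the second variable. -/
structure PeriodicNonlinearity where
  P : ℝ
  P_pos : 0 < P
  L : ℝ → ℝ
  locallyIntegrable_L : LocallyIntegrable L volume
  L_nonneg : ∀ t, 0 ≤ L t
  periodic_L : Function.Periodic L P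
  f : ℝ → ℝ → ℝ
  f_zero : ∀ t, f t 0 = 0
  abs_f_sub_le : ∀ t x y, |f t x - f t y| ≤ L t * |x - y|
  f_add_period : ∀ t x, f (t + P) x = f t x
  aestronglyMeasurable_f : ∀ u : ℝ → ℝ, Continuous u →
    AEStronglyMeasurable (fun t => f t (u t)) volume
  F : ℝ → ℝ → ℝ
  F_zero : ∀ t, F t 0 = 0
  hasDerivAt_F : ∀ t x, HasDerivAt (F t) (f t x) x
  aestronglyMeasurable_F : ∀ u : ℝ → ℝ, Continuous u →
    AEStronglyMeasurable (fun t => F t (u t)) volume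

namespace PeriodicNonlinearity

variable (S : PeriodicNonlinearity)

/-- The class of functions on which the iteration acts: continuous and `P`-periodic. -/
structure Admissible (u : ℝ → ℝ) : Prop where
  continuous : Continuous u
  periodic : Function.Periodic u S.P

/-- A periodic potential `m ≥ L + 1` for which `w'' - m w = -r` is solvable in periodic functions;
it makes `m x + f(t, x)` increasing in `x`. -/
noncomputable def potential : ℝ → ℝ :=
  (exists_potential_forall_exists_periodic S.P_pos S.locallyIntegrable_L S.L_nonneg
    S.periodic_L).choose

theorem potential_spec : LocallyIntegrable S.potential volume ∧
    Function.Periodic S.potential S.P ∧ (∀ t, S.L t + 1 ≤ S.potential t) ∧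
      ∀ r : ℝ → ℝ, LocallyIntegrable r volume → Function.Periodic r S.P →
        ∃ w w', Function.Periodic w S.P ∧ HasW21Deriv w w' fun t => S.potential t * w t - r t :=
  (exists_potential_forall_exists_periodic S.P_pos S.locallyIntegrable_L S.L_nonneg
    S.periodic_L).choose_spec

theorem locallyIntegrable_potential : LocallyIntegrable S.potential volume := S.potential_spec.1

theorem periodic_potential : Function.Periodic S.potential S.P := S.potential_spec.2.1

theorem L_add_one_le_potential (t : ℝ) : S.L t + 1 ≤ S.potential t := S.potential_spec.2.2.1 t

theorem one_le_potential (t : ℝ) : 1 ≤ S.potential t := by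
  linarith [S.L_add_one_le_potential t, S.L_nonneg t]

theorem potential_pos (t : ℝ) : 0 < S.potential t := one_pos.trans_le (S.one_le_potential t)

/-- The shifted nonlinearity `m x + f(t, x)`. -/
noncomputable def shifted (t x : ℝ) : ℝ := S.potential t * x + S.f t x

theorem abs_f_le (t x : ℝ) : |S.f t x| ≤ S.L t * |x| := by
  simpa [S.f_zero] using S.abs_f_sub_le t x 0

theorem locallyIntegrable_f {u : ℝ → ℝ} (hu : Continuous u) :
    LocallyIntegrable (fun t => S.f t (u t)) volume := by
  refine (S.locallyIntegrable_L.mul_continuous hu).mono (S.aestronglyMeasurable_f u hu)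
    (Eventually.of_forall fun t => ?_)
  simpa only [Real.norm_eq_abs, abs_mul, abs_of_nonneg (S.L_nonneg t)] using S.abs_f_le t (u t)

theorem locallyIntegrable_shifted {u : ℝ → ℝ} (hu : Continuous u) :
    LocallyIntegrable (fun t => S.shifted t (u t)) volume :=
  (S.locallyIntegrable_potential.mul_continuous hu).add (S.locallyIntegrable_f hu)

theorem periodic_shifted {u : ℝ → ℝ} (hu : Function.Periodic u S.P) :
    Function.Periodic (fun t => S.shifted t (u t)) S.P := fun t => by
  simp only [shifted, S.periodic_potential t, hu t, S.f_add_period]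

theorem shifted_add_sub_le (t : ℝ) {x y : ℝ} (h : x ≤ y) :
    S.shifted t x + (y - x) ≤ S.shifted t y := by
  have hf := (abs_le.1 (S.abs_f_sub_le t y x)).1
  rw [abs_of_nonneg (sub_nonneg.2 h)] at hf
  simp only [shifted]
  nlinarith [S.L_add_one_le_potential t]

theorem strictMono_shifted (t : ℝ) : StrictMono (S.shifted t) := fun x y h => by
  linarith [S.shifted_add_sub_le t h.le]

theorem shifted_zero (t : ℝ) : S.shifted t 0 = 0 := by simp [shifted, S.f_zero]

theorem shifted_pos_iff {t x : ℝ} : 0 < S.shifted t x ↔ 0 < x := by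
  simpa only [shifted_zero] using (S.strictMono_shifted t).lt_iff_lt (a := 0) (b := x)

theorem shifted_neg_iff {t x : ℝ} : S.shifted t x < 0 ↔ x < 0 := by
  simpa only [shifted_zero] using (S.strictMono_shifted t).lt_iff_lt (a := x) (b := 0)

theorem abs_shifted_le (t x : ℝ) : |S.shifted t x| ≤ 2 * S.potential t * |x| := by
  calc |S.shifted t x| ≤ |S.potential t * x| + |S.f t x| := abs_add_le _ _
    _ ≤ S.potential t * |x| + S.L t * |x| := by
      rw [abs_mul, abs_of_pos (S.potential_pos t)]
      gcongr
      exact S.abs_f_le t x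
    _ ≤ 2 * S.potential t * |x| := by
      nlinarith [abs_nonneg x, S.L_add_one_le_potential t]

open Classical in
/-- One step of the iteration: the periodic solution `w` of `w'' - m w = -(m u + f(t, u))`
(and `0` when `u` is not admissible). -/
noncomputable def step (u : ℝ → ℝ) : ℝ → ℝ :=
  if h : S.Admissible u then
    (S.potential_spec.2.2.2 _ (S.locallyIntegrable_shifted h.continuous)
      (S.periodic_shifted h.periodic)).choose
  else 0

variable {S}

section Step

variable {u v : ℝ → ℝ}

theorem Admissible.exists_hasW21Deriv_step (hu : S.Admissible u) :
    ∃ w', Function.Periodic (S.step u) S.P ∧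
      HasW21Deriv (S.step u) w' fun t => S.potential t * S.step u t - S.shifted t (u t) := by
  simp only [step, hu, dite_true]
  exact (S.potential_spec.2.2.2 _ (S.locallyIntegrable_shifted hu.continuous)
    (S.periodic_shifted hu.periodic)).choose_spec

theorem Admissible.hasW21Deriv_step (hu : S.Admissible u) :
    HasW21Deriv (S.step u) (deriv (S.step u))
      fun t => S.potential t * S.step u t - S.shifted t (u t) := by
  obtain ⟨w', -, hw⟩ := hu.exists_hasW21Deriv_step
  rwa [show deriv (S.step u) = w' from funext fun t => (hw.hasDerivAt t).deriv]

theorem Admissible.step (hu : S.Admissible u) : S.Admissible (S.step u) :=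
  ⟨hu.hasW21Deriv_step.continuous, hu.exists_hasW21Deriv_step.choose_spec.1⟩

theorem Admissible.step_le_add (hu : S.Admissible u) (hv : S.Admissible v) {d : ℝ} (hd : 0 ≤ d)
    (h : ∀ t, u t ≤ v t + d) (t : ℝ) : S.step u t ≤ S.step v t + 2 * d := by
  have hz := (hu.hasW21Deriv_step.sub hv.hasW21Deriv_step).add_const (-(2 * d))
  refine le_of_sub_nonpos (le_trans (le_of_eq (by ring)) (hz.nonpos_of_periodic S.P_pos
    (fun t => by simp only [hu.step.periodic t, hv.step.periodic t])
    (Eventually.of_forall fun s hs => ?_)))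
  have hpos := mul_pos (S.potential_pos s) (hs s right_mem_uIcc)
  have hmono : S.shifted s (u s) ≤ S.shifted s (v s + d) := (S.strictMono_shifted s).monotone (h s)
  have hf := (abs_le.1 (S.abs_f_sub_le s (v s + d) (v s))).2
  rw [add_sub_cancel_left, abs_of_nonneg hd] at hf
  simp only [shifted] at hmono ⊢
  nlinarith [S.L_add_one_le_potential s]

theorem Admissible.abs_step_sub_le (hu : S.Admissible u) (hv : S.Admissible v) {d : ℝ}
    (h : ∀ t, |u t - v t| ≤ d) (t : ℝ) : |S.step u t - S.step v t| ≤ 2 * d := by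
  have hd : 0 ≤ d := (abs_nonneg _).trans (h 0)
  rw [abs_sub_le_iff, sub_le_iff_le_add', sub_le_iff_le_add']
  exact ⟨hu.step_le_add hv hd (fun t => by linarith [(abs_le.1 (h t)).2]) t,
    hv.step_le_add hu hd (fun t => by linarith [(abs_le.1 (h t)).1]) t⟩

theorem Admissible.exists_pos_of_step_pos (hu : S.Admissible u) {t : ℝ} (h : 0 < S.step u t) :
    ∃ s, 0 < u s ∧ ∀ x ∈ uIcc t s, 0 < S.step u x := by
  simpa only [shifted_pos_iff] using
    hu.hasW21Deriv_step.exists_pos_of_pos S.potential_pos S.P_pos hu.step.periodic h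

theorem Admissible.exists_neg_of_step_neg (hu : S.Admissible u) {t : ℝ} (h : S.step u t < 0) :
    ∃ s, u s < 0 ∧ ∀ x ∈ uIcc t s, S.step u x < 0 := by
  simpa only [shifted_neg_iff] using
    hu.hasW21Deriv_step.exists_neg_of_neg S.potential_pos S.P_pos hu.step.periodic h

theorem Admissible.step_nonneg (hu : S.Admissible u) (h : ∀ t, 0 ≤ u t) (t : ℝ) :
    0 ≤ S.step u t := by
  by_contra! hc
  obtain ⟨s, hs, -⟩ := hu.exists_neg_of_step_neg hc
  exact (h s).not_gt hs

theorem Admissible.step_nonpos (hu : S.Admissible u) (h : ∀ t, u t ≤ 0) (t : ℝ) :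
    S.step u t ≤ 0 := by
  by_contra! hc
  obtain ⟨s, hs, -⟩ := hu.exists_pos_of_step_pos hc
  exact (h s).not_gt hs

theorem Admissible.atMostTwoSignChanges_step (hu : S.Admissible u)
    (h : AtMostTwoSignChanges S.P u) : AtMostTwoSignChanges S.P (S.step u) :=
  hu.hasW21Deriv_step.atMostTwoSignChanges S.potential_pos S.P_pos hu.step.periodic
    (by simpa only [AtMostTwoSignChanges, shifted_pos_iff, shifted_neg_iff] using h)

end Step

end PeriodicNonlinearity

/-- A periodic nonlinearity with a periodic lower solution and a constant upper solution, the
barriers between which the iteration stays. -/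
structure BarrierProblem extends PeriodicNonlinearity where
  lower : ℝ → ℝ
  lower' : ℝ → ℝ
  lower'' : ℝ → ℝ
  hasW21Deriv_lower : HasW21Deriv lower lower' lower''
  periodic_lower : Function.Periodic lower P
  lower''_add_f_nonneg : ∀ᵐ t, 0 ≤ lower'' t + f t (lower t)
  upper : ℝ
  f_upper_nonpos : ∀ t, f t upper ≤ 0

namespace BarrierProblem

variable (S : BarrierProblem)

/-- The order interval between the lower and the upper solution. -/
structure InBox (u : ℝ → ℝ) : Prop extends S.Admissible u where
  lower_le : ∀ t, S.lower t ≤ u t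
  le_upper : ∀ t, u t ≤ S.upper

variable {S} {u : ℝ → ℝ}

theorem InBox.step (hu : S.InBox u) : S.InBox (S.step u) where
  toAdmissible := hu.toAdmissible.step
  lower_le t := by
    have hz := S.hasW21Deriv_lower.sub hu.hasW21Deriv_step
    refine sub_nonpos.1 (hz.nonpos_of_periodic S.P_pos
      (fun t => by simp only [hu.toAdmissible.step.periodic t, S.periodic_lower t]) ?_)
    filter_upwards [S.lower''_add_f_nonneg] with s hlow hs
    have hmono := (S.strictMono_shifted s).monotone (hu.lower_le s)
    have hpos := mul_pos (S.potential_pos s) (hs s right_mem_uIcc)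
    simp only [PeriodicNonlinearity.shifted] at hmono ⊢
    linarith
  le_upper t := by
    have hz := hu.hasW21Deriv_step.add_const (-S.upper)
    refine le_of_sub_nonpos (hz.nonpos_of_periodic S.P_pos
      (fun t => by simp only [hu.toAdmissible.step.periodic t])
      (Eventually.of_forall fun s hs => ?_))
    have hmono := (S.strictMono_shifted s).monotone (hu.le_upper s)
    have hpos := mul_pos (S.potential_pos s) (hs s right_mem_uIcc)
    simp only [PeriodicNonlinearity.shifted] at hmono ⊢
    linarith [S.f_upper_nonpos s]

variable (S)

theorem exists_abs_le : ∃ B, ∀ u, S.InBox u → ∀ t, |u t| ≤ B := by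
  obtain ⟨C, hC⟩ := (S.periodic_lower.isBounded_of_continuous S.P_pos.ne'
    S.hasW21Deriv_lower.continuous).exists_norm_le
  refine ⟨max C S.upper, fun u hu t => abs_le.2 ⟨?_, (hu.le_upper t).trans (le_max_right _ _)⟩⟩
  linarith [(abs_le.1 (hC _ (mem_range_self t))).1, hu.lower_le t, le_max_left C S.upper]

theorem abs_deriv_step_le {B : ℝ} (hB : ∀ u, S.InBox u → ∀ t, |u t| ≤ B) (hu : S.InBox u)
    (t : ℝ) : |deriv (S.step u) t| ≤ ∫ s in (0 : ℝ)..S.P, 3 * B * S.potential s := by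
  have hB0 : 0 ≤ B := (abs_nonneg _).trans (hB u hu 0)
  have hw := hu.hasW21Deriv_step
  have hper := hu.toAdmissible.step.periodic
  obtain ⟨t₀, -, h0⟩ : ∃ t₀ ∈ Ioo 0 S.P, deriv (S.step u) t₀ = 0 :=
    exists_deriv_eq_zero S.P_pos hw.continuous.continuousOn (by simpa using (hper 0).symm)
  obtain ⟨y, hy, hty⟩ := (hw.periodic_deriv hper).exists_mem_Ico S.P_pos t t₀
  have hmB : LocallyIntegrable (fun s => 3 * B * S.potential s) volume :=
    S.locallyIntegrable_potential.continuous_mul continuous_const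
  have hdiff := hw.deriv.integral_eq_sub t₀ y
  rw [h0, sub_zero, ← hty] at hdiff
  rw [← hdiff]
  calc |∫ s in t₀..y, (S.potential s * S.step u s - S.shifted s (u s))|
      ≤ ∫ s in t₀..y, |S.potential s * S.step u s - S.shifted s (u s)| :=
        intervalIntegral.abs_integral_le_integral_abs hy.1
    _ ≤ ∫ s in t₀..y, 3 * B * S.potential s := by
        refine integral_mono_of_ae_Icc (locallyIntegrable_abs hw.deriv.locallyIntegrable) hmB hy.1
          (Eventually.of_forall fun s _ => (abs_sub _ _).trans ?_)
        rw [abs_mul, abs_of_pos (S.potential_pos s)]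
        nlinarith [S.abs_shifted_le s (u s), hB u hu s, hB _ hu.step s, S.potential_pos s]
    _ ≤ ∫ s in t₀..(t₀ + S.P), 3 * B * S.potential s :=
        intervalIntegral.integral_mono_interval le_rfl hy.1 hy.2.le
          (Eventually.of_forall fun s => by have := S.potential_pos s; positivity)
          (intervalIntegrable_of_locallyIntegrable hmB _ _)
    _ = ∫ s in (0 : ℝ)..S.P, 3 * B * S.potential s := by
        simpa using (S.periodic_potential.comp (3 * B * ·)).intervalIntegral_add_eq t₀ 0

end BarrierProblem

/-! ### The action functional -/

theorem HasW11Deriv.integral_eq_zero_of_periodic {u u' : ℝ → ℝ} {P : ℝ} (hu : HasW11Deriv u u')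
    (hP : Function.Periodic u P) : ∫ t in (0 : ℝ)..P, u' t = 0 := by
  rw [hu.integral_eq_sub, ← zero_add P, hP, sub_self]

theorem HasW11Deriv.of_contDiff {u : ℝ → ℝ} (hu : ContDiff ℝ 1 u) : HasW11Deriv u (deriv u) :=
  .of_hasDerivAt (fun t => (hu.differentiable one_ne_zero t).hasDerivAt)
    (hu.continuous_deriv le_rfl)

theorem HasW21Deriv.contDiff {u u' u'' : ℝ → ℝ} (hu : HasW21Deriv u u' u'') : ContDiff ℝ 1 u := by
  have hd : _root_.deriv u = u' := funext fun t => (hu.hasDerivAt t).deriv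
  exact contDiff_one_iff_deriv.2 ⟨fun t => (hu.hasDerivAt t).differentiableAt,
    hd ▸ hu.continuous_deriv⟩

namespace PeriodicNonlinearity

variable (S : PeriodicNonlinearity) {u v : ℝ → ℝ}

theorem abs_F_sub_sub_le (t x y : ℝ) :
    |S.F t y - S.F t x - S.f t x * (y - x)| ≤ S.L t * (y - x) ^ 2 := by
  have h := (convex_uIcc x y).norm_image_sub_le_of_norm_hasDerivWithin_le
    (f := fun z => S.F t z - S.f t x * z) (f' := fun z => S.f t z - S.f t x)
    (C := S.L t * |y - x|) (x := x) (y := y)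
    (fun z _ => ((S.hasDerivAt_F t z).sub
      ((hasDerivAt_id z).const_mul (S.f t x) |>.congr_deriv (mul_one _))).hasDerivWithinAt)
    (fun z hz => (S.abs_f_sub_le t z x).trans (mul_le_mul_of_nonneg_left
      (abs_sub_left_of_mem_uIcc hz) (S.L_nonneg t))) left_mem_uIcc right_mem_uIcc
  rw [Real.norm_eq_abs, Real.norm_eq_abs, mul_assoc, ← sq, sq_abs] at h
  convert h using 2
  ring

theorem abs_F_le (t x : ℝ) : |S.F t x| ≤ S.L t * x ^ 2 := by
  simpa [S.F_zero, S.f_zero] using S.abs_F_sub_sub_le t 0 x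

theorem locallyIntegrable_F (hu : Continuous u) :
    LocallyIntegrable (fun t => S.F t (u t)) volume := by
  refine (S.locallyIntegrable_L.mul_continuous (g := fun t => u t ^ 2) (hu.pow 2)).mono
    (S.aestronglyMeasurable_F u hu) (Eventually.of_forall fun t => ?_)
  simpa only [Real.norm_eq_abs, abs_mul, abs_of_nonneg (S.L_nonneg t), abs_pow, sq_abs] using
    S.abs_F_le t (u t)

theorem continuous_f (t : ℝ) : Continuous (S.f t) :=
  (LipschitzWith.of_dist_le_mul (K := (S.L t).toNNReal) fun x y => by
    simpa only [Real.dist_eq, Real.coe_toNNReal _ (S.L_nonneg t)] using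
      S.abs_f_sub_le t x y).continuous

theorem continuous_F (t : ℝ) : Continuous (S.F t) :=
  continuous_iff_continuousAt.2 fun x => (S.hasDerivAt_F t x).continuousAt

/-- The action `∫ (u'² / 2 - F(t, u))` over one period, whose critical points are the periodic
solutions of `u'' + f(t, u) = 0`. -/
noncomputable def action (u : ℝ → ℝ) : ℝ :=
  ∫ t in (0 : ℝ)..S.P, (1 / 2 * deriv u t ^ 2 - S.F t (u t))

theorem action_zero : S.action 0 = 0 := by
  simp [action, S.F_zero]

variable {S}

theorem Admissible.contDiff_step (hu : S.Admissible u) : ContDiff ℝ 1 (S.step u) :=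
  hu.hasW21Deriv_step.contDiff

theorem locallyIntegrable_action (hu : ContDiff ℝ 1 u) :
    LocallyIntegrable (fun t => 1 / 2 * deriv u t ^ 2 - S.F t (u t)) volume :=
  (continuous_const.mul ((hu.continuous_deriv le_rfl).pow 2)).locallyIntegrable.sub
    (S.locallyIntegrable_F hu.continuous)

theorem neg_integral_le_action {B : ℝ} (hu : ContDiff ℝ 1 u) (hB : ∀ t, |u t| ≤ B) :
    -∫ t in (0 : ℝ)..S.P, S.L t * B ^ 2 ≤ S.action u := by
  rw [← intervalIntegral.integral_neg]
  refine integral_mono_of_ae_Icc (S.locallyIntegrable_L.mul_continuous continuous_const).neg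
    (locallyIntegrable_action hu) S.P_pos.le (Eventually.of_forall fun t _ => ?_)
  have hF := (abs_le.1 (S.abs_F_le t (u t))).2
  have hsq : S.L t * u t ^ 2 ≤ S.L t * B ^ 2 :=
    mul_le_mul_of_nonneg_left (sq_le_sq' (abs_le.1 (hB t)).1 (abs_le.1 (hB t)).2) (S.L_nonneg t)
  nlinarith [sq_nonneg (deriv u t)]

theorem Admissible.integral_step_mul_eq_zero (hu : S.Admissible u) (hv : ContDiff ℝ 1 v)
    (hvP : Function.Periodic v S.P) :
    LocallyIntegrable (fun t => (S.potential t * S.step u t - S.shifted t (u t)) * v t +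
      deriv (S.step u) t * deriv v t) volume ∧
    ∫ t in (0 : ℝ)..S.P, ((S.potential t * S.step u t - S.shifted t (u t)) * v t +
      deriv (S.step u) t * deriv v t) = 0 := by
  have h := hu.hasW21Deriv_step.deriv.mul (.of_contDiff hv)
  refine ⟨h.locallyIntegrable, h.integral_eq_zero_of_periodic fun t => ?_⟩
  simp only [hu.hasW21Deriv_step.periodic_deriv hu.step.periodic t, hvP t]

theorem Admissible.action_step_add_le (hu : S.Admissible u) (hd : ContDiff ℝ 1 u) :
    S.action (S.step u) + ∫ t in (0 : ℝ)..S.P, (S.step u t - u t) ^ 2 ≤ S.action u := by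
  have hw := hu.contDiff_step
  obtain ⟨hli, h0⟩ := hu.integral_step_mul_eq_zero (hw.sub hd) (hu.step.periodic.sub hu.periodic)
  have hsq : LocallyIntegrable (fun t => (S.step u t - u t) ^ 2) volume :=
    ((hw.continuous.sub hd.continuous).pow 2).locallyIntegrable
  refine le_of_le_of_eq ?_ ((congrArg (S.action u + ·) h0).trans (add_zero _))
  simp only [action]
  rw [← intervalIntegral.integral_add (intervalIntegrable_of_locallyIntegrable
      (locallyIntegrable_action hw) _ _) (intervalIntegrable_of_locallyIntegrable hsq _ _),
    ← intervalIntegral.integral_add (intervalIntegrable_of_locallyIntegrable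
      (locallyIntegrable_action hd) _ _) (intervalIntegrable_of_locallyIntegrable hli _ _)]
  refine integral_mono_of_ae_Icc ((locallyIntegrable_action hw).add hsq)
    ((locallyIntegrable_action hd).add hli) S.P_pos.le (Eventually.of_forall fun t _ => ?_)
  have hF := (abs_le.1 (S.abs_F_sub_sub_le t (u t) (S.step u t))).1
  rw [deriv_fun_sub (hw.differentiable one_ne_zero t) (hd.differentiable one_ne_zero t)]
  simp only [shifted]
  nlinarith [sq_nonneg (deriv (S.step u) t - deriv u t), sq_nonneg (S.step u t - u t),
    S.L_add_one_le_potential t]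

theorem Admissible.action_step_le (hu : S.Admissible u) (hd : ContDiff ℝ 1 u) :
    S.action (S.step u) ≤ S.action u := by
  linarith [hu.action_step_add_le hd, intervalIntegral.integral_nonneg (μ := volume) S.P_pos.le
    fun t _ => sq_nonneg (S.step u t - u t)]

theorem Admissible.action_step (hu : S.Admissible u) :
    S.action (S.step u) = ∫ t in (0 : ℝ)..S.P,
      (1 / 2 * ((S.shifted t (u t) - S.potential t * S.step u t) * S.step u t) -
        S.F t (S.step u t)) := by
  obtain ⟨hli, h0⟩ := hu.integral_step_mul_eq_zero hu.contDiff_step hu.step.periodic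
  have hhalf := (intervalIntegral.integral_const_mul (1 / 2 : ℝ) _).trans
    ((congrArg (1 / 2 * ·) h0).trans (mul_zero _))
  refine (sub_zero _).symm.trans ((congrArg (S.action (S.step u) - ·) hhalf.symm).trans ?_)
  simp only [action]
  rw [← intervalIntegral.integral_sub (intervalIntegrable_of_locallyIntegrable
      (locallyIntegrable_action hu.contDiff_step) _ _) (intervalIntegrable_of_locallyIntegrable
      (hli.continuous_mul (continuous_const (y := (1 / 2 : ℝ)))) _ _)]
  congr 1 with t
  ring

theorem tendstoUniformly_step {ι : Type*} {l : Filter ι} {v : ι → ℝ → ℝ}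
    (hv : ∀ i, S.Admissible (v i)) (hu : S.Admissible u) (h : TendstoUniformly v u l) :
    TendstoUniformly (fun i => S.step (v i)) (S.step u) l := by
  rw [Metric.tendstoUniformly_iff] at h ⊢
  intro ε hε
  filter_upwards [h (ε / 3) (by positivity)] with i hi t
  rw [Real.dist_eq]
  linarith [hu.abs_step_sub_le (hv i) (d := ε / 3) (fun t => (hi t).le) t]

end PeriodicNonlinearity

namespace BarrierProblem

variable {S : BarrierProblem} {u : ℝ → ℝ}

theorem abs_action_step_integrand_le {B : ℝ} (hB : ∀ u, S.InBox u → ∀ t, |u t| ≤ B)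
    (hu : S.InBox u) (t : ℝ) :
    |1 / 2 * ((S.shifted t (u t) - S.potential t * S.step u t) * S.step u t) -
      S.F t (S.step u t)| ≤ S.potential t * (3 * B ^ 2) := by
  have hw := hB _ hu.step t
  have hsh : |S.shifted t (u t) - S.potential t * S.step u t| ≤ 3 * S.potential t * B := by
    refine (abs_sub _ _).trans ?_
    rw [abs_mul, abs_of_pos (S.potential_pos t)]
    nlinarith [S.abs_shifted_le t (u t), hB u hu t, S.potential_pos t]
  have hprod := mul_le_mul hsh hw (abs_nonneg _) ((abs_nonneg _).trans hsh)
  have hF := S.abs_F_le t (S.step u t)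
  have hsq : S.step u t ^ 2 ≤ B ^ 2 := sq_le_sq' (abs_le.1 hw).1 (abs_le.1 hw).2
  refine (abs_sub _ _).trans ?_
  rw [abs_mul, abs_mul, abs_of_pos (by norm_num : (0 : ℝ) < 1 / 2)]
  nlinarith [S.L_add_one_le_potential t, S.L_nonneg t, sq_nonneg B]

theorem tendsto_action_step {ι : Type*} {l : Filter ι} [l.IsCountablyGenerated] {v : ι → ℝ → ℝ}
    (hv : ∀ i, S.InBox (v i)) (hu : S.InBox u) (h : TendstoUniformly v u l) :
    Tendsto (fun i => S.action (S.step (v i))) l (nhds (S.action (S.step u))) := by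
  obtain ⟨B, hB⟩ := S.exists_abs_le
  have hstep := PeriodicNonlinearity.tendstoUniformly_step (fun i => (hv i).toAdmissible)
    hu.toAdmissible h
  simp only [hu.toAdmissible.action_step, fun i => (hv i).toAdmissible.action_step]
  refine intervalIntegral.tendsto_integral_filter_of_dominated_convergence _
    (Eventually.of_forall fun i => ?_)
    (Eventually.of_forall fun i => Eventually.of_forall fun t _ =>
      abs_action_step_integrand_le hB (hv i) t)
    (intervalIntegrable_of_locallyIntegrable
      (S.locallyIntegrable_potential.mul_continuous continuous_const) _ _)
    (Eventually.of_forall fun t _ => ?_)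
  · have hw := (hv i).step.continuous
    have hsh := (S.locallyIntegrable_shifted (hv i).continuous).sub
      (S.locallyIntegrable_potential.mul_continuous hw)
    exact (((hsh.mul_continuous hw).aestronglyMeasurable.const_mul (1 / 2)).sub
      (S.locallyIntegrable_F hw).aestronglyMeasurable).restrict
  · have hsh := ((h.tendsto_at t).const_mul (S.potential t)).add
      (((S.continuous_f t).tendsto (u t)).comp (h.tendsto_at t))
    have hw := hstep.tendsto_at t
    exact (((hsh.sub (hw.const_mul (S.potential t))).mul hw).const_mul (1 / 2)).sub
      (((S.continuous_F t).tendsto _).comp hw)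

end BarrierProblem

/-! ### Periodic solutions as fixed points, and compactness -/

section Periodic

variable {P B : ℝ} {e : ℝ → ℝ}

theorem exists_pos_forall_le_of_periodic (hP : 0 < P) (hper : Function.Periodic e P)
    (he : Continuous e) (hpos : ∀ t, 0 < e t) : ∃ c > 0, ∀ t, c ≤ e t := by
  obtain ⟨_, ⟨t₀, rfl⟩, hmin⟩ :=
    (hper.compact_of_continuous hP.ne' he).exists_isLeast (range_nonempty e)
  exact ⟨e t₀, hpos t₀, fun t => hmin (mem_range_self t)⟩

theorem eventually_forall_pos_of_tendstoUniformly {ι : Type*} {l : Filter ι} {y : ι → ℝ → ℝ}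
    (hP : 0 < P) (hper : Function.Periodic e P) (he : Continuous e) (hpos : ∀ t, 0 < e t)
    (h : TendstoUniformly y e l) : ∀ᶠ i in l, ∀ t, 0 < y i t := by
  obtain ⟨c, hc, hce⟩ := exists_pos_forall_le_of_periodic hP hper he hpos
  filter_upwards [Metric.tendstoUniformly_iff.1 h c hc] with i hi t
  linarith [(abs_lt.1 (hi t)).2, hce t]

theorem exists_tendstoUniformly_of_lipschitzWith {K : NNReal} {y : ℕ → ℝ → ℝ} (hP : 0 < P)
    (hper : ∀ j, Function.Periodic (y j) P) (hy : ∀ j, LipschitzWith K (y j))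
    (hB : ∀ j t, |y j t| ≤ B) :
    ∃ (e : ℝ → ℝ) (φ : ℕ → ℕ), StrictMono φ ∧ TendstoUniformly (fun j => y (φ j)) e atTop := by
  let Y (j : ℕ) : BoundedContinuousFunction (Icc 0 P) ℝ :=
    .mkOfCompact ⟨fun x => y j x, (hy j).continuous.comp continuous_subtype_val⟩
  have hcompact : IsCompact (closure (range Y)) := by
    refine BoundedContinuousFunction.arzela_ascoli (Icc (-B) B) isCompact_Icc _ ?_
      (LipschitzWith.uniformEquicontinuous _ K ?_).equicontinuous
    · rintro _ x ⟨j, rfl⟩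
      exact abs_le.1 (hB j x)
    · rintro ⟨_, j, rfl⟩
      exact mul_one K ▸ (hy j).comp (LipschitzWith.subtype_val (Icc 0 P))
  obtain ⟨g, -, φ, hφ, hg⟩ :=
    hcompact.tendsto_subseq (x := Y) fun j => subset_closure (mem_range_self j)
  have hred (t : ℝ) : ∃ x : Icc 0 P, ∀ j, y j t = y j x := by
    have hx := toIcoMod_mem_Ico hP 0 t
    rw [zero_add] at hx
    exact ⟨⟨_, hx.1, hx.2.le⟩, fun j => ((hper j).sub_zsmul_eq (toIcoDiv hP 0 t)).symm⟩
  choose ρ hρ using hred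
  refine ⟨g ∘ ρ, φ, hφ, fun v hv => ?_⟩
  filter_upwards [(BoundedContinuousFunction.tendsto_iff_tendstoUniformly.1 hg).comp ρ v hv]
    with j hj t
  rw [hρ t (φ j)]
  exact hj t

theorem AtMostTwoSignChanges.of_tendsto {ι : Type*} {l : Filter ι} [l.NeBot] {y : ι → ℝ → ℝ}
    (hy : ∀ i, AtMostTwoSignChanges P (y i)) (h : ∀ t, Tendsto (fun i => y i t) l (nhds (e t))) :
    AtMostTwoSignChanges P e := by
  rintro ⟨t₁, t₂, t₃, t₄, h₁₂, h₂₃, h₃₄, h₄₁, p₁, p₂, p₃, p₄⟩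
  obtain ⟨i, ⟨q₁, q₂⟩, q₃, q₄⟩ :=
    ((((h t₁).eventually (lt_mem_nhds p₁)).and ((h t₂).eventually (gt_mem_nhds p₂))).and
      (((h t₃).eventually (lt_mem_nhds p₃)).and ((h t₄).eventually (gt_mem_nhds p₄)))).exists
  exact hy i ⟨t₁, t₂, t₃, t₄, h₁₂, h₂₃, h₃₄, h₄₁, q₁, q₂, q₃, q₄⟩

end Periodic

namespace PeriodicNonlinearity

variable {S : PeriodicNonlinearity} {e : ℝ → ℝ}

theorem Admissible.hasW21Deriv_of_step_eq (he : S.Admissible e) (h : S.step e = e) :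
    HasW21Deriv e (deriv e) fun t => -S.f t (e t) := by
  have hw := he.hasW21Deriv_step
  rw [h] at hw
  exact hw.congr_ae (Eventually.of_forall fun t => by simp only [shifted]; ring)

theorem Admissible.eq_zero_of_step_eq (he : S.Admissible e) (h : S.step e = e) {a : ℝ}
    (h0 : e a = 0) (h0' : deriv e a = 0) : e = 0 :=
  funext <| (he.hasW21Deriv_of_step_eq h).eq_zero S.locallyIntegrable_L S.L_nonneg
    (Eventually.of_forall fun t => (abs_neg (S.f t (e t))).trans_le (S.abs_f_le t (e t))) h0 h0'

theorem Admissible.ne_zero_of_isLocalExtr (he : S.Admissible e) (h : S.step e = e) (hne : e ≠ 0)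
    {a : ℝ} (ha : IsLocalExtr e a) : e a ≠ 0 :=
  fun h0 => hne (he.eq_zero_of_step_eq h h0 ha.deriv_eq_zero)

theorem Admissible.pos_of_nonneg (he : S.Admissible e) (h : S.step e = e) (hne : e ≠ 0)
    (h0 : ∀ t, 0 ≤ e t) (t : ℝ) : 0 < e t := by
  refine (h0 t).lt_of_ne fun ht => he.ne_zero_of_isLocalExtr h hne (.inl ?_) ht.symm
  exact Eventually.of_forall fun s => ht ▸ h0 s

theorem Admissible.neg_of_nonpos (he : S.Admissible e) (h : S.step e = e) (hne : e ≠ 0)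
    (h0 : ∀ t, e t ≤ 0) (t : ℝ) : e t < 0 := by
  refine (h0 t).lt_of_ne fun ht => he.ne_zero_of_isLocalExtr h hne (.inr ?_) ht
  exact Eventually.of_forall fun s => ht ▸ h0 s

end PeriodicNonlinearity

namespace BarrierProblem

variable {S : BarrierProblem} {e : ℝ → ℝ} {y : ℕ → ℝ → ℝ}

/-- A sign-changing periodic solution of `e'' + f(t, e) = 0` in the box with two nodal arcs per
period, written as a fixed point of the iteration. -/
structure IsNodalSolution (S : BarrierProblem) (e : ℝ → ℝ) : Prop extends S.InBox e where
  step_eq : S.step e = e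
  atMostTwoSignChanges : AtMostTwoSignChanges S.P e
  exists_pos : ∃ t, 0 < e t
  exists_neg : ∃ t, e t < 0

theorem InBox.of_tendstoUniformly (hy : ∀ j, S.InBox (y j)) (h : TendstoUniformly y e atTop) :
    S.InBox e where
  continuous := h.continuous (Eventually.of_forall fun j => (hy j).continuous).frequently
  periodic t := tendsto_nhds_unique (h.tendsto_at (t + S.P))
    ((h.tendsto_at t).congr fun j => ((hy j).periodic t).symm)
  lower_le t := ge_of_tendsto (h.tendsto_at t) (Eventually.of_forall fun j => (hy j).lower_le t)
  le_upper t := le_of_tendsto (h.tendsto_at t) (Eventually.of_forall fun j => (hy j).le_upper t)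

theorem exists_tendstoUniformly_step (hy : ∀ j, S.InBox (y j)) :
    ∃ (e : ℝ → ℝ) (φ : ℕ → ℕ), S.InBox e ∧ StrictMono φ ∧
      TendstoUniformly (fun j => S.step (y (φ j))) e atTop := by
  obtain ⟨B, hB⟩ := S.exists_abs_le
  have hlip (j : ℕ) : LipschitzWith (∫ s in (0 : ℝ)..S.P, 3 * B * S.potential s).toNNReal
      (S.step (y j)) :=
    lipschitzWith_of_nnnorm_deriv_le
      (fun t => ((hy j).hasW21Deriv_step.hasDerivAt t).differentiableAt)
      fun t => norm_toNNReal.symm.trans_le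
        (Real.toNNReal_le_toNNReal (S.abs_deriv_step_le hB (hy j) t))
  obtain ⟨e, φ, hφ, h⟩ := exists_tendstoUniformly_of_lipschitzWith S.P_pos
    (fun j => (hy j).step.periodic) hlip fun j t => hB _ (hy j).step t
  exact ⟨e, φ, .of_tendstoUniformly (fun j => (hy (φ j)).step) h, hφ, h⟩

theorem tendsto_integral_step_sub_sq (hy : ∀ j, S.InBox (y j)) (he : S.InBox e)
    (h : TendstoUniformly y e atTop) :
    Tendsto (fun j => ∫ t in (0 : ℝ)..S.P, (S.step (y j) t - y j t) ^ 2) atTop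
      (nhds (∫ t in (0 : ℝ)..S.P, (S.step e t - e t) ^ 2)) := by
  obtain ⟨B, hB⟩ := S.exists_abs_le
  have hstep := PeriodicNonlinearity.tendstoUniformly_step (fun j => (hy j).toAdmissible)
    he.toAdmissible h
  refine intervalIntegral.tendsto_integral_filter_of_dominated_convergence (fun _ => (2 * B) ^ 2)
    (Eventually.of_forall fun j => (((hy j).step.continuous.sub
      (hy j).continuous).pow 2).aestronglyMeasurable)
    (Eventually.of_forall fun j => Eventually.of_forall fun t _ => ?_) intervalIntegrable_const
    (Eventually.of_forall fun t _ => ((hstep.tendsto_at t).sub (h.tendsto_at t)).pow 2)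
  have hy' := abs_le.1 (hB _ (hy j) t)
  have hs' := abs_le.1 (hB _ (hy j).step t)
  rw [Real.norm_eq_abs, abs_of_nonneg (sq_nonneg _)]
  exact sq_le_sq' (by linarith) (by linarith)

theorem step_eq_of_tendstoUniformly (hy : ∀ j, S.InBox (y j)) (hyd : ∀ j, ContDiff ℝ 1 (y j))
    (he : S.InBox e) (h : TendstoUniformly y e atTop)
    (hgap : Tendsto (fun j => S.action (y j) - S.action (S.step (y j))) atTop (nhds 0)) :
    S.step e = e := by
  have hle : ∫ t in (0 : ℝ)..S.P, (S.step e t - e t) ^ 2 ≤ 0 :=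
    le_of_tendsto_of_tendsto (tendsto_integral_step_sub_sq hy he h) hgap
      (Eventually.of_forall fun j => by linarith [(hy j).action_step_add_le (hyd j)])
  contrapose! hle
  obtain ⟨t, ht⟩ := Function.ne_iff.1 hle
  obtain ⟨s, hs, hts⟩ := (he.step.periodic.sub he.periodic).exists_mem_Ico₀ S.P_pos t
  refine intervalIntegral.integral_pos S.P_pos
    ((he.step.continuous.sub he.continuous).pow 2).continuousOn (fun _ _ => sq_nonneg _)
    ⟨s, Ico_subset_Icc_self hs, sq_pos_of_ne_zero ?_⟩
  rwa [← Pi.sub_apply, ← hts, Pi.sub_apply, sub_ne_zero]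

theorem InBox.isNodalSolution_of_tendstoUniformly (he : S.InBox e) (hstep : S.step e = e)
    (hne : e ≠ 0) (h : TendstoUniformly y e atTop) (h2 : ∀ j, AtMostTwoSignChanges S.P (y j))
    (hpos : ∀ j, ¬∀ t, 0 < y j t) (hneg : ∀ j, ¬∀ t, y j t < 0) : S.IsNodalSolution e where
  toInBox := he
  step_eq := hstep
  atMostTwoSignChanges := .of_tendsto h2 h.tendsto_at
  exists_pos := by
    by_contra! hc
    obtain ⟨j, hj⟩ := (eventually_forall_pos_of_tendstoUniformly (e := -e) S.P_pos
      (fun t => congrArg Neg.neg (he.periodic t)) he.continuous.neg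
      (fun t => neg_pos.2 (he.neg_of_nonpos hstep hne hc t)) h.neg).exists
    exact hneg j fun t => neg_pos.1 (hj t)
  exists_neg := by
    by_contra! hc
    obtain ⟨j, hj⟩ := (eventually_forall_pos_of_tendstoUniformly S.P_pos he.periodic he.continuous
      (he.pos_of_nonneg hstep hne hc) h).exists
    exact hpos j hj

theorem exists_isNodalSolution_tendstoUniformly {c : ℝ} (hc : c < 0) (hy : ∀ j, S.InBox (y j))
    (hac : ∀ j, S.action (S.step (y j)) ≤ c)
    (hgap : Tendsto (fun j => S.action (S.step (y j)) - S.action (S.step (S.step (y j)))) atTop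
      (nhds 0)) (h2 : ∀ j, AtMostTwoSignChanges S.P (S.step (y j)))
    (hpos : ∀ j, ¬∀ t, 0 < S.step (y j) t) (hneg : ∀ j, ¬∀ t, S.step (y j) t < 0) :
    ∃ (e : ℝ → ℝ) (φ : ℕ → ℕ), S.IsNodalSolution e ∧ StrictMono φ ∧
      TendstoUniformly (fun j => S.step (y (φ j))) e atTop := by
  obtain ⟨e, φ, he, hφ, h⟩ := exists_tendstoUniformly_step hy
  have hyφ := fun j => (hy (φ j)).step
  have hstep : S.step e = e := step_eq_of_tendstoUniformly hyφ
    (fun j => (hy (φ j)).contDiff_step) he h (hgap.comp hφ.tendsto_atTop)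
  have hne : e ≠ 0 := by
    rintro rfl
    have hle : S.action (S.step 0) ≤ c := le_of_tendsto (tendsto_action_step hyφ he h)
      (Eventually.of_forall fun j =>
        ((hyφ j).action_step_le (hy (φ j)).contDiff_step).trans (hac (φ j)))
    rw [hstep, S.action_zero] at hle
    exact hle.not_gt hc
  exact ⟨e, φ, he.isNodalSolution_of_tendstoUniformly hstep hne h (fun j => h2 (φ j))
    (fun j => hpos (φ j)) (fun j => hneg (φ j)), hφ, h⟩

end BarrierProblem

/-! ### The direction of a sign pattern -/

section SignPattern

theorem lt_cos_iff_exists_abs_lt_arccos {κ x : ℝ} (h : -1 ≤ κ) (h' : κ ≤ 1) :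
    κ < Real.cos x ↔ ∃ k : ℤ, |x - k * (2 * Real.pi)| < Real.arccos κ := by
  have key : ∀ y, |y| ≤ Real.pi → (κ < Real.cos y ↔ |y| < Real.arccos κ) := fun y hy => by
    rw [← Real.cos_abs, ← Real.strictAntiOn_arccos.lt_iff_gt (Real.cos_mem_Icc _) ⟨h, h'⟩,
      Real.arccos_cos (abs_nonneg y) hy]
  constructor
  · intro hx
    have hmem := toIocMod_mem_Ioc Real.two_pi_pos (-Real.pi) x
    rw [← self_sub_toIocDiv_zsmul, zsmul_eq_mul] at hmem
    refine ⟨toIocDiv Real.two_pi_pos (-Real.pi) x, (key _ (abs_le.2 ⟨hmem.1.le, ?_⟩)).1 ?_⟩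
    · linarith [hmem.2]
    · rwa [Real.cos_sub_int_mul_two_pi]
  · rintro ⟨k, hk⟩
    rw [← Real.cos_sub_int_mul_two_pi x k]
    exact (key _ (hk.le.trans (Real.arccos_le_pi κ))).2 hk

/-- The first harmonic `cos (2πt/P - γ)` separates the signs of `u` at level `κ`. -/
def IsSeparatedByCos (P : ℝ) (u : ℝ → ℝ) (γ κ : ℝ) : Prop :=
  ∀ t, (0 < u t → κ < Real.cos (2 * Real.pi / P * t - γ)) ∧
    (u t < 0 → Real.cos (2 * Real.pi / P * t - γ) ≤ κ)

variable {P : ℝ} {u : ℝ → ℝ}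

theorem IsSeparatedByCos.atMostTwoSignChanges {γ κ : ℝ} (hP : 0 < P)
    (h : IsSeparatedByCos P u γ κ) : AtMostTwoSignChanges P u := by
  rintro ⟨t₁, t₂, t₃, t₄, h₁₂, h₂₃, h₃₄, h₄₁, hp₁, hn₂, hp₃, hn₄⟩
  let x : ℝ → ℝ := fun t => 2 * Real.pi / P * t - γ
  have hmono : ∀ {s t}, s < t → x s < x t := fun hst =>
    sub_lt_sub_right (mul_lt_mul_of_pos_left hst (div_pos Real.two_pi_pos hP)) γ
  have hshift : x (t₁ + P) = x t₁ + 2 * Real.pi := by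
    simp only [x]
    field_simp
    ring
  have h₄₁' := hmono h₄₁
  rw [hshift] at h₄₁'
  have hκ : -1 ≤ κ := (Real.neg_one_le_cos _).trans ((h t₂).2 hn₂)
  have hκ' : κ ≤ 1 := ((h t₁).1 hp₁).le.trans (Real.cos_le_one _)
  have hc := Real.arccos_le_pi κ
  have hpos := fun y => lt_cos_iff_exists_abs_lt_arccos (x := y) hκ hκ'
  obtain ⟨k, hk⟩ := (hpos _).1 ((h t₁).1 hp₁)
  obtain ⟨l, hl⟩ := (hpos _).1 ((h t₃).1 hp₃)
  have hlow : ∀ {t} {m : ℤ}, u t < 0 → ¬|x t - m * (2 * Real.pi)| < Real.arccos κ :=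
    fun ht hm => ((hpos _).2 ⟨_, hm⟩).not_ge ((h _).2 ht)
  rw [abs_lt] at hk hl
  have hkl : l = k ∨ l = k + 1 := by
    have h₀ : (-1 : ℝ) < l - k := by
      by_contra! hlk
      nlinarith [hmono (h₁₂.trans h₂₃), Real.pi_pos]
    have h₁ : (l - k : ℝ) < 2 := by
      by_contra! hlk
      nlinarith [hmono h₃₄, Real.pi_pos]
    have h₀' : -1 < l - k := by exact_mod_cast h₀
    have h₁' : l - k < 2 := by exact_mod_cast h₁
    lia
  rcases hkl with rfl | rfl
  · exact hlow hn₂ (abs_lt.2 ⟨by linarith [hmono h₁₂, hk.1], by linarith [hmono h₂₃, hl.2]⟩)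
  · refine hlow hn₄ (abs_lt.2 ⟨by linarith [hmono h₃₄, hl.1], ?_⟩)
    push_cast
    linarith [hk.2]

theorem AtMostTwoSignChanges.exists_arcs (hc : Continuous u) (hu : Function.Periodic u P)
    (h : AtMostTwoSignChanges P u) {t₀ s : ℝ} (hneg : u t₀ < 0) (hs : s ∈ Icc t₀ (t₀ + P))
    (hpos : 0 < u s) :
    ∃ a b, t₀ < a ∧ a < b ∧ b < t₀ + P ∧ (∀ t ∈ Icc t₀ a, u t ≤ 0) ∧
      (∀ t ∈ Icc a b, 0 ≤ u t) ∧ ∀ t ∈ Icc b (t₀ + P), u t ≤ 0 := by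
  let N : Set ℝ := Icc t₀ (t₀ + P) ∩ {t | 0 < u t}
  have hsN : s ∈ N := ⟨hs, hpos⟩
  have hbelow : BddBelow N := bddBelow_Icc.mono inter_subset_left
  have habove : BddAbove N := bddAbove_Icc.mono inter_subset_left
  have hN : ∀ ⦃x⦄, x ∈ closure N → 0 ≤ u x :=
    le_on_closure (fun x hx => hx.2.le) continuousOn_const hc.continuousOn
  have ha : t₀ < sInf N := (le_csInf ⟨s, hsN⟩ fun x hx => hx.1.1).lt_of_ne fun e =>
    hneg.not_ge (e ▸ hN (csInf_mem_closure ⟨s, hsN⟩ hbelow))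
  have hb : sSup N < t₀ + P := (csSup_le ⟨s, hsN⟩ fun x hx => hx.1.2).lt_of_ne fun e =>
    hneg.not_ge (hu t₀ ▸ e ▸ hN (csSup_mem_closure ⟨s, hsN⟩ habove))
  have has : sInf N ≤ s := csInf_le hbelow hsN
  have hsb : s ≤ sSup N := le_csSup habove hsN
  have hleft : ∀ t ∈ Icc t₀ (sInf N), u t ≤ 0 := by
    rw [← closure_Ioo ha.ne]
    refine le_on_closure (fun t ht => ?_) hc.continuousOn continuousOn_const
    exact not_lt.1 fun hut => notMem_of_lt_csInf ht.2 hbelow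
      ⟨⟨ht.1.le, by linarith [ht.2, hs.2]⟩, hut⟩
  have hright : ∀ t ∈ Icc (sSup N) (t₀ + P), u t ≤ 0 := by
    rw [← closure_Ioo hb.ne]
    refine le_on_closure (fun t ht => ?_) hc.continuousOn continuousOn_const
    exact not_lt.1 fun hut => notMem_of_csSup_lt ht.1 habove
      ⟨⟨by linarith [ht.1, hs.1], ht.2.le⟩, hut⟩
  have hab : sInf N < sSup N := (has.lt_of_ne fun e =>
    hpos.not_ge (hleft s ⟨hs.1, e.ge⟩)).trans_le hsb
  refine ⟨sInf N, sSup N, ha, hab, hb, hleft, ?_, hright⟩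
  rw [← closure_Ioo hab.ne]
  refine le_on_closure (fun t ht => not_lt.1 fun hut => ?_) continuousOn_const hc.continuousOn
  obtain ⟨x, hx, hxt⟩ := exists_lt_of_csInf_lt ⟨s, hsN⟩ ht.1
  obtain ⟨y, hy, hty⟩ := exists_lt_of_lt_csSup ⟨s, hsN⟩ ht.2
  exact h ⟨x, t, y, t₀ + P, hxt, hty, (le_csSup habove hy).trans_lt hb,
    by linarith [ha.trans_le (csInf_le hbelow hx)], hx.2, hut, hy.2, (hu t₀).trans_lt hneg⟩

theorem cos_lt_cos_iff_exists_sub_mem_Ioo (hP : 0 < P) {a b : ℝ} (hab : a ≤ b) (hb : b ≤ a + P)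
    (t : ℝ) :
    Real.cos (2 * Real.pi / P * ((b - a) / 2)) <
        Real.cos (2 * Real.pi / P * t - 2 * Real.pi / P * ((a + b) / 2)) ↔
      ∃ k : ℤ, t - k * P ∈ Ioo a b := by
  have hω : 0 < 2 * Real.pi / P := div_pos Real.two_pi_pos hP
  have hπ : 2 * Real.pi / P * ((b - a) / 2) ≤ Real.pi := by
    rw [div_mul_eq_mul_div, div_le_iff₀ hP]
    nlinarith [Real.pi_pos]
  rw [lt_cos_iff_exists_abs_lt_arccos (Real.neg_one_le_cos _) (Real.cos_le_one _),
    Real.arccos_cos (mul_nonneg hω.le (by linarith)) hπ]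
  refine exists_congr fun k => ?_
  rw [show 2 * Real.pi / P * t - 2 * Real.pi / P * ((a + b) / 2) - k * (2 * Real.pi) =
    2 * Real.pi / P * (t - k * P - (a + b) / 2) by field_simp; ring, abs_mul, abs_of_pos hω,
    mul_lt_mul_iff_right₀ hω, abs_lt, mem_Ioo]
  constructor <;> rintro ⟨h₁, h₂⟩ <;> constructor <;> linarith

theorem AtMostTwoSignChanges.exists_isSeparatedByCos (hP : 0 < P) (hc : Continuous u)
    (hu : Function.Periodic u P) (h : AtMostTwoSignChanges P u) (hpos : ∃ t, 0 < u t)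
    (hneg : ∃ t, u t < 0) : ∃ γ κ, IsSeparatedByCos P u γ κ := by
  obtain ⟨t₀, ht₀⟩ := hneg
  have hmod : ∀ t, ∃ k : ℤ, t - k * P ∈ Icc t₀ (t₀ + P) := fun t => by
    refine ⟨toIcoDiv hP t₀ t, Ico_subset_Icc_self ?_⟩
    rw [← zsmul_eq_mul, self_sub_toIcoDiv_zsmul]
    exact toIcoMod_mem_Ico hP t₀ t
  have hper : ∀ t (k : ℤ), u (t - k * P) = u t := fun _ => hu.sub_int_mul_eq
  obtain ⟨s, hs⟩ := hpos
  obtain ⟨j, hj⟩ := hmod s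
  obtain ⟨a, b, ha, hab, hb, hleft, hmid, hright⟩ := h.exists_arcs hc hu ht₀ hj
    ((hper s j).symm ▸ hs)
  have hcos := cos_lt_cos_iff_exists_sub_mem_Ioo hP hab.le (by linarith)
  refine ⟨2 * Real.pi / P * ((a + b) / 2),
    Real.cos (2 * Real.pi / P * ((b - a) / 2)), fun t => ⟨fun ht => ?_, fun ht => ?_⟩⟩
  · obtain ⟨k, hk⟩ := hmod t
    have hut : 0 < u (t - k * P) := (hper t k).symm ▸ ht
    exact (hcos t).2 ⟨k, not_le.1 fun hta => hut.not_ge (hleft _ ⟨hk.1, hta⟩),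
      not_le.1 fun hbt => hut.not_ge (hright _ ⟨hbt, hk.2⟩)⟩
  · refine not_lt.1 fun hlt => ?_
    obtain ⟨k, hk⟩ := (hcos t).1 hlt
    exact ht.not_ge (hper t k ▸ hmid _ (Ioo_subset_Icc_self hk))

/-- The unnormalized difference of the centres of mass of the weights `p` and `q`, spread over one
period of the unit circle. -/
noncomputable def centerSub (P : ℝ) (p q : ℝ → ℝ) : ℂ :=
  (∫ t in (0 : ℝ)..P, p t * Complex.exp ((2 * Real.pi / P * t : ℝ) * Complex.I)) *
      (∫ t in (0 : ℝ)..P, q t : ℝ) -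
    (∫ t in (0 : ℝ)..P, q t * Complex.exp ((2 * Real.pi / P * t : ℝ) * Complex.I)) *
      (∫ t in (0 : ℝ)..P, p t : ℝ)

theorem re_exp_mul_integral_mul_exp {p : ℝ → ℝ} (hp : Continuous p) (γ κ : ℝ) :
    (Complex.exp ((-γ : ℝ) * Complex.I) *
        ∫ t in (0 : ℝ)..P, p t * Complex.exp ((2 * Real.pi / P * t : ℝ) * Complex.I)).re =
      (∫ t in (0 : ℝ)..P, p t * (Real.cos (2 * Real.pi / P * t - γ) - κ)) +
        κ * ∫ t in (0 : ℝ)..P, p t := by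
  rw [← intervalIntegral.integral_const_mul, ← intervalIntegral.integral_const_mul,
    ← Complex.reCLM_apply, ← ContinuousLinearMap.intervalIntegral_comp_comm,
    ← intervalIntegral.integral_add]
  · refine intervalIntegral.integral_congr fun t _ => ?_
    simp only [Complex.reCLM_apply]
    rw [mul_left_comm, ← Complex.exp_add, ← add_mul, ← Complex.ofReal_add, Complex.re_ofReal_mul,
      Complex.exp_ofReal_mul_I_re, neg_add_eq_sub]
    ring
  all_goals exact Continuous.intervalIntegrable (by fun_prop) _ _

theorem re_exp_mul_centerSub_pos (hP : 0 < P) {p q : ℝ → ℝ} {γ κ : ℝ} (hp : Continuous p)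
    (hq : Continuous q) (hp₀ : ∀ t, 0 ≤ p t) (hq₀ : ∀ t, 0 ≤ q t)
    (hpκ : ∀ t, 0 < p t → κ < Real.cos (2 * Real.pi / P * t - γ))
    (hqκ : ∀ t, 0 < q t → Real.cos (2 * Real.pi / P * t - γ) ≤ κ)
    (hp₁ : ∃ t ∈ Icc 0 P, 0 < p t) (hq₁ : ∃ t ∈ Icc 0 P, 0 < q t) :
    0 < (Complex.exp ((-γ : ℝ) * Complex.I) * centerSub P p q).re := by
  have hp_int : 0 < ∫ t in (0 : ℝ)..P, p t * (Real.cos (2 * Real.pi / P * t - γ) - κ) := by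
    obtain ⟨t, ht, hpt⟩ := hp₁
    refine intervalIntegral.integral_pos hP (by fun_prop) (fun x _ => ?_)
      ⟨t, ht, mul_pos hpt (sub_pos.2 (hpκ t hpt))⟩
    rcases (hp₀ x).eq_or_lt with h | h
    · rw [← h, zero_mul]
    · exact mul_nonneg h.le (sub_pos.2 (hpκ x h)).le
  have hq_int : ∫ t in (0 : ℝ)..P, q t * (Real.cos (2 * Real.pi / P * t - γ) - κ) ≤ 0 := by
    rw [← neg_nonneg, ← intervalIntegral.integral_neg]
    refine intervalIntegral.integral_nonneg hP.le fun x _ => neg_nonneg.2 ?_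
    rcases (hq₀ x).eq_or_lt with h | h
    · rw [← h, zero_mul]
    · exact mul_nonpos_of_nonneg_of_nonpos h.le (sub_nonpos.2 (hqκ x h))
  have hp_pos : 0 < ∫ t in (0 : ℝ)..P, p t :=
    intervalIntegral.integral_pos hP hp.continuousOn (fun x _ => hp₀ x) hp₁
  have hq_pos : 0 < ∫ t in (0 : ℝ)..P, q t :=
    intervalIntegral.integral_pos hP hq.continuousOn (fun x _ => hq₀ x) hq₁
  rw [centerSub, mul_sub, ← mul_assoc, ← mul_assoc, Complex.sub_re, Complex.re_mul_ofReal,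
    Complex.re_mul_ofReal, re_exp_mul_integral_mul_exp hp γ κ,
    re_exp_mul_integral_mul_exp hq γ κ]
  nlinarith [mul_pos hp_int hq_pos, mul_nonneg (neg_nonneg.2 hq_int) hp_pos.le]

theorem tendsto_centerSub {ι : Type*} {l : Filter ι} [l.IsCountablyGenerated] {p q : ι → ℝ → ℝ}
    {p₀ q₀ : ℝ → ℝ} (hp : ∀ i, Continuous (p i)) (hq : ∀ i, Continuous (q i))
    (hpl : TendstoUniformly p p₀ l) (hql : TendstoUniformly q q₀ l) :
    Tendsto (fun i => centerSub P (p i) (q i)) l (nhds (centerSub P p₀ q₀)) := by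
  have key : ∀ {p : ι → ℝ → ℝ} {p₀ : ℝ → ℝ}, (∀ i, Continuous (p i)) → TendstoUniformly p p₀ l →
      Tendsto (fun i => ∫ t in (0 : ℝ)..P, p i t * Complex.exp ((2 * Real.pi / P * t : ℝ) *
          Complex.I)) l
        (nhds (∫ t in (0 : ℝ)..P, p₀ t * Complex.exp ((2 * Real.pi / P * t : ℝ) * Complex.I))) ∧
      Tendsto (fun i => ((∫ t in (0 : ℝ)..P, p i t : ℝ) : ℂ)) l
        (nhds (∫ t in (0 : ℝ)..P, p₀ t : ℝ)) := by
    intro p p₀ hp hpl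
    constructor
    · refine TendstoUniformlyOn.tendsto_intervalIntegral_of_continuousOn
        (.of_forall fun i => by fun_prop) (Metric.tendstoUniformlyOn_iff.2 fun ε hε =>
          (Metric.tendstoUniformly_iff.1 hpl ε hε).mono fun i hi t _ => ?_)
      rw [dist_eq_norm, ← sub_mul, norm_mul, Complex.norm_exp_ofReal_mul_I, mul_one,
        ← Complex.ofReal_sub, Complex.norm_real]
      exact hi t
    · exact (Complex.continuous_ofReal.tendsto _).comp
        (hpl.tendstoUniformlyOn.tendsto_intervalIntegral_of_continuousOn
          (.of_forall fun i => (hp i).continuousOn))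
  exact ((key hp hpl).1.mul (key hq hql).2).sub ((key hq hql).1.mul (key hp hpl).2)

/-- The direction, from the negative to the positive part, of the signs shared by `u` and `w`. -/
noncomputable def signAxis (P : ℝ) (u w : ℝ → ℝ) : ℂ :=
  centerSub P (fun t => max (min (u t) (w t)) 0) fun t => max (-max (u t) (w t)) 0

theorem signAxis_comm (P : ℝ) (u w : ℝ → ℝ) : signAxis P u w = signAxis P w u := by
  simp only [signAxis, min_comm, max_comm (u _)]

theorem tendsto_signAxis {ι : Type*} {l : Filter ι} [l.IsCountablyGenerated] {u w : ι → ℝ → ℝ}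
    {u₀ w₀ : ℝ → ℝ} (hu : ∀ i, Continuous (u i)) (hw : ∀ i, Continuous (w i))
    (hul : TendstoUniformly u u₀ l) (hwl : TendstoUniformly w w₀ l) :
    Tendsto (fun i => signAxis P (u i) (w i)) l (nhds (signAxis P u₀ w₀)) := by
  have huw : TendstoUniformly (fun i t => (u i t, w i t)) (fun t => (u₀ t, w₀ t)) l :=
    fun V hV => tendsto_diag.eventually (hul.prodMk hwl V hV)
  have hpos : UniformContinuous fun x : ℝ × ℝ => max (min x.1 x.2) 0 :=
    ((LipschitzWith.prod_fst.min LipschitzWith.prod_snd).max_const 0).uniformContinuous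
  have hneg : UniformContinuous fun x : ℝ × ℝ => max (-max x.1 x.2) 0 :=
    ((LipschitzWith.prod_fst.max LipschitzWith.prod_snd).neg.max_const 0).uniformContinuous
  exact tendsto_centerSub (fun i => by fun_prop) (fun i => by fun_prop)
    (hpos.comp_tendstoUniformly huw) (hneg.comp_tendstoUniformly huw)

theorem IsSeparatedByCos.re_exp_mul_signAxis_pos {w : ℝ → ℝ} {γ κ : ℝ} (hP : 0 < P)
    (h : IsSeparatedByCos P u γ κ) (hc : Continuous u) (hc' : Continuous w)
    (hu : Function.Periodic u P) (hw : Function.Periodic w P) (hpos : ∃ t, 0 < u t ∧ 0 < w t)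
    (hneg : ∃ t, u t < 0 ∧ w t < 0) :
    0 < (Complex.exp ((-γ : ℝ) * Complex.I) * signAxis P u w).re := by
  have hmem : ∀ t, ∃ s ∈ Icc 0 P, u t = u s ∧ w t = w s := fun t => by
    obtain ⟨s, hs, hst⟩ := (show Function.Periodic (fun t => (u t, w t)) P from fun t =>
      Prod.ext (hu t) (hw t)).exists_mem_Ico₀ hP t
    exact ⟨s, Ico_subset_Icc_self hs, Prod.ext_iff.1 hst⟩
  refine re_exp_mul_centerSub_pos hP (by fun_prop) (by fun_prop) (fun t => le_max_right _ _)
    (fun t => le_max_right _ _) (κ := κ) ?_ ?_ ?_ ?_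
  · exact fun t ht => (h t).1 (lt_min_iff.1 ((lt_max_iff.1 ht).resolve_right (lt_irrefl 0))).1
  · exact fun t ht => (h t).2 (max_lt_iff.1 (neg_pos.1
      ((lt_max_iff.1 ht).resolve_right (lt_irrefl 0)))).1
  · obtain ⟨t, ht⟩ := hpos
    obtain ⟨s, hs, hus, hws⟩ := hmem t
    exact ⟨s, hs, lt_max_of_lt_left (lt_min (hus ▸ ht.1) (hws ▸ ht.2))⟩
  · obtain ⟨t, ht⟩ := hneg
    obtain ⟨s, hs, hus, hws⟩ := hmem t
    exact ⟨s, hs, lt_max_of_lt_left (neg_pos.2 (max_lt (hus ▸ ht.1) (hws ▸ ht.2)))⟩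

end SignPattern

/-! ### Nodal solutions in every direction -/

/-- A continuous family in the box, parametrized by a direction `θ` and an asymmetry `s`, on which
the action is negative and whose members have the signs of `cos (2πt/P - θ) - κ`. The members with
`s = 1` are positive and those with `s = -1` are negative. -/
structure BarrierProblem.SweepingFamily (S : BarrierProblem) where
  family : ℝ × ℝ → ℝ → ℝ
  inBox : ∀ p, S.InBox (family p)
  contDiff : ∀ p, ContDiff ℝ 1 (family p)
  tendstoUniformly : ∀ p, TendstoUniformly family (family p) (nhds p)
  periodic : ∀ s, Function.Periodic (fun θ => family (θ, s)) (2 * Real.pi)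
  family_one_pos : ∀ θ t, 0 < family (θ, 1) t
  family_neg_one_neg : ∀ θ t, family (θ, -1) t < 0
  exists_isSeparatedByCos : ∀ p, ∃ κ, IsSeparatedByCos S.P (family p) p.1 κ
  level : ℝ
  level_neg : level < 0
  action_le : ∀ p, S.action (family p) ≤ level

namespace BarrierProblem.SweepingFamily

variable {S : BarrierProblem} (X : S.SweepingFamily)

/-- The `n`-th iterates of the members of the family under the monotone step. -/
noncomputable def iter (n : ℕ) (p : ℝ × ℝ) : ℝ → ℝ :=
  S.step^[n] (X.family p)

theorem iter_succ (n : ℕ) (p : ℝ × ℝ) : X.iter (n + 1) p = S.step (X.iter n p) :=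
  Function.iterate_succ_apply' _ _ _

theorem inBox_iter (n : ℕ) (p : ℝ × ℝ) : S.InBox (X.iter n p) := by
  induction n with
  | zero => exact X.inBox p
  | succ n ih => exact X.iter_succ n p ▸ ih.step

theorem contDiff_iter (n : ℕ) (p : ℝ × ℝ) : ContDiff ℝ 1 (X.iter n p) := by
  cases n with
  | zero => exact X.contDiff p
  | succ n => exact X.iter_succ n p ▸ (X.inBox_iter n p).contDiff_step

theorem atMostTwoSignChanges_iter (n : ℕ) (p : ℝ × ℝ) :
    AtMostTwoSignChanges S.P (X.iter n p) := by
  induction n with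
  | zero =>
    obtain ⟨κ, hκ⟩ := X.exists_isSeparatedByCos p
    exact hκ.atMostTwoSignChanges S.P_pos
  | succ n ih => exact X.iter_succ n p ▸ (X.inBox_iter n p).atMostTwoSignChanges_step ih

theorem iter_sub_int_mul (n : ℕ) (p : ℝ × ℝ) (k : ℤ) :
    X.iter n (p.1 - k * (2 * Real.pi), p.2) = X.iter n p :=
  congrArg (S.step^[n]) ((X.periodic p.2).sub_int_mul_eq k)

theorem tendstoUniformly_iter (n : ℕ) (p : ℝ × ℝ) :
    TendstoUniformly (X.iter n) (X.iter n p) (nhds p) := by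
  induction n with
  | zero => exact X.tendstoUniformly p
  | succ n ih =>
    simp only [funext (X.iter_succ n)]
    exact PeriodicNonlinearity.tendstoUniformly_step (fun q => (X.inBox_iter n q).toAdmissible)
      (X.inBox_iter n p).toAdmissible ih

theorem antitone_action_iter (p : ℝ × ℝ) : Antitone fun n => S.action (X.iter n p) :=
  antitone_nat_of_succ_le fun n =>
    X.iter_succ n p ▸ (X.inBox_iter n p).action_step_le (X.contDiff_iter n p)

theorem action_iter_le (n : ℕ) (p : ℝ × ℝ) : S.action (X.iter n p) ≤ X.level :=
  (X.antitone_action_iter p n.zero_le).trans (X.action_le p)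

theorem continuous_action_iter_succ (n : ℕ) : Continuous fun p => S.action (X.iter (n + 1) p) := by
  simp only [iter_succ]
  exact continuous_iff_continuousAt.2 fun p =>
    tendsto_action_step (X.inBox_iter n) (X.inBox_iter n p) (X.tendstoUniformly_iter n p)

theorem exists_tendsto_action_iter (p : ℝ × ℝ) :
    ∃ c, Tendsto (fun n => S.action (X.iter n p)) atTop (nhds c) := by
  obtain ⟨B, hB⟩ := S.exists_abs_le
  refine ⟨_, tendsto_atTop_ciInf (X.antitone_action_iter p)
    ⟨-∫ t in (0 : ℝ)..S.P, S.L t * B ^ 2, ?_⟩⟩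
  rintro _ ⟨n, rfl⟩
  exact PeriodicNonlinearity.neg_integral_le_action (X.contDiff_iter n p) (hB _ (X.inBox_iter n p))

/-- The parameters whose iterates become positive. -/
def posSet : Set (ℝ × ℝ) :=
  {p | ∃ n, ∀ t, 0 < X.iter n p t}

/-- The parameters whose iterates become negative. -/
def negSet : Set (ℝ × ℝ) :=
  {p | ∃ n, ∀ t, X.iter n p t < 0}

/-- The parameters all of whose iterates change sign. -/
def nodalSet : Set (ℝ × ℝ) :=
  (X.posSet ∪ X.negSet)ᶜ

variable {X} {n m : ℕ} {p : ℝ × ℝ}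

theorem isOpen_posSet : IsOpen X.posSet :=
  isOpen_iff_mem_nhds.2 fun p ⟨n, hn⟩ =>
    (eventually_forall_pos_of_tendstoUniformly S.P_pos (X.inBox_iter n p).periodic
      (X.inBox_iter n p).continuous hn (X.tendstoUniformly_iter n p)).mono fun _ h => ⟨n, h⟩

theorem isOpen_negSet : IsOpen X.negSet :=
  isOpen_iff_mem_nhds.2 fun p ⟨n, hn⟩ =>
    (eventually_forall_pos_of_tendstoUniformly (e := -X.iter n p) S.P_pos
      (fun t => congrArg Neg.neg ((X.inBox_iter n p).periodic t)) (X.inBox_iter n p).continuous.neg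
      (fun t => neg_pos.2 (hn t)) (X.tendstoUniformly_iter n p).neg).mono fun _ h =>
        ⟨n, fun t => neg_pos.1 (h t)⟩

theorem iter_nonneg_of_le (hnm : n ≤ m) (h : ∀ t, 0 ≤ X.iter n p t) (t : ℝ) :
    0 ≤ X.iter m p t := by
  induction m, hnm using Nat.le_induction generalizing t with
  | base => exact h t
  | succ m _ ih => exact X.iter_succ m p ▸ (X.inBox_iter m p).step_nonneg ih t

theorem iter_nonpos_of_le (hnm : n ≤ m) (h : ∀ t, X.iter n p t ≤ 0) (t : ℝ) :
    X.iter m p t ≤ 0 := by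
  induction m, hnm using Nat.le_induction generalizing t with
  | base => exact h t
  | succ m _ ih => exact X.iter_succ m p ▸ (X.inBox_iter m p).step_nonpos ih t

theorem disjoint_posSet_negSet : Disjoint X.posSet X.negSet := by
  rw [Set.disjoint_left]
  rintro p ⟨n, hn⟩ ⟨m, hm⟩
  rcases le_total n m with h | h
  · exact (iter_nonneg_of_le h (fun t => (hn t).le) 0).not_gt (hm 0)
  · exact (iter_nonpos_of_le h (fun t => (hm t).le) 0).not_gt (hn 0)

theorem exists_isNodalSolution_of_mem_nodalSet {p : ℕ → ℝ × ℝ} {N : ℕ → ℕ}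
    (hp : ∀ j, p j ∈ X.nodalSet)
    (hgap : Tendsto (fun j => S.action (X.iter (N j + 1) (p j)) -
      S.action (X.iter (N j + 2) (p j))) atTop (nhds 0)) :
    ∃ (e : ℝ → ℝ) (φ : ℕ → ℕ), S.IsNodalSolution e ∧ StrictMono φ ∧
      TendstoUniformly (fun j => X.iter (N (φ j) + 1) (p (φ j))) e atTop := by
  simp only [iter_succ] at hgap ⊢
  refine exists_isNodalSolution_tendstoUniformly X.level_neg (fun j => X.inBox_iter _ _)
    (fun j => ?_) hgap (fun j => ?_) (fun j h => ?_) fun j h => ?_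
  · exact X.iter_succ _ _ ▸ X.action_iter_le _ _
  · exact X.iter_succ _ _ ▸ X.atMostTwoSignChanges_iter _ _
  · exact hp j (Or.inl ⟨N j + 1, X.iter_succ _ _ ▸ h⟩)
  · exact hp j (Or.inr ⟨N j + 1, X.iter_succ _ _ ▸ h⟩)

theorem exists_isNodalSolution_tendstoUniformly_iter (hp : p ∈ X.nodalSet) :
    ∃ (e : ℝ → ℝ) (φ : ℕ → ℕ), S.IsNodalSolution e ∧ StrictMono φ ∧
      TendstoUniformly (fun j => X.iter (φ j + 1) p) e atTop := by
  obtain ⟨c, hc⟩ := X.exists_tendsto_action_iter p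
  have hgap := ((tendsto_add_atTop_iff_nat 1).2 hc).sub ((tendsto_add_atTop_iff_nat 2).2 hc)
  rw [sub_self] at hgap
  exact exists_isNodalSolution_of_mem_nodalSet (N := id) (fun _ => hp) hgap

theorem exists_iter_pos (hp : p ∈ X.nodalSet) (n : ℕ) : ∃ t, 0 < X.iter n p t := by
  by_contra! hn
  obtain ⟨e, φ, he, hφ, h⟩ := exists_isNodalSolution_tendstoUniformly_iter hp
  obtain ⟨t, ht⟩ := he.exists_pos
  refine ht.not_ge (le_of_tendsto (h.tendsto_at t) ?_)
  filter_upwards [hφ.tendsto_atTop.eventually_ge_atTop n] with j hj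
  exact iter_nonpos_of_le (hj.trans (Nat.le_succ _)) hn t

theorem exists_iter_neg (hp : p ∈ X.nodalSet) (n : ℕ) : ∃ t, X.iter n p t < 0 := by
  by_contra! hn
  obtain ⟨e, φ, he, hφ, h⟩ := exists_isNodalSolution_tendstoUniformly_iter hp
  obtain ⟨t, ht⟩ := he.exists_neg
  refine ht.not_ge (ge_of_tendsto (h.tendsto_at t) ?_)
  filter_upwards [hφ.tendsto_atTop.eventually_ge_atTop n] with j hj
  exact iter_nonneg_of_le (hj.trans (Nat.le_succ _)) hn t

theorem exists_iter_pos_and_iter_succ_pos (hp : p ∈ X.nodalSet) (n : ℕ) :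
    ∃ t, 0 < X.iter n p t ∧ 0 < X.iter (n + 1) p t := by
  obtain ⟨t, ht⟩ := exists_iter_pos hp (n + 1)
  rw [iter_succ] at ht ⊢
  obtain ⟨s, hs, hts⟩ := (X.inBox_iter n p).exists_pos_of_step_pos ht
  exact ⟨s, hs, hts s right_mem_uIcc⟩

theorem exists_iter_neg_and_iter_succ_neg (hp : p ∈ X.nodalSet) (n : ℕ) :
    ∃ t, X.iter n p t < 0 ∧ X.iter (n + 1) p t < 0 := by
  obtain ⟨t, ht⟩ := exists_iter_neg hp (n + 1)
  rw [iter_succ] at ht ⊢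
  obtain ⟨s, hs, hts⟩ := (X.inBox_iter n p).exists_neg_of_step_neg ht
  exact ⟨s, hs, hts s right_mem_uIcc⟩

theorem exists_isSeparatedByCos_iter (hp : p ∈ X.nodalSet) (n : ℕ) :
    ∃ γ κ, IsSeparatedByCos S.P (X.iter n p) γ κ :=
  (X.atMostTwoSignChanges_iter n p).exists_isSeparatedByCos S.P_pos (X.inBox_iter n p).continuous
    (X.inBox_iter n p).periodic (exists_iter_pos hp n) (exists_iter_neg hp n)

variable (X) in
theorem continuous_signAxis_iter (n m : ℕ) :
    Continuous fun p => signAxis S.P (X.iter n p) (X.iter m p) :=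
  continuous_iff_continuousAt.2 fun p => tendsto_signAxis (fun q => (X.inBox_iter n q).continuous)
    (fun q => (X.inBox_iter m q).continuous) (X.tendstoUniformly_iter n p)
    (X.tendstoUniformly_iter m p)

theorem re_exp_mul_signAxis_iter_self_pos {γ κ : ℝ} (hp : p ∈ X.nodalSet)
    (h : IsSeparatedByCos S.P (X.iter n p) γ κ) :
    0 < (Complex.exp ((-γ : ℝ) * Complex.I) * signAxis S.P (X.iter n p) (X.iter n p)).re :=
  h.re_exp_mul_signAxis_pos S.P_pos (X.inBox_iter n p).continuous (X.inBox_iter n p).continuous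
    (X.inBox_iter n p).periodic (X.inBox_iter n p).periodic
    ((exists_iter_pos hp n).imp fun _ ht => ⟨ht, ht⟩)
    ((exists_iter_neg hp n).imp fun _ ht => ⟨ht, ht⟩)

theorem re_exp_mul_signAxis_iter_succ_pos {γ κ : ℝ} (hp : p ∈ X.nodalSet)
    (h : IsSeparatedByCos S.P (X.iter n p) γ κ) :
    0 < (Complex.exp ((-γ : ℝ) * Complex.I) * signAxis S.P (X.iter n p) (X.iter (n + 1) p)).re :=
  h.re_exp_mul_signAxis_pos S.P_pos (X.inBox_iter n p).continuous
    (X.inBox_iter (n + 1) p).continuous (X.inBox_iter n p).periodic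
    (X.inBox_iter (n + 1) p).periodic
    (exists_iter_pos_and_iter_succ_pos hp n) (exists_iter_neg_and_iter_succ_neg hp n)

theorem re_exp_mul_signAxis_iter_succ_pos' {γ κ : ℝ} (hp : p ∈ X.nodalSet)
    (h : IsSeparatedByCos S.P (X.iter (n + 1) p) γ κ) :
    0 < (Complex.exp ((-γ : ℝ) * Complex.I) * signAxis S.P (X.iter n p) (X.iter (n + 1) p)).re := by
  rw [signAxis_comm]
  exact h.re_exp_mul_signAxis_pos S.P_pos (X.inBox_iter (n + 1) p).continuous
    (X.inBox_iter n p).continuous (X.inBox_iter (n + 1) p).periodic (X.inBox_iter n p).periodic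
    ((exists_iter_pos_and_iter_succ_pos hp n).imp fun _ ht => ht.symm)
    ((exists_iter_neg_and_iter_succ_neg hp n).imp fun _ ht => ht.symm)

variable (X) in
theorem exists_isAngleOn (n : ℕ) :
    ∃ A, IsAngleOn X.nodalSet (fun p => signAxis S.P (X.iter n p) (X.iter n p)) A := by
  refine IsAngleOn.exists_of_chain (Z := fun n p => signAxis S.P (X.iter n p) (X.iter n p))
    (W := fun n p => signAxis S.P (X.iter n p) (X.iter (n + 1) p))
    (fun n => X.continuous_signAxis_iter n n) (fun n => X.continuous_signAxis_iter n (n + 1))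
    ⟨_, IsAngleOn.exp_fst.add_arg (by fun_prop) (X.continuous_signAxis_iter 0 0) fun p hp => ?_⟩
    (fun n p hp => ?_) (fun n p hp => ?_) n
  · obtain ⟨κ, h⟩ := X.exists_isSeparatedByCos p
    refine mul_conj_mem_slitPlane (re_exp_mul_signAxis_iter_self_pos (n := 0) hp h) ?_
    rw [← Complex.exp_add]
    simp
  · obtain ⟨γ, κ, h⟩ := exists_isSeparatedByCos_iter hp n
    exact mul_conj_mem_slitPlane (re_exp_mul_signAxis_iter_succ_pos hp h)
      (re_exp_mul_signAxis_iter_self_pos hp h)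
  · obtain ⟨γ, κ, h⟩ := exists_isSeparatedByCos_iter hp (n + 1)
    exact mul_conj_mem_slitPlane (re_exp_mul_signAxis_iter_self_pos hp h)
      (re_exp_mul_signAxis_iter_succ_pos' hp h)

variable (X) in
theorem exists_mem_nodalSet_signAxis_iter_eq (n : ℕ) (c : ℝ) :
    ∃ p ∈ X.nodalSet, p ∈ Icc 0 (2 * Real.pi) ×ˢ Icc (-1) 1 ∧
      signAxis S.P (X.iter n p) (X.iter n p) =
        ‖signAxis S.P (X.iter n p) (X.iter n p)‖ * Complex.exp (c * Complex.I) := by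
  obtain ⟨A, hA⟩ := X.exists_isAngleOn n
  obtain ⟨C, hC⟩ := hA.exists_dist_le
  obtain ⟨p, hp, hp2, hAp⟩ := exists_eq_of_dist_fst_le isOpen_posSet isOpen_negSet
    disjoint_posSet_negSet (fun θ => ⟨0, X.family_one_pos θ⟩)
    (fun θ => ⟨0, X.family_neg_one_neg θ⟩) hA.continuousOn hC c
  set k := toIcoDiv Real.two_pi_pos 0 p.1
  have hk : p.1 - k * (2 * Real.pi) ∈ Icc 0 (2 * Real.pi) := by
    have h := toIcoMod_mem_Ico Real.two_pi_pos 0 p.1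
    rw [zero_add, toIcoMod, zsmul_eq_mul] at h
    exact Ico_subset_Icc_self h
  have hiter := fun m => X.iter_sub_int_mul m p k
  refine ⟨(p.1 - k * (2 * Real.pi), p.2), ?_, ⟨hk, hp2⟩, ?_⟩
  · simpa only [nodalSet, posSet, negSet, mem_compl_iff, mem_union, mem_ofPred_eq, hiter] using hp
  · rw [hiter, ← hAp]
    exact hA.eq_norm_mul_exp p hp

/-! ### Nodal solutions at a single action level -/

variable {c : ℝ}

theorem tendsto_action_iter (hc : ∀ e, S.IsNodalSolution e → S.action e = c)
    (hp : p ∈ X.nodalSet) : Tendsto (fun n => S.action (X.iter n p)) atTop (nhds c) := by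
  obtain ⟨d, hd⟩ := X.exists_tendsto_action_iter p
  obtain ⟨e, φ, he, hφ, h⟩ := exists_isNodalSolution_tendstoUniformly_iter hp
  have hstep : Tendsto (fun j => S.action (X.iter (φ j + 2) p)) atTop (nhds c) := by
    have := tendsto_action_step (fun j => X.inBox_iter (φ j + 1) p) he.toInBox h
    rw [he.step_eq, hc e he] at this
    simpa only [← iter_succ] using this
  have hφ2 : Tendsto (fun j => φ j + 2) atTop atTop :=
    (tendsto_add_atTop_nat 2).comp hφ.tendsto_atTop
  exact tendsto_nhds_unique (hd.comp hφ2) hstep ▸ hd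

theorem tendsto_action_iter_of_tendsto (hc : ∀ e, S.IsNodalSolution e → S.action e = c)
    {p : ℕ → ℝ × ℝ} {p₀ : ℝ × ℝ} {N : ℕ → ℕ} (hp : ∀ j, p j ∈ X.nodalSet)
    (hp₀ : p₀ ∈ X.nodalSet) (hlim : Tendsto p atTop (nhds p₀)) (hN : Tendsto N atTop atTop) :
    Tendsto (fun j => S.action (X.iter (N j) (p j))) atTop (nhds c) := by
  refine tendsto_order.2 ⟨fun a ha => Eventually.of_forall fun j => ha.trans_le
    ((X.antitone_action_iter _).le_of_tendsto (tendsto_action_iter hc (hp j)) _), fun a ha => ?_⟩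
  obtain ⟨n, hn⟩ := (((tendsto_action_iter hc hp₀).comp
    (tendsto_add_atTop_nat 1)).eventually_lt_const ha).exists
  filter_upwards [((X.continuous_action_iter_succ n).tendsto p₀ |>.comp hlim).eventually_lt_const
    hn, hN.eventually_ge_atTop (n + 1)] with j hj hNj
  exact (X.antitone_action_iter (p j) hNj).trans_lt hj

theorem exists_isNodalSolution_signAxis_eq (X : S.SweepingFamily)
    (hc : ∀ e, S.IsNodalSolution e → S.action e = c) (a : ℝ) : ∃ e, S.IsNodalSolution e ∧
      signAxis S.P e e = ‖signAxis S.P e e‖ * Complex.exp (a * Complex.I) := by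
  choose p hp hpK hpa using fun n => X.exists_mem_nodalSet_signAxis_iter_eq (n + 1) a
  obtain ⟨p₀, -, φ, hφ, hlim⟩ := (isCompact_Icc.prod isCompact_Icc).tendsto_subseq hpK
  have hp₀ : p₀ ∈ X.nodalSet := (isOpen_posSet.union isOpen_negSet).isClosed_compl.mem_of_tendsto
    hlim (Eventually.of_forall fun j => hp _)
  have hlevel : ∀ i, Tendsto (fun j => S.action (X.iter (φ j + i) (p (φ j)))) atTop (nhds c) :=
    fun i => tendsto_action_iter_of_tendsto hc (fun j => hp (φ j)) hp₀ hlim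
      ((tendsto_add_atTop_nat i).comp hφ.tendsto_atTop)
  have hgap := (hlevel 1).sub (hlevel 2)
  rw [sub_self] at hgap
  obtain ⟨e, ψ, he, -, h⟩ := exists_isNodalSolution_of_mem_nodalSet (fun j => hp (φ j)) hgap
  have haxis := tendsto_signAxis (P := S.P) (fun j => (X.inBox_iter _ _).continuous)
    (fun j => (X.inBox_iter _ _).continuous) h h
  exact ⟨e, he, tendsto_nhds_unique haxis ((((Complex.continuous_ofReal.tendsto _).comp
    haxis.norm).mul_const _).congr fun j => (hpa (φ (ψ j))).symm)⟩

theorem _root_.BarrierProblem.IsNodalSolution.signAxis_ne_zero {e : ℝ → ℝ}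
    (he : S.IsNodalSolution e) : signAxis S.P e e ≠ 0 := by
  obtain ⟨γ, κ, h⟩ := he.atMostTwoSignChanges.exists_isSeparatedByCos S.P_pos he.continuous
    he.periodic he.exists_pos he.exists_neg
  intro h0
  have hpos := h.re_exp_mul_signAxis_pos S.P_pos he.continuous he.continuous he.periodic
    he.periodic (he.exists_pos.imp fun _ ht => ⟨ht, ht⟩) (he.exists_neg.imp fun _ ht => ⟨ht, ht⟩)
  rw [h0, mul_zero] at hpos
  exact lt_irrefl _ hpos

theorem not_countable_setOf_isNodalSolution (X : S.SweepingFamily)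
    (hc : ∀ e, S.IsNodalSolution e → S.action e = c) : ¬{e | S.IsNodalSolution e}.Countable := by
  intro hcount
  refine (Cardinal.Real.Ioo_countable_iff.not.2 (not_le.2 one_pos))
    ((hcount.image fun e => (signAxis S.P e e).arg).mono fun a ha => ?_)
  obtain ⟨e, he, h⟩ := X.exists_isNodalSolution_signAxis_eq hc a
  have hpi := Real.pi_gt_three
  refine ⟨e, he, ?_⟩
  dsimp only
  rw [h, Complex.exp_mul_I, Complex.arg_mul_cos_add_sin_mul_I
    (norm_pos_iff.2 he.signAxis_ne_zero) ⟨by linarith [ha.1], by linarith [ha.2]⟩]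

end BarrierProblem.SweepingFamily

/-! ### Zeros and minimal period of nodal solutions -/

theorem ncard_setOf_mem_Ico_of_periodic {X : Type*} {u : ℝ → X} {P : ℝ} (hP : 0 < P)
    (hu : Function.Periodic u P) (c : X) (a b : ℝ) :
    {t | t ∈ Ico a (a + P) ∧ u t = c}.ncard = {t | t ∈ Ico b (b + P) ∧ u t = c}.ncard := by
  have hmaps : ∀ a' t, u t = c → toIcoMod hP a' t ∈ {t | t ∈ Ico a' (a' + P) ∧ u t = c} :=
    fun a' t ht => ⟨toIcoMod_mem_Ico hP a' t, (hu.sub_zsmul_eq _).trans ht⟩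
  have hself : ∀ a' b' t, t ∈ Ico a' (a' + P) → toIcoMod hP a' (toIcoMod hP b' t) = t :=
    fun a' b' t ht => (toIcoMod_toIcoMod hP a' b' t).trans ((toIcoMod_eq_self hP).2 ht)
  refine ncard_congr (fun t _ => toIcoMod hP b t) (fun t ht => hmaps b t ht.2)
    (fun s t hs ht hst => ?_) fun t ht => ⟨toIcoMod hP a t, hmaps a t ht.2, hself b a t ht.1⟩
  rw [← hself a b s hs.1, hst, hself a b t ht.1]

namespace BarrierProblem.IsNodalSolution

variable {S : BarrierProblem} {e : ℝ → ℝ}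

theorem ne_zero (he : S.IsNodalSolution e) : e ≠ 0 := by
  obtain ⟨t, ht⟩ := he.exists_pos
  rintro rfl
  exact lt_irrefl _ ht

theorem ncard_zeros (he : S.IsNodalSolution e) :
    {t | t ∈ Ico 0 S.P ∧ e t = 0}.ncard = 2 := by
  obtain ⟨t₀, h₀⟩ := he.exists_neg
  obtain ⟨r, hr⟩ := he.exists_pos
  obtain ⟨s, hs, hrs⟩ := he.periodic.exists_mem_Ico S.P_pos r t₀
  obtain ⟨a, b, ha, hab, hb, hneg, hpos, hneg'⟩ := he.atMostTwoSignChanges.exists_arcs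
    he.continuous he.periodic h₀ (Ico_subset_Icc_self hs) (hrs ▸ hr)
  have hext : ∀ t, e t = 0 → ¬IsLocalExtr e t := fun t ht hloc =>
    he.toAdmissible.ne_zero_of_isLocalExtr he.step_eq he.ne_zero hloc ht
  have hmax : ∀ {c d t}, (∀ x ∈ Icc c d, e x ≤ 0) → t ∈ Ioo c d → e t ≠ 0 := fun h ht h0 =>
    hext _ h0 (.inr (mem_of_superset (Icc_mem_nhds ht.1 ht.2)
      fun x hx => (h x hx).trans_eq h0.symm))
  have hmin : ∀ {c d t}, (∀ x ∈ Icc c d, 0 ≤ e x) → t ∈ Ioo c d → e t ≠ 0 := fun h ht h0 =>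
    hext _ h0 (.inl (mem_of_superset (Icc_mem_nhds ht.1 ht.2) fun x hx => h0.trans_le (h x hx)))
  have hea : e a = 0 :=
    le_antisymm (hneg a (right_mem_Icc.2 ha.le)) (hpos a (left_mem_Icc.2 hab.le))
  have heb : e b = 0 :=
    le_antisymm (hneg' b (left_mem_Icc.2 hb.le)) (hpos b (right_mem_Icc.2 hab.le))
  have hset : {t | t ∈ Ico t₀ (t₀ + S.P) ∧ e t = 0} = {a, b} := by
    ext t
    refine ⟨fun ⟨ht, h0⟩ => ?_, ?_⟩
    · have hne : t₀ ≠ t := fun h => h₀.ne (h ▸ h0)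
      rcases lt_trichotomy t a with hta | rfl | hta
      · exact absurd h0 (hmax hneg ⟨ht.1.lt_of_ne hne, hta⟩)
      · exact .inl rfl
      rcases lt_trichotomy t b with htb | rfl | htb
      · exact absurd h0 (hmin hpos ⟨hta, htb⟩)
      · exact .inr rfl
      · exact absurd h0 (hmax hneg' ⟨htb, ht.2⟩)
    · rintro (rfl | rfl)
      · exact ⟨⟨ha.le, hab.trans hb⟩, hea⟩
      · exact ⟨⟨(ha.trans hab).le, hb⟩, heb⟩
  have hcard := ncard_setOf_mem_Ico_of_periodic S.P_pos he.periodic (0 : ℝ) t₀ 0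
  rw [hset, ncard_pair hab.ne, zero_add] at hcard
  exact hcard.symm

/-- With a smaller period `D` the pattern `+ -` would occur in both `D` and `P - D`. -/
theorem not_periodic (he : S.IsNodalSolution e) {D : ℝ} (hD : 0 < D) (hDP : D < S.P) :
    ¬Function.Periodic e D := by
  intro hper
  obtain ⟨t, ht⟩ := he.exists_pos
  obtain ⟨r, hr⟩ := he.exists_neg
  have hnext : ∀ c D', 0 < D' → Function.Periodic e D' → 0 < e c →
      ∃ s, c < s ∧ s < c + D' ∧ e s < 0 := fun c D' hD' hper' hc => by
    obtain ⟨s, hs, hrs⟩ := hper'.exists_mem_Ico hD' r c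
    rw [hrs] at hr
    exact ⟨s, hs.1.lt_of_ne fun h => hr.not_gt (h ▸ hc), hs.2, hr⟩
  have ht' : 0 < e (t + D) := (hper t).symm ▸ ht
  obtain ⟨s, hts, hs, hes⟩ := hnext t D hD hper ht
  obtain ⟨s', hts', hs', hes'⟩ :=
    hnext (t + D) (S.P - D) (sub_pos.2 hDP) (he.periodic.sub_period hper) ht'
  exact he.atMostTwoSignChanges
    ⟨t, s, t + D, s', hts, hs, hts', by linarith, ht, hes, ht', hes'⟩

end BarrierProblem.IsNodalSolution

/-! ### Sweeping families from a positive profile -/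

theorem tendstoUniformly_of_continuous_of_periodic {X : Type*} [TopologicalSpace X]
    {F : X → ℝ → ℝ} {P : ℝ} (hP : 0 < P) (hF : Continuous (Function.uncurry F))
    (hper : ∀ x, Function.Periodic (F x) P) (x : X) : TendstoUniformly F (F x) (nhds x) := by
  intro U hU
  obtain ⟨V, hV, h⟩ := isCompact_Icc (a := 0) (b := P).mem_uniformity_of_prod
    hF.continuousOn (mem_univ x) (symm_le_uniformity hU)
  filter_upwards [nhdsWithin_univ x ▸ hV] with y hy t
  obtain ⟨s, hs, hts⟩ :=
    Function.Periodic.exists_mem_Ico₀ (f := fun t => (F x t, F y t))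
      (fun t => Prod.ext (hper x t) (hper y t)) hP t
  exact hts ▸ h y hy s (Ico_subset_Icc_self hs)

section CosProfile

variable {P : ℝ}

/-- The profile `σ + (1 - |σ|) cos (2πt/P - θ)`, deforming the first harmonic with phase `θ` to the
constants `1` and `-1`. -/
noncomputable def cosProfile (P σ θ t : ℝ) : ℝ :=
  σ + (1 - |σ|) * Real.cos (2 * Real.pi / P * t - θ)

theorem hasDerivAt_cosProfile (P σ θ t : ℝ) : HasDerivAt (cosProfile P σ θ)
    (-(2 * Real.pi / P * (1 - |σ|) * Real.sin (2 * Real.pi / P * t - θ))) t := by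
  have h := ((hasDerivAt_id t).const_mul (2 * Real.pi / P)).sub_const θ
  exact ((h.cos.const_mul (1 - |σ|)).const_add σ).congr_deriv (by simp only [id]; ring)

theorem contDiff_cosProfile (P σ θ : ℝ) : ContDiff ℝ 1 (cosProfile P σ θ) := by
  unfold cosProfile
  fun_prop

theorem periodic_cosProfile (hP : P ≠ 0) (σ θ : ℝ) : Function.Periodic (cosProfile P σ θ) P := by
  intro t
  have h : 2 * Real.pi / P * (t + P) - θ = 2 * Real.pi / P * t - θ + 2 * Real.pi := by
    field_simp
    ring
  rw [cosProfile, h, Real.cos_add_two_pi, cosProfile]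

theorem abs_cosProfile_le_one {σ : ℝ} (hσ : |σ| ≤ 1) (θ t : ℝ) : |cosProfile P σ θ t| ≤ 1 := by
  calc |cosProfile P σ θ t| ≤ |σ| + |(1 - |σ|) * Real.cos (2 * Real.pi / P * t - θ)| :=
        abs_add_le _ _
    _ ≤ |σ| + (1 - |σ|) * 1 := by
        rw [abs_mul, abs_of_nonneg (sub_nonneg.2 hσ)]
        gcongr
        exact Real.abs_cos_le_one _
    _ = 1 := by ring

theorem abs_deriv_cosProfile_le (hP : 0 < P) {σ : ℝ} (hσ : |σ| ≤ 1) (θ t : ℝ) :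
    |deriv (cosProfile P σ θ) t| ≤ 2 * Real.pi / P := by
  have hω : 0 ≤ 2 * Real.pi / P := by positivity
  rw [(hasDerivAt_cosProfile P σ θ t).deriv, abs_neg, mul_assoc, abs_mul, abs_mul, abs_of_nonneg hω,
    abs_of_nonneg (sub_nonneg.2 hσ)]
  exact mul_le_of_le_one_right hω (mul_le_one₀ (sub_le_self _ (abs_nonneg σ)) (abs_nonneg _)
    (Real.abs_sin_le_one _))

theorem integral_mul_deriv_cosProfile_sq_le (hP : 0 < P) {σ : ℝ} (hσ : |σ| ≤ 1) (θ : ℝ) {w : ℝ → ℝ}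
    (hw : Continuous w) {b : ℝ} (hb : ∀ t, |w t| ≤ b) :
    ∫ t in (0 : ℝ)..P, (w t * deriv (cosProfile P σ θ) t) ^ 2 ≤
      (b * (2 * Real.pi / P)) ^ 2 * P := by
  have hcont : Continuous fun t => (w t * deriv (cosProfile P σ θ) t) ^ 2 :=
    (hw.mul ((contDiff_cosProfile P σ θ).continuous_deriv le_rfl)).pow 2
  have hle : ∀ t ∈ Icc 0 P,
      (w t * deriv (cosProfile P σ θ) t) ^ 2 ≤ (b * (2 * Real.pi / P)) ^ 2 := fun t _ => by
    rw [← sq_abs, abs_mul]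
    have hb0 := (abs_nonneg _).trans (hb t)
    gcongr
    exacts [hb t, abs_deriv_cosProfile_le hP hσ θ t]
  refine (intervalIntegral.integral_mono_on hP.le (hcont.intervalIntegrable _ _)
    (continuous_const.intervalIntegrable _ _) hle).trans_eq ?_
  rw [intervalIntegral.integral_const, sub_zero, smul_eq_mul, mul_comm]

theorem exists_isSeparatedByCos_mul_cosProfile {v : ℝ → ℝ} (hv : ∀ t, 0 < v t) {σ : ℝ}
    (hσ : |σ| ≤ 1) (θ : ℝ) : ∃ κ, IsSeparatedByCos P (fun t => v t * cosProfile P σ θ t) θ κ := by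
  have hsign : ∀ κ, (∀ t, (0 < cosProfile P σ θ t → κ < Real.cos (2 * Real.pi / P * t - θ)) ∧
      (cosProfile P σ θ t < 0 → Real.cos (2 * Real.pi / P * t - θ) ≤ κ)) →
      IsSeparatedByCos P (fun t => v t * cosProfile P σ θ t) θ κ := fun κ h t =>
    ⟨fun ht => (h t).1 ((mul_pos_iff_of_pos_left (hv t)).1 ht),
      fun ht => (h t).2 (neg_of_mul_neg_right ht (hv t).le)⟩
  rcases hσ.lt_or_eq with hlt | heq
  · have hσ' : 0 < 1 - |σ| := sub_pos.2 hlt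
    refine ⟨-σ / (1 - |σ|), hsign _ fun t => ⟨fun ht => ?_, fun ht => ?_⟩⟩
    · rw [div_lt_iff₀' hσ']
      linarith [show 0 < σ + _ from ht]
    · rw [le_div_iff₀' hσ']
      linarith [show σ + _ < 0 from ht]
  · have hconst : ∀ t, cosProfile P σ θ t = σ := fun t => by simp [cosProfile, heq]
    simp only [hconst] at hsign ⊢
    rcases (abs_eq zero_le_one).1 heq with rfl | rfl
    · exact ⟨-2, hsign _ fun t => ⟨fun _ => (by norm_num : (-2 : ℝ) < -1).trans_le
        (Real.neg_one_le_cos _), fun h => absurd h (by norm_num)⟩⟩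
    · exact ⟨1, hsign _ fun t => ⟨fun h => absurd h (by norm_num), fun _ => Real.cos_le_one _⟩⟩

theorem div_four_le_integral_cosProfile_sq (hP : 0 < P) (σ θ : ℝ) :
    P / 4 ≤ ∫ t in (0 : ℝ)..P, cosProfile P σ θ t ^ 2 := by
  let ω := 2 * Real.pi / P
  let ρ := 1 - |σ|
  have hω : ω ≠ 0 := (div_pos Real.two_pi_pos hP).ne'
  have hωP : ω * P = 2 * Real.pi := div_mul_cancel₀ _ hP.ne'
  have hd : ∀ t, HasDerivAt (fun t => (σ ^ 2 + ρ ^ 2 / 2) * t +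
      2 * σ * ρ / ω * Real.sin (ω * t - θ) + ρ ^ 2 / (4 * ω) * Real.sin (2 * (ω * t - θ)))
      (cosProfile P σ θ t ^ 2) t := fun t => by
    have h := ((hasDerivAt_id' t).const_mul ω).sub_const θ
    refine ((((hasDerivAt_id' t).const_mul (σ ^ 2 + ρ ^ 2 / 2)).add
      (h.sin.const_mul (2 * σ * ρ / ω))).add
      ((h.const_mul 2).sin.const_mul (ρ ^ 2 / (4 * ω)))).congr_deriv ?_
    change _ = (σ + ρ * Real.cos (ω * t - θ)) ^ 2
    rw [Real.cos_two_mul]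
    field_simp
    ring
  have hsin : Real.sin (ω * P - θ) = Real.sin (ω * 0 - θ) := by
    rw [hωP, mul_zero, zero_sub, ← Real.sin_add_two_pi (-θ), neg_add_eq_sub]
  have hsin' : Real.sin (2 * (ω * P - θ)) = Real.sin (2 * (ω * 0 - θ)) := by
    rw [Real.sin_two_mul, Real.sin_two_mul, hsin, hωP, mul_zero, zero_sub,
      ← Real.cos_add_two_pi (-θ), neg_add_eq_sub]
  have hcoeff : 1 / 4 ≤ σ ^ 2 + ρ ^ 2 / 2 := by
    simp only [ρ, ← sq_abs σ]
    nlinarith [sq_nonneg (3 * |σ| - 1)]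
  rw [intervalIntegral.integral_eq_sub_of_hasDerivAt (fun t _ => hd t)
    (((contDiff_cosProfile P σ θ).continuous.pow 2).intervalIntegrable _ _), hsin, hsin']
  linarith [mul_le_mul_of_nonneg_right hcoeff hP.le]

theorem abs_projIcc_neg_one_one_le (s : ℝ) :
    |(projIcc (-1) 1 (by norm_num) s : ℝ)| ≤ 1 :=
  abs_le.2 (projIcc (-1) 1 (by norm_num) s).2

/-- The family `v · cosProfile`, with the asymmetry clamped to `[-1, 1]`. -/
noncomputable def BarrierProblem.SweepingFamily.ofProfile (S : BarrierProblem) {v : ℝ → ℝ}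
    {c : ℝ} (hpos : ∀ t, 0 < v t) (hv : ContDiff ℝ 1 v) (hper : Function.Periodic v S.P)
    (hlow : ∀ t, S.lower t ≤ -v t) (hup : ∀ t, v t ≤ S.upper) (hc : c < 0)
    (hact : ∀ σ θ, |σ| ≤ 1 → S.action (fun t => v t * cosProfile S.P σ θ t) ≤ c) :
    S.SweepingFamily where
  family p t := v t * cosProfile S.P (projIcc (-1) 1 (by norm_num) p.2) p.1 t
  inBox p :=
    have habs : ∀ t, |v t * cosProfile S.P (projIcc (-1) 1 (by norm_num) p.2) p.1 t| ≤ v t :=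
      fun t => by
        rw [abs_mul, abs_of_pos (hpos t)]
        exact mul_le_of_le_one_right (hpos t).le
          (abs_cosProfile_le_one (abs_projIcc_neg_one_one_le _) _ _)
    { continuous := hv.continuous.mul (contDiff_cosProfile _ _ _).continuous
      periodic := hper.mul (periodic_cosProfile S.P_pos.ne' _ _)
      lower_le := fun t => (hlow t).trans (abs_le.1 (habs t)).1
      le_upper := fun t => (abs_le.1 (habs t)).2.trans (hup t) }
  contDiff p := hv.mul (contDiff_cosProfile _ _ _)
  tendstoUniformly p := by
    have hv' := hv.continuous
    have hcont : Continuous fun x : (ℝ × ℝ) × ℝ =>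
        v x.2 * cosProfile S.P (projIcc (-1) 1 (by norm_num) x.1.2) x.1.1 x.2 := by
      unfold cosProfile
      fun_prop
    exact tendstoUniformly_of_continuous_of_periodic S.P_pos hcont
      (fun p => hper.mul (periodic_cosProfile S.P_pos.ne' _ _)) p
  periodic s θ := by
    funext t
    simp only [cosProfile, ← sub_sub, Real.cos_sub_two_pi]
  family_one_pos θ t := by simpa [cosProfile] using hpos t
  family_neg_one_neg θ t := by simpa [cosProfile] using hpos t
  exists_isSeparatedByCos p :=
    exists_isSeparatedByCos_mul_cosProfile hpos (abs_projIcc_neg_one_one_le _) _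
  level := c
  level_neg := hc
  action_le p := hact _ _ (abs_projIcc_neg_one_one_le _)

end CosProfile

/-! ### The truncated nonlinearity -/

section AffineExtension

variable {g : ℝ → ℝ} {R : ℝ}

/-- The derivative on `(0, ∞)` of `affineExtension g R`. -/
noncomputable def affineExtensionDeriv (g : ℝ → ℝ) (R x : ℝ) : ℝ :=
  derivWithin g (Ici 0) (max 0 (min x R))

/-- The factor `h(t, ·) / q(t)` of the truncated nonlinearity `hExt q g R`: it agrees with `g` on
`[0, R]`, is affine on `[R, ∞)` and vanishes on `(-∞, 0]`. -/
noncomputable def affineExtension (g : ℝ → ℝ) (R x : ℝ) : ℝ :=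
  ∫ s in (0 : ℝ)..max x 0, affineExtensionDeriv g R s

theorem affineExtension_of_nonpos {x : ℝ} (hx : x ≤ 0) : affineExtension g R x = 0 := by
  rw [affineExtension, max_eq_right hx, intervalIntegral.integral_same]

section

variable (hg : ContDiffOn ℝ 1 g (Ici 0))
include hg

theorem continuous_affineExtensionDeriv : Continuous (affineExtensionDeriv g R) :=
  (hg.continuousOn_derivWithin (uniqueDiffOn_Ici 0) le_rfl).comp_continuous
    (by fun_prop) fun _ => mem_Ici.2 (le_max_left _ _)

theorem hasDerivAt_affineExtension {x : ℝ} (hx : 0 < x) :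
    HasDerivAt (affineExtension g R) (affineExtensionDeriv g R x) x := by
  have hc := continuous_affineExtensionDeriv (R := R) hg
  refine (intervalIntegral.integral_hasDerivAt_right (hc.intervalIntegrable 0 x)
    (hc.stronglyMeasurableAtFilter _ _) hc.continuousAt).congr_of_eventuallyEq ?_
  filter_upwards [lt_mem_nhds hx] with y hy
  rw [affineExtension, max_eq_left hy.le]

theorem exists_lipschitzWith_affineExtension (hR : 0 ≤ R) :
    ∃ K, LipschitzWith K (affineExtension g R) := by
  have hc := continuous_affineExtensionDeriv (R := R) hg
  obtain ⟨K, hK⟩ := (isCompact_Icc (a := 0) (b := R)).exists_bound_of_continuousOn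
    ((hg.continuousOn_derivWithin (uniqueDiffOn_Ici 0) le_rfl).mono Icc_subset_Ici_self)
  have hbound : ∀ x, ‖affineExtensionDeriv g R x‖ ≤ K := fun x =>
    hK _ ⟨le_max_left _ _, max_le hR (min_le_right _ _)⟩
  have hK0 : 0 ≤ K := (norm_nonneg _).trans (hbound 0)
  refine ⟨⟨K, hK0⟩, .of_dist_le_mul fun x y => ?_⟩
  rw [dist_eq_norm, affineExtension, affineExtension, intervalIntegral.integral_interval_sub_left
    (hc.intervalIntegrable _ _) (hc.intervalIntegrable _ _)]
  refine (intervalIntegral.norm_integral_le_of_norm_le_const fun s _ => hbound s).trans ?_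
  exact mul_le_mul_of_nonneg_left (abs_max_sub_max_le_abs x y 0) hK0

theorem affineExtension_of_mem_Icc (hg0 : g 0 = 0) {x : ℝ} (hx : x ∈ Icc 0 R) :
    affineExtension g R x = g x := by
  have hsub : uIcc 0 x ⊆ Ici 0 := by simpa only [uIcc_of_le hx.1] using Icc_subset_Ici_self
  have hderiv : ∀ s ∈ uIcc 0 x, affineExtensionDeriv g R s = derivWithin g (Ici 0) s :=
    fun s hs => by
      rw [uIcc_of_le hx.1] at hs
      rw [affineExtensionDeriv, min_eq_left (hs.2.trans hx.2), max_eq_right hs.1]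
  rw [affineExtension, max_eq_left hx.1, intervalIntegral.integral_congr hderiv,
    intervalIntegral.integral_eq_sub_of_hasDerivAt_of_le hx.1
      (hg.continuousOn.mono Icc_subset_Ici_self) (fun s hs => ?_)
      ((hg.continuousOn_derivWithin (uniqueDiffOn_Ici 0) le_rfl).mono hsub).intervalIntegrable,
    hg0, sub_zero]
  exact ((hg.differentiableOn one_ne_zero) s hs.1.le).hasDerivWithinAt.hasDerivAt
    (Ici_mem_nhds hs.1)

theorem affineExtension_of_le (hg0 : g 0 = 0) (hR : 0 ≤ R) {x : ℝ} (hx : R ≤ x) :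
    affineExtension g R x = g R + derivWithin g (Ici 0) R * (x - R) := by
  have hc := continuous_affineExtensionDeriv (R := R) hg
  have hderiv : ∀ s ∈ uIcc R x, affineExtensionDeriv g R s = derivWithin g (Ici 0) R :=
    fun s hs => by
      rw [uIcc_of_le hx] at hs
      rw [affineExtensionDeriv, min_eq_right hs.1, max_eq_right hR]
  rw [← affineExtension_of_mem_Icc hg hg0 (right_mem_Icc.2 hR), affineExtension, affineExtension,
    max_eq_left hR, max_eq_left (hR.trans hx),
    ← intervalIntegral.integral_add_adjacent_intervals (hc.intervalIntegrable 0 R)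
      (hc.intervalIntegrable R x), intervalIntegral.integral_congr hderiv,
    intervalIntegral.integral_const, smul_eq_mul, mul_comm (x - R)]

theorem hExt_eq_mul_affineExtension (hg0 : g 0 = 0) (hR : 0 ≤ R) (q : ℝ → ℝ) :
    hExt q g R = fun t x => q t * affineExtension g R x := by
  funext t x
  unfold hExt
  split_ifs with hx hxR
  · rw [affineExtension_of_nonpos hx.le, mul_zero]
  · rw [affineExtension_of_mem_Icc hg hg0 ⟨not_lt.1 hx, hxR⟩]
  · rw [affineExtension_of_le hg hg0 hR (not_le.1 hxR).le]

end

end AffineExtension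

theorem isSol_iff_exists_hasW21Deriv {F : ℝ → ℝ → ℝ} {u : ℝ → ℝ} :
    IsSol F u ↔ ∃ u', HasW21Deriv u u' fun t => -F t (u t) := by
  refine exists_congr fun u' => ⟨fun ⟨hd, hF, h⟩ => ⟨hd, .of_eq_add_integral (a := 0) (c := u' 0)
    hF.neg fun t => ?_⟩, fun ⟨hd, hu'⟩ => ⟨hd,
    by simpa only [Pi.neg_def, neg_neg] using hu'.locallyIntegrable.neg,
    fun t => ?_⟩⟩
  · rw [h t, intervalIntegral.integral_neg, sub_eq_add_neg]
  · have h := hu'.integral_eq_sub 0 t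
    rw [intervalIntegral.integral_neg] at h
    linarith

theorem deriv_eq_zero_of_forall_le {f : ℝ → ℝ} {a c x : ℝ} (h : ∀ y ≤ a, f y = c) (hx : x ≤ a) :
    deriv f x = 0 := by
  by_cases hd : DifferentiableAt ℝ f x
  · exact (uniqueDiffWithinAt_Iic x).eq_deriv _ hd.hasDerivAt.hasDerivWithinAt
      ((hasDerivWithinAt_const x (Iic x) c).congr (fun y hy => h y (hy.trans hx)) (h x hx))
  · exact deriv_zero_of_not_differentiableAt hd

section PositiveSolutions

variable {T : ℝ}

theorem HasW21Deriv.exists_ne_zero_of_eigenvalue_neg {v v' c : ℝ → ℝ} {lam : ℝ} (hT : 0 < T)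
    (hv : HasW21Deriv v v' fun t => -((lam + c t) * v t)) (hpos : ∀ t, 0 < v t)
    (hper : Function.Periodic v T) (hlam : lam < 0) : ∃ t, c t ≠ 0 := by
  by_contra! hc
  refine (hpos 0).not_ge (hv.nonpos_of_periodic hT hper (Eventually.of_forall fun s _ => ?_))
  rw [hc s, add_zero, ← neg_mul]
  exact mul_pos (neg_pos.2 hlam) (hpos s)

theorem HasW21Deriv.pos_of_exists_pos {u u' q γ : ℝ → ℝ} {K : NNReal} (hT : 0 < T)
    (hu : HasW21Deriv u u' fun t => -(q t * γ (u t))) (hper : Function.Periodic u T)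
    (hq : LocallyIntegrable q volume) (hγ : LipschitzWith K γ) (hγ0 : ∀ x ≤ 0, γ x = 0)
    (hpos : ∃ t, 0 < u t) (t : ℝ) : 0 < u t := by
  obtain ⟨r, hr⟩ := hpos
  have hnonneg : ∀ t, 0 ≤ u t := fun t => by
    by_contra! ht
    have hconst := hu.neg.eq_of_periodic_of_nonneg (t₀ := t) hT
      (fun s => congrArg Neg.neg (hper s)) (neg_pos.2 ht) (Eventually.of_forall fun s hs => by
        rw [hγ0 _ (neg_pos.1 (hs s right_mem_uIcc)).le, mul_zero, neg_zero, neg_zero]) r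
    exact (hr.trans_eq (neg_inj.1 hconst)).not_gt ht
  refine (hnonneg t).lt_of_ne' fun h0 => ?_
  have hmin : IsLocalMin u t := Eventually.of_forall fun s => h0.trans_le (hnonneg s)
  have hL : LocallyIntegrable (fun s => |q s| * K) volume :=
    (locallyIntegrable_abs hq).mul_continuous continuous_const
  refine hr.ne' (hu.eq_zero hL (fun s => by positivity) (Eventually.of_forall fun s => ?_) h0
    (hmin.hasDerivAt_eq_zero (hu.hasDerivAt t)) r)
  have hs := hγ.dist_le_mul (u s) 0
  rw [hγ0 0 le_rfl, dist_zero_right, dist_zero_right] at hs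
  rw [abs_neg, abs_mul, mul_assoc]
  exact mul_le_mul_of_nonneg_left hs (abs_nonneg _)

theorem HasW21Deriv.pos_of_eigenvalue_neg {u u' v v' q γ : ℝ → ℝ} {K : NNReal} {lam : ℝ}
    (hT : 0 < T) (hu : HasW21Deriv u u' fun t => -(q t * γ (u t))) (hper : Function.Periodic u T)
    (hq : LocallyIntegrable q volume) (hγ : LipschitzWith K γ) (hγ0 : ∀ x ≤ 0, γ x = 0)
    (hv : HasW21Deriv v v' fun t => -((lam + _root_.deriv (fun x => q t * γ x) (u t)) * v t))
    (hpos : ∀ t, 0 < v t) (hvper : Function.Periodic v T) (hlam : lam < 0) (t : ℝ) : 0 < u t := by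
  obtain ⟨s, hs⟩ := hv.exists_ne_zero_of_eigenvalue_neg hT hpos hvper hlam
  refine hu.pos_of_exists_pos hT hper hq hγ hγ0 ⟨s, not_le.1 fun h => hs ?_⟩ t
  exact deriv_eq_zero_of_forall_le (c := 0) (fun y hy => by rw [hγ0 y hy, mul_zero]) h

end PositiveSolutions

/-! ### The truncated problem for the difference to the given solution -/

/-- The equation `u'' + q(t) γ(u) = 0` with `T`-periodic weight `q` and Lipschitz `γ`, together with
a `T`-periodic solution `sol` and a `T`-periodic lower solution `lower < sol`. -/
structure WeightedProblem where
  T : ℝ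
  T_pos : 0 < T
  q : ℝ → ℝ
  locallyIntegrable_q : LocallyIntegrable q volume
  periodic_q : Function.Periodic q T
  γ : ℝ → ℝ
  K : NNReal
  lipschitzWith_γ : LipschitzWith K γ
  sol : ℝ → ℝ
  sol' : ℝ → ℝ
  hasW21Deriv_sol : HasW21Deriv sol sol' fun t => -(q t * γ (sol t))
  periodic_sol : Function.Periodic sol T
  lower : ℝ → ℝ
  lower' : ℝ → ℝ
  lower'' : ℝ → ℝ
  hasW21Deriv_lower : HasW21Deriv lower lower' lower''
  periodic_lower : Function.Periodic lower T
  lower''_add_nonneg : ∀ᵐ t, 0 ≤ lower'' t + q t * γ (lower t)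
  lower_lt_sol : ∀ t, lower t < sol t

namespace WeightedProblem

variable (E : WeightedProblem) {M : ℝ}

theorem abs_γ_sub_le (x y : ℝ) : |E.γ x - E.γ y| ≤ E.K * |x - y| := by
  simpa only [Real.dist_eq] using E.lipschitzWith_γ.dist_le_mul x y

/-- The increment `γ(sol + y) - γ(sol)`, frozen for `y ≥ M`. -/
noncomputable def truncatedIncrement (M t y : ℝ) : ℝ :=
  E.γ (E.sol t + min y M) - E.γ (E.sol t)

/-- The nonlinearity of the equation for the difference to `sol`, modified above `M` so that the
constant `2 M` becomes an upper solution. -/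
noncomputable def truncated (M t x : ℝ) : ℝ :=
  E.q t * E.truncatedIncrement M t x - E.K * |E.q t| * max (x - M) 0

/-- The primitive of `truncated` in its last variable. -/
noncomputable def truncatedPrimitive (M t x : ℝ) : ℝ :=
  E.q t * (∫ y in (0 : ℝ)..x, E.truncatedIncrement M t y) -
    E.K * |E.q t| * ∫ y in (0 : ℝ)..x, max (y - M) 0

theorem continuous_truncatedIncrement (M : ℝ) :
    Continuous (Function.uncurry (E.truncatedIncrement M)) := by
  have hγ := E.lipschitzWith_γ.continuous
  have hsol := E.hasW21Deriv_sol.continuous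
  simp only [Function.uncurry_def, truncatedIncrement]
  fun_prop

theorem periodic_truncated (M x : ℝ) : Function.Periodic (fun t => E.truncated M t x) E.T :=
  fun t => by simp only [truncated, truncatedIncrement, E.periodic_q t, E.periodic_sol t]

theorem periodic_truncatedPrimitive (M x : ℝ) :
    Function.Periodic (fun t => E.truncatedPrimitive M t x) E.T :=
  fun t => by simp only [truncatedPrimitive, truncatedIncrement, E.periodic_q t, E.periodic_sol t]

theorem truncated_of_le {t x : ℝ} (hx : x ≤ M) :
    E.truncated M t x = E.q t * (E.γ (E.sol t + x) - E.γ (E.sol t)) := by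
  rw [truncated, truncatedIncrement, min_eq_left hx, max_eq_right (sub_nonpos.2 hx), mul_zero,
    sub_zero]

theorem truncated_two_mul_nonpos (hM : 0 ≤ M) (t : ℝ) : E.truncated M t (2 * M) ≤ 0 := by
  have hγ := E.abs_γ_sub_le (E.sol t + M) (E.sol t)
  rw [add_sub_cancel_left, abs_of_nonneg hM] at hγ
  rw [truncated, truncatedIncrement, min_eq_right (by linarith), max_eq_left (by linarith),
    two_mul, add_sub_cancel_right, sub_nonpos]
  calc E.q t * (E.γ (E.sol t + M) - E.γ (E.sol t))
      ≤ |E.q t| * |E.γ (E.sol t + M) - E.γ (E.sol t)| := (le_abs_self _).trans_eq (abs_mul _ _)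
    _ ≤ |E.q t| * (E.K * M) := mul_le_mul_of_nonneg_left hγ (abs_nonneg _)
    _ = E.K * |E.q t| * M := by ring

theorem abs_truncated_sub_le (M t x y : ℝ) :
    |E.truncated M t x - E.truncated M t y| ≤ |E.q t| * (2 * E.K) * |x - y| := by
  have hmin : |min x M - min y M| ≤ |x - y| := by
    simpa using abs_min_sub_min_le_max x M y M
  have hmax : |max (x - M) 0 - max (y - M) 0| ≤ |x - y| := by
    simpa using abs_max_sub_max_le_abs (x - M) (y - M) 0
  have hinc : |E.truncatedIncrement M t x - E.truncatedIncrement M t y| ≤ E.K * |x - y| := by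
    have h := E.abs_γ_sub_le (E.sol t + min x M) (E.sol t + min y M)
    rw [add_sub_add_left_eq_sub] at h
    rw [truncatedIncrement, truncatedIncrement, sub_sub_sub_cancel_right]
    exact h.trans (by gcongr)
  calc |E.truncated M t x - E.truncated M t y|
      = |E.q t * (E.truncatedIncrement M t x - E.truncatedIncrement M t y) -
          E.K * |E.q t| * (max (x - M) 0 - max (y - M) 0)| := by
        rw [truncated, truncated]
        ring_nf
    _ ≤ |E.q t| * |E.truncatedIncrement M t x - E.truncatedIncrement M t y| +
          E.K * |E.q t| * |max (x - M) 0 - max (y - M) 0| := by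
        refine (abs_sub _ _).trans_eq ?_
        rw [abs_mul, abs_mul, abs_of_nonneg (by positivity : 0 ≤ E.K * |E.q t|)]
    _ ≤ |E.q t| * (E.K * |x - y|) + E.K * |E.q t| * |x - y| := by gcongr
    _ = |E.q t| * (2 * E.K) * |x - y| := by ring

theorem hasDerivAt_truncatedPrimitive (M t x : ℝ) :
    HasDerivAt (E.truncatedPrimitive M t) (E.truncated M t x) x := by
  have hprim : ∀ φ : ℝ → ℝ, Continuous φ →
      HasDerivAt (fun x => ∫ y in (0 : ℝ)..x, φ y) (φ x) x := fun φ hφ =>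
    intervalIntegral.integral_hasDerivAt_right (hφ.intervalIntegrable _ _)
      (hφ.stronglyMeasurableAtFilter _ _) hφ.continuousAt
  exact ((hprim _ ((E.continuous_truncatedIncrement M).comp (Continuous.prodMk_right t))).const_mul
    _).sub ((hprim (fun y => max (y - M) 0) (by fun_prop)).const_mul (E.K * |E.q t|))

theorem aestronglyMeasurable_weight_sub {φ ψ : ℝ → ℝ} (hφ : Continuous φ) (hψ : Continuous ψ) :
    AEStronglyMeasurable (fun t => E.q t * φ t - E.K * |E.q t| * ψ t) volume :=
  (E.locallyIntegrable_q.aestronglyMeasurable.mul hφ.aestronglyMeasurable).sub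
    (((locallyIntegrable_abs E.locallyIntegrable_q).aestronglyMeasurable.const_mul _).mul
      hψ.aestronglyMeasurable)

/-- The problem for `kT`-periodic differences to `sol`. -/
noncomputable def truncatedProblem {k : ℕ} (hk : 0 < k) (hM : 0 ≤ M) : BarrierProblem where
  P := k * E.T
  P_pos := mul_pos (Nat.cast_pos.2 hk) E.T_pos
  L t := |E.q t| * (2 * E.K)
  locallyIntegrable_L := (locallyIntegrable_abs E.locallyIntegrable_q).mul_continuous
    continuous_const
  L_nonneg t := by positivity
  periodic_L := (E.periodic_q.nat_mul k).comp fun x => |x| * (2 * E.K)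
  f := E.truncated M
  f_zero t := by rw [truncated_of_le _ hM, add_zero, sub_self, mul_zero]
  abs_f_sub_le := E.abs_truncated_sub_le M
  f_add_period t x := (E.periodic_truncated M x).nat_mul k t
  aestronglyMeasurable_f u hu := E.aestronglyMeasurable_weight_sub
    ((E.continuous_truncatedIncrement M).comp (continuous_id.prodMk hu)) (by fun_prop)
  F := E.truncatedPrimitive M
  F_zero t := by simp [truncatedPrimitive]
  hasDerivAt_F := E.hasDerivAt_truncatedPrimitive M
  aestronglyMeasurable_F u hu := E.aestronglyMeasurable_weight_sub
    ((intervalIntegral.continuous_parametric_primitive_of_continuous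
      (E.continuous_truncatedIncrement M)).comp (continuous_id.prodMk hu))
    ((intervalIntegral.continuous_primitive
      (fun a b => Continuous.intervalIntegrable (by fun_prop) a b) 0).comp hu)
  lower t := E.lower t - E.sol t
  lower' := _
  lower'' := _
  hasW21Deriv_lower := E.hasW21Deriv_lower.sub E.hasW21Deriv_sol
  periodic_lower := (E.periodic_lower.nat_mul k).sub (E.periodic_sol.nat_mul k)
  lower''_add_f_nonneg := by
    filter_upwards [E.lower''_add_nonneg] with t ht
    rw [truncated_of_le _ ((sub_nonpos.2 (E.lower_lt_sol t).le).trans hM), add_sub_cancel]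
    linarith
  upper := 2 * M
  f_upper_nonpos := E.truncated_two_mul_nonpos hM

end WeightedProblem

theorem BarrierProblem.IsNodalSolution.abs_le {S : BarrierProblem} {e : ℝ → ℝ} {A : ℝ} {n : ℕ}
    (he : S.IsNodalSolution e) (hA : ∀ t, -S.lower t ≤ A)
    (hn : ∫ s in (0 : ℝ)..S.P, (1 + S.L s) ≤ n / 2) (t : ℝ) : |e t| ≤ 2 ^ n * A := by
  have hD := he.toAdmissible.hasW21Deriv_of_step_eq he.step_eq
  obtain ⟨r, hr⟩ := he.exists_neg
  obtain ⟨-, ⟨t₀, rfl⟩, hleast⟩ := (he.periodic.compact_of_continuous S.P_pos.ne'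
    he.continuous).exists_isLeast (range_nonempty e)
  have hmin : ∀ t, e t₀ ≤ e t := fun t => hleast (mem_range_self t)
  have hd0 : deriv e t₀ = 0 := IsLocalMin.deriv_eq_zero (Eventually.of_forall hmin)
  have habs : |e t₀| ≤ A := by
    rw [abs_of_neg ((hmin r).trans_lt hr)]
    linarith [he.lower_le t₀, hA t₀]
  obtain ⟨s, hs, hts⟩ := he.periodic.exists_mem_Ico S.P_pos t t₀
  have hint : ∫ x in t₀..s, (1 + S.L x) ≤ n / 2 := by
    have hLI : LocallyIntegrable (fun x => 1 + S.L x) volume :=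
      continuous_const.locallyIntegrable.add S.locallyIntegrable_L
    have hper := (S.periodic_L.comp (1 + ·)).intervalIntegral_add_eq t₀ 0
    rw [zero_add] at hper
    refine (intervalIntegral.integral_mono_interval le_rfl hs.1 hs.2.le (Eventually.of_forall
      fun x => ?_) (intervalIntegrable_of_locallyIntegrable hLI _ _)).trans (hper.trans_le hn)
    exact add_nonneg zero_le_one (S.L_nonneg x)
  have hgrowth := hD.norm_le_two_pow_mul S.locallyIntegrable_L S.L_nonneg
    (Eventually.of_forall fun x => (abs_neg _).trans_le (S.abs_f_le x (e x))) n hs.1 hint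
  rw [hd0, abs_zero, add_zero] at hgrowth
  rw [hts]
  calc |e s| ≤ |e s| + |deriv e s| := le_add_of_nonneg_right (abs_nonneg _)
    _ ≤ 2 ^ n * |e t₀| := hgrowth
    _ ≤ 2 ^ n * A := by gcongr

namespace WeightedProblem

variable {E : WeightedProblem} {k : ℕ} {hk : 0 < k} {M : ℝ} {hM : 0 ≤ M} {e : ℝ → ℝ}

theorem isSol_sol_add (he : (E.truncatedProblem hk hM).IsNodalSolution e) (hle : ∀ t, e t ≤ M) :
    IsSol (fun t x => E.q t * E.γ x) fun t => E.sol t + e t := by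
  refine isSol_iff_exists_hasW21Deriv.2 ⟨_, (E.hasW21Deriv_sol.add
    (he.toAdmissible.hasW21Deriv_of_step_eq he.step_eq)).congr_ae
    (Eventually.of_forall fun t => ?_)⟩
  change -(E.q t * E.γ (E.sol t)) + -E.truncated M t (e t) = _
  rw [E.truncated_of_le (hle t)]
  ring

theorem isSubharmonic_sol_add (he : (E.truncatedProblem hk hM).IsNodalSolution e) :
    IsSubharmonic (fun t => E.sol t + e t) E.T k := by
  refine ⟨(E.periodic_sol.nat_mul k).add he.periodic, fun l hl hlk hper => ?_⟩
  refine he.not_periodic (D := l * E.T) (mul_pos (Nat.cast_pos.2 hl) E.T_pos)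
    (mul_lt_mul_of_pos_right (Nat.cast_lt.2 hlk) E.T_pos) ?_
  simpa using hper.sub (E.periodic_sol.nat_mul l)

theorem ncard_setOf_sol_add_eq (he : (E.truncatedProblem hk hM).IsNodalSolution e) :
    {t | t ∈ Ico (0 : ℝ) (k * E.T) ∧ E.sol t + e t = E.sol t}.ncard = 2 := by
  simp only [add_eq_left]
  exact he.ncard_zeros

theorem lower_le_sol_add (he : (E.truncatedProblem hk hM).IsNodalSolution e) (t : ℝ) :
    E.lower t ≤ E.sol t + e t :=
  sub_le_iff_le_add'.1 (he.lower_le t)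

theorem action_comp_add_int_mul (he : (E.truncatedProblem hk hM).IsNodalSolution e) (l : ℤ) :
    (E.truncatedProblem hk hM).action (fun t => e (t + l * E.T)) =
      (E.truncatedProblem hk hM).action e := by
  let φ : ℝ → ℝ := fun t => 1 / 2 * deriv e t ^ 2 - E.truncatedPrimitive M t (e t)
  have hφ : Function.Periodic φ (k * E.T) := fun t => by
    have hF := (E.periodic_truncatedPrimitive M (e t)).nat_mul k t
    have he' : e (t + k * E.T) = e t := he.periodic t
    have hd : deriv e (t + k * E.T) = deriv e t :=
      (he.toAdmissible.hasW21Deriv_of_step_eq he.step_eq).periodic_deriv he.periodic t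
    simp only [φ, he', hd, hF]
  have hshift : ∀ t, 1 / 2 * deriv (fun t => e (t + l * E.T)) t ^ 2 -
      E.truncatedPrimitive M t (e (t + l * E.T)) = φ (t + l * E.T) := fun t => by
    have hF := (E.periodic_truncatedPrimitive M (e (t + l * E.T))).int_mul l t
    simp only [φ, deriv_comp_add_const, hF]
  calc (E.truncatedProblem hk hM).action (fun t => e (t + l * E.T))
      = ∫ t in (0 : ℝ)..k * E.T, φ (t + l * E.T) :=
        intervalIntegral.integral_congr fun t _ => hshift t
    _ = ∫ t in l * E.T..l * E.T + k * E.T, φ t := by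
        rw [intervalIntegral.integral_comp_add_right, zero_add, add_comm]
    _ = ∫ t in (0 : ℝ)..k * E.T, φ t := by
        rw [hφ.intervalIntegral_add_eq _ 0, zero_add]

end WeightedProblem

/-! ### Unstable solutions and profiles of negative action -/

section QuadraticForm

variable {v v' c X : ℝ → ℝ} {P : ℝ} (hv : HasW21Deriv v v' fun t => -(c t * v t))
  (hX : ContDiff ℝ 1 X)
include hv hX

theorem HasW21Deriv.hasW11Deriv_mul_mul_sq : HasW11Deriv (fun t => v' t * (v t * X t ^ 2))
    fun t => (v' t * X t + v t * _root_.deriv X t) ^ 2 - c t * (v t * X t) ^ 2 -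
      (v t * _root_.deriv X t) ^ 2 := by
  have hX' : HasW11Deriv X (_root_.deriv X) := .of_contDiff hX
  simp only [sq (X _)]
  exact (hv.deriv.mul (hv.hasW11Deriv.mul (hX'.mul hX'))).congr_ae (Eventually.of_forall
    fun t => by ring)

theorem HasW21Deriv.locallyIntegrable_deriv_mul_sq_sub :
    LocallyIntegrable (fun t => (v' t * X t + v t * _root_.deriv X t) ^ 2 - c t * (v t * X t) ^ 2)
      volume := by
  have hcont : Continuous fun t => (v t * _root_.deriv X t) ^ 2 :=
    (hv.continuous.mul (hX.continuous_deriv le_rfl)).pow 2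
  simpa only [Pi.add_def, sub_add_cancel] using
    (hv.hasW11Deriv_mul_mul_sq hX).locallyIntegrable.add hcont.locallyIntegrable

theorem HasW21Deriv.integral_deriv_mul_sq_sub (hvP : Function.Periodic v P)
    (hXP : Function.Periodic X P) :
    ∫ t in (0 : ℝ)..P, ((v' t * X t + v t * _root_.deriv X t) ^ 2 - c t * (v t * X t) ^ 2) =
      ∫ t in (0 : ℝ)..P, (v t * _root_.deriv X t) ^ 2 := by
  have hcont : Continuous fun t => (v t * _root_.deriv X t) ^ 2 :=
    (hv.continuous.mul (hX.continuous_deriv le_rfl)).pow 2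
  rw [← sub_eq_zero, ← intervalIntegral.integral_sub (intervalIntegrable_of_locallyIntegrable
    (hv.locallyIntegrable_deriv_mul_sq_sub hX) _ _) (hcont.intervalIntegrable _ _)]
  refine (hv.hasW11Deriv_mul_mul_sq hX).integral_eq_zero_of_periodic fun t => ?_
  simp only [hv.periodic_deriv hvP t, hvP t, hXP t]

end QuadraticForm

theorem abs_sub_le_of_forall_hasDerivAt {f f' : ℝ → ℝ} {C x : ℝ}
    (hf : ∀ y, |y| ≤ |x| → HasDerivAt f (f' y) y) (hC : ∀ y, |y| ≤ |x| → |f' y| ≤ C) :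
    |f x - f 0| ≤ C * |x| := by
  simpa only [Real.norm_eq_abs, sub_zero] using
    (convex_Icc (-|x|) |x|).norm_image_sub_le_of_norm_hasDerivWithin_le
      (fun y hy => (hf y (abs_le.2 hy)).hasDerivWithinAt) (fun y hy => hC y (abs_le.2 hy))
      (abs_le.1 (abs_zero.trans_le (abs_nonneg x))) (abs_le.1 le_rfl)

theorem exists_pos_forall_abs_add_sub_le {s : Set ℝ} (hs : IsCompact s) {f : ℝ → ℝ}
    (hf : Continuous f) {η : ℝ} (hη : 0 < η) :
    ∃ δ > 0, ∀ x ∈ s, ∀ y, |y| ≤ δ → |f (x + y) - f x| ≤ η := by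
  obtain ⟨δ, hδ, h⟩ := Metric.mem_uniformity_dist.1
    (hs.uniformContinuousAt_of_continuousAt f (fun x _ => hf.continuousAt)
      (Metric.dist_mem_uniformity hη))
  refine ⟨δ / 2, half_pos hδ, fun x hx y hy => ?_⟩
  have hdist : dist x (x + y) < δ := by
    rw [dist_self_add_right, Real.norm_eq_abs]
    exact hy.trans_lt (half_lt_self hδ)
  rw [abs_sub_comm]
  exact (h hdist hx).le

/-- A `WeightedProblem` whose solution `sol` is positive and linearly unstable: the linearization
`v'' + (μ + q γ'(sol)) v = 0` has a positive `T`-periodic solution `v` for some `μ < 0`. -/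
structure UnstableProblem extends WeightedProblem where
  γ' : ℝ → ℝ
  continuous_γ' : Continuous γ'
  hasDerivAt_γ : ∀ {x}, 0 < x → HasDerivAt γ (γ' x) x
  sol_pos : ∀ t, 0 < sol t
  μ : ℝ
  μ_neg : μ < 0
  v : ℝ → ℝ
  v' : ℝ → ℝ
  hasW21Deriv_v : HasW21Deriv v v' fun t => -((μ + q t * γ' (sol t)) * v t)
  v_pos : ∀ t, 0 < v t
  periodic_v : Function.Periodic v T

namespace UnstableProblem

variable (E : UnstableProblem) {M : ℝ}

theorem exists_pos_forall_abs_γ_sub_sub_le {η : ℝ} (hη : 0 < η) : ∃ δ > 0, ∀ t y, |y| ≤ δ →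
    |E.γ (E.sol t + y) - E.γ (E.sol t) - E.γ' (E.sol t) * y| ≤ η * |y| := by
  obtain ⟨m, hm, hmle⟩ := exists_pos_forall_le_of_periodic E.T_pos E.periodic_sol
    E.hasW21Deriv_sol.continuous E.sol_pos
  obtain ⟨δ, hδ, hγ'⟩ := exists_pos_forall_abs_add_sub_le (E.periodic_sol.compact_of_continuous
    E.T_pos.ne' E.hasW21Deriv_sol.continuous) E.continuous_γ' hη
  refine ⟨min δ (m / 2), lt_min hδ (half_pos hm), fun t y hy => ?_⟩
  have hderiv : ∀ z, |z| ≤ |y| → HasDerivAt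
      (fun z => E.γ (E.sol t + z) - E.γ (E.sol t) - E.γ' (E.sol t) * z)
      (E.γ' (E.sol t + z) - E.γ' (E.sol t)) z := fun z hz => by
    have hz' := (abs_le.1 (hz.trans (hy.trans (min_le_right _ _)))).1
    have hγ := (E.hasDerivAt_γ (by linarith [hmle t] : 0 < E.sol t + z)).comp_const_add (E.sol t) z
    exact (hγ.sub_const _).sub (hasDerivAt_const_mul _)
  have h := abs_sub_le_of_forall_hasDerivAt hderiv fun z hz =>
    hγ' _ (mem_range_self t) z (hz.trans (hy.trans (min_le_left _ _)))
  simpa only [add_zero, sub_self, mul_zero, sub_zero] using h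

theorem exists_pos_forall_le_truncatedPrimitive {η : ℝ} (hη : 0 < η) :
    ∃ δ > 0, ∀ M, δ ≤ M → ∀ t x, |x| ≤ δ →
      1 / 2 * (E.q t * E.γ' (E.sol t)) * x ^ 2 - η * |E.q t| * x ^ 2 ≤
        E.truncatedPrimitive M t x := by
  obtain ⟨δ, hδ, hγ⟩ := E.exists_pos_forall_abs_γ_sub_sub_le hη
  refine ⟨δ, hδ, fun M hM t x hx => ?_⟩
  have hderiv : ∀ y, |y| ≤ |x| → HasDerivAt
      (fun y => E.truncatedPrimitive M t y - 1 / 2 * (E.q t * E.γ' (E.sol t)) * y ^ 2)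
      (E.truncated M t y - E.q t * E.γ' (E.sol t) * y) y := fun y _ => by
    refine ((E.hasDerivAt_truncatedPrimitive M t y).sub ((hasDerivAt_pow 2 y).const_mul
      (1 / 2 * (E.q t * E.γ' (E.sol t))))).congr_deriv ?_
    simp only [Nat.cast_ofNat, Nat.add_one_sub_one, pow_one]
    ring
  have hbound : ∀ y, |y| ≤ |x| →
      |E.truncated M t y - E.q t * E.γ' (E.sol t) * y| ≤ |E.q t| * (η * |x|) := fun y hy => by
    rw [E.truncated_of_le ((le_abs_self y).trans (hy.trans (hx.trans hM))), mul_assoc, ← mul_sub,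
      abs_mul]
    gcongr
    exact (hγ t y (hy.trans hx)).trans (by gcongr)
  have h := (abs_le.1 (abs_sub_le_of_forall_hasDerivAt hderiv hbound)).1
  have h0 : E.truncatedPrimitive M t 0 = 0 := by simp [WeightedProblem.truncatedPrimitive]
  have hsq : |E.q t| * (η * |x|) * |x| = η * |E.q t| * x ^ 2 := by
    rw [← sq_abs x]
    ring
  rw [hsq, h0] at h
  linarith

theorem exists_eigenfunction : ∃ κ > 0, ∀ a > 0, ∃ w w' : ℝ → ℝ,
    HasW21Deriv w w' (fun t => -((E.μ + E.q t * E.γ' (E.sol t)) * w t)) ∧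
      Function.Periodic w E.T ∧ ∀ t, w t ∈ Icc a (κ * a) := by
  obtain ⟨m, hm, hmle⟩ := exists_pos_forall_le_of_periodic E.T_pos E.periodic_v
    E.hasW21Deriv_v.continuous E.v_pos
  obtain ⟨B, hB⟩ := (E.periodic_v.isBounded_of_continuous E.T_pos.ne'
    E.hasW21Deriv_v.continuous).bddAbove
  have hle : ∀ t, E.v t ≤ B := fun t => hB (mem_range_self t)
  refine ⟨B / m, div_pos ((E.v_pos 0).trans_le (hle 0)) hm, fun a ha =>
    ⟨_, _, (E.hasW21Deriv_v.const_mul (a / m)).congr_ae (Eventually.of_forall fun t => ?_),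
      E.periodic_v.comp (a / m * ·), fun t => ⟨?_, ?_⟩⟩⟩
  · ring
  · rw [div_mul_eq_mul_div, le_div_iff₀ hm]
    exact mul_le_mul_of_nonneg_left (hmle t) ha.le
  · rw [div_mul_eq_mul_div, div_mul_eq_mul_div, mul_comm B]
    gcongr
    exact hle t

section Action

variable {k : ℕ} {hk : 0 < k} {hM : 0 ≤ M} {w w' : ℝ → ℝ} {a κ η δ : ℝ}
  (hw : HasW21Deriv w w' fun t => -((E.μ + E.q t * E.γ' (E.sol t)) * w t))
  (hwT : Function.Periodic w E.T) (ha : 0 < a) (hmem : ∀ t, w t ∈ Icc a (κ * a))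
  (hη : 0 ≤ η) (hκδ : κ * a ≤ δ)
  (hF : ∀ t x, |x| ≤ δ → 1 / 2 * (E.q t * E.γ' (E.sol t)) * x ^ 2 - η * |E.q t| * x ^ 2 ≤
    E.truncatedPrimitive M t x)
include ha hmem hη hκδ hF

theorem action_integrand_le {x x' : ℝ} (hx : |x| ≤ 1) (t : ℝ) :
    1 / 2 * (w' t * x + w t * x') ^ 2 - E.truncatedPrimitive M t (w t * x) ≤
      1 / 2 * ((w' t * x + w t * x') ^ 2 - (E.μ + E.q t * E.γ' (E.sol t)) * (w t * x) ^ 2) +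
        (E.μ * a ^ 2 / 2 * x ^ 2 + η * (κ * a) ^ 2 * |E.q t|) := by
  have hw0 : 0 ≤ w t := ha.le.trans (hmem t).1
  have habs : |w t * x| ≤ κ * a := by
    rw [abs_mul, abs_of_nonneg hw0]
    exact (mul_le_of_le_one_right hw0 hx).trans (hmem t).2
  have hprim := hF t _ (habs.trans hκδ)
  have hlow : E.μ * (w t * x) ^ 2 ≤ E.μ * (a ^ 2 * x ^ 2) := by
    rw [mul_pow]
    refine mul_le_mul_of_nonpos_left ?_ E.μ_neg.le
    gcongr
    exact (hmem t).1
  have hup : η * |E.q t| * (w t * x) ^ 2 ≤ η * |E.q t| * (κ * a) ^ 2 := by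
    rw [← sq_abs (w t * x)]
    gcongr
  linarith

include hw hwT

theorem action_mul_le {X : ℝ → ℝ} (hX : ContDiff ℝ 1 X) (hXP : Function.Periodic X (k * E.T))
    (hX1 : ∀ t, |X t| ≤ 1) :
    (E.truncatedProblem hk hM).action (fun t => w t * X t) ≤
      1 / 2 * (∫ t in (0 : ℝ)..k * E.T, (w t * deriv X t) ^ 2) +
        (E.μ * a ^ 2 / 2 * (∫ t in (0 : ℝ)..k * E.T, X t ^ 2) +
          η * (κ * a) ^ 2 * ∫ t in (0 : ℝ)..k * E.T, |E.q t|) := by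
  have hderiv : ∀ t, deriv (fun t => w t * X t) t = w' t * X t + w t * deriv X t := fun t =>
    ((hw.hasDerivAt t).mul (hX.differentiable one_ne_zero t).hasDerivAt).deriv
  have hquad := (hw.locallyIntegrable_deriv_mul_sq_sub hX).continuous_mul
    (continuous_const (y := (1 / 2 : ℝ)))
  have hsq : LocallyIntegrable (fun t => E.μ * a ^ 2 / 2 * X t ^ 2) volume :=
    (continuous_const.mul (hX.continuous.pow 2)).locallyIntegrable
  have hq := (locallyIntegrable_abs E.locallyIntegrable_q).continuous_mul
    (continuous_const (y := η * (κ * a) ^ 2))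
  have hrest : LocallyIntegrable
      (fun t => E.μ * a ^ 2 / 2 * X t ^ 2 + η * (κ * a) ^ 2 * |E.q t|) volume := hsq.add hq
  have hint := fun {f : ℝ → ℝ} (hf : LocallyIntegrable f volume) =>
    intervalIntegrable_of_locallyIntegrable hf 0 (k * E.T)
  have hle := integral_mono_of_ae_Icc
    ((E.truncatedProblem hk hM).locallyIntegrable_action (hw.contDiff.mul hX))
    (hquad.add hrest) (mul_nonneg k.cast_nonneg E.T_pos.le) (Eventually.of_forall
      fun t _ => (congrArg (1 / 2 * · ^ 2 - _) (hderiv t)).trans_le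
        (E.action_integrand_le ha hmem hη hκδ hF (hX1 t) t))
  refine hle.trans_eq ?_
  simp only [Pi.add_apply]
  rw [intervalIntegral.integral_add (hint hquad) (hint hrest),
    intervalIntegral.integral_add (hint hsq) (hint hq), intervalIntegral.integral_const_mul,
    intervalIntegral.integral_const_mul, intervalIntegral.integral_const_mul,
    hw.integral_deriv_mul_sq_sub hX (hwT.nat_mul k) hXP]

theorem action_mul_cosProfile_le (hω : (κ * (2 * Real.pi / (k * E.T))) ^ 2 ≤ -E.μ / 16)
    (hq : η * κ ^ 2 * (∫ t in (0 : ℝ)..k * E.T, |E.q t|) ≤ -E.μ * (k * E.T) / 32) {σ : ℝ}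
    (hσ : |σ| ≤ 1) (θ : ℝ) :
    (E.truncatedProblem hk hM).action (fun t => w t * cosProfile (k * E.T) σ θ t) ≤
      E.μ * a ^ 2 * (k * E.T) / 16 := by
  have hP : 0 < k * E.T := mul_pos (Nat.cast_pos.2 hk) E.T_pos
  have hkin := integral_mul_deriv_cosProfile_sq_le hP hσ θ hw.continuous fun t =>
    (abs_of_nonneg (ha.le.trans (hmem t).1)).trans_le (hmem t).2
  have hact := E.action_mul_le (hk := hk) (hM := hM) hw hwT ha hmem hη hκδ hF
    (contDiff_cosProfile _ σ θ) (periodic_cosProfile hP.ne' σ θ) (abs_cosProfile_le_one hσ θ)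
  have hpot := mul_le_mul_of_nonpos_left (div_four_le_integral_cosProfile_sq hP σ θ)
    (div_nonpos_of_nonpos_of_nonneg (mul_nonpos_of_nonpos_of_nonneg E.μ_neg.le (sq_nonneg a))
      zero_le_two)
  have hfreq := mul_le_mul_of_nonneg_right hω (by positivity : 0 ≤ a ^ 2 * (k * E.T))
  have herr := mul_le_mul_of_nonneg_right hq (sq_nonneg a)
  linarith

end Action

end UnstableProblem

/-! ### Subharmonic solutions -/

namespace WeightedProblem

variable (E : WeightedProblem) {k : ℕ} (hk : 0 < k)

theorem exists_forall_abs_le_of_isNodalSolution : ∃ A, ∀ M (hM : 0 ≤ M) e,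
    (E.truncatedProblem hk hM).IsNodalSolution e → ∀ t, |e t| ≤ A := by
  obtain ⟨A, hA⟩ := ((E.periodic_sol.sub E.periodic_lower).isBounded_of_continuous E.T_pos.ne'
    (E.hasW21Deriv_sol.continuous.sub E.hasW21Deriv_lower.continuous)).bddAbove
  obtain ⟨n, hn⟩ := exists_nat_ge (2 * ∫ s in (0 : ℝ)..k * E.T, (1 + |E.q s| * (2 * E.K)))
  refine ⟨2 ^ n * A, fun M hM e he => he.abs_le (fun t => ?_) ?_⟩
  · exact (neg_sub _ _).trans_le (hA (mem_range_self t))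
  · exact (le_div_iff₀' two_pos).2 hn

theorem exists_isNodalSolution_pair {M : ℝ} (hM : 0 ≤ M)
    (X : (E.truncatedProblem hk hM).SweepingFamily) :
    ∃ e₁ e₂, (E.truncatedProblem hk hM).IsNodalSolution e₁ ∧
      (E.truncatedProblem hk hM).IsNodalSolution e₂ ∧
      ¬∃ l : ℤ, e₂ = fun t => e₁ (t + l * E.T) := by
  by_contra! hclass
  obtain ⟨e, he⟩ : ∃ e, (E.truncatedProblem hk hM).IsNodalSolution e := by
    by_contra! hempty
    refine X.not_countable_setOf_isNodalSolution (c := 0) (fun e he => absurd he (hempty e)) ?_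
    exact countable_empty.mono fun e he => hempty e he
  refine X.not_countable_setOf_isNodalSolution
    (c := (E.truncatedProblem hk hM).action e) (fun e' he' => ?_) ?_
  · obtain ⟨l, rfl⟩ := hclass e e' he he'
    exact action_comp_add_int_mul he l
  · exact (countable_range fun (l : ℤ) t => e (t + l * E.T)).mono fun e' he' =>
      (hclass e e' he he').imp fun l hl => hl.symm

end WeightedProblem

namespace UnstableProblem

open WeightedProblem

variable (E : UnstableProblem)

theorem eventually_sweepingFamily : ∀ᶠ k : ℕ in atTop, ∀ hk : 0 < k, ∃ δ, ∀ M (hM : 0 ≤ M),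
    δ ≤ M → Nonempty (E.truncatedProblem hk hM).SweepingFamily := by
  obtain ⟨κ, hκ, hfun⟩ := E.exists_eigenfunction
  have hlim : Tendsto (fun k : ℕ => (κ * (2 * Real.pi / (k * E.T))) ^ 2) atTop (nhds 0) := by
    have h := ((tendsto_const_div_atTop_nhds_zero_nat (2 * Real.pi / E.T)).const_mul κ).pow 2
    simpa only [mul_zero, zero_pow two_ne_zero, div_div, mul_comm E.T] using h
  have hμ : 0 < -E.μ / 16 := div_pos (neg_pos.2 E.μ_neg) (by norm_num)
  filter_upwards [hlim.eventually_le_const hμ] with k hω hk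
  have hP : 0 < k * E.T := mul_pos (Nat.cast_pos.2 hk) E.T_pos
  obtain ⟨η, hη, hq⟩ : ∃ η > 0,
      η * κ ^ 2 * (∫ t in (0 : ℝ)..k * E.T, |E.q t|) ≤ -E.μ * (k * E.T) / 32 := by
    have hb : 0 < -E.μ * (k * E.T) / 32 := by linarith [mul_pos hμ hP]
    simp only [mul_assoc]
    exact (exists_pos_mul_lt hb _).imp fun η h => ⟨h.1, (mul_comm _ _).trans_le h.2.le⟩
  obtain ⟨δ, hδ, hF⟩ := E.exists_pos_forall_le_truncatedPrimitive hη
  obtain ⟨m, hm, hmle⟩ := exists_pos_forall_le_of_periodic E.T_pos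
    (E.periodic_sol.sub E.periodic_lower)
    (E.hasW21Deriv_sol.continuous.sub E.hasW21Deriv_lower.continuous)
    fun t => sub_pos.2 (E.lower_lt_sol t)
  have ha : 0 < min δ m / κ := div_pos (lt_min hδ hm) hκ
  have hκa : κ * (min δ m / κ) = min δ m := mul_div_cancel₀ _ hκ.ne'
  obtain ⟨w, w', hw, hwT, hmem⟩ := hfun _ ha
  have hw_le : ∀ t, w t ≤ min δ m := fun t => (hmem t).2.trans_eq hκa
  refine ⟨δ, fun M hM hδM => ⟨.ofProfile _ (v := w) (c := E.μ * (min δ m / κ) ^ 2 * (k * E.T) / 16)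
    (fun t => ha.trans_le (hmem t).1) hw.contDiff (hwT.nat_mul k) (fun t => ?_) (fun t => ?_) ?_
    fun σ θ hσ => E.action_mul_cosProfile_le hw hwT ha hmem hη.le (hκa.trans_le (min_le_left _ _))
      (hF M hδM) hω hq hσ θ⟩⟩
  · change E.lower t - E.sol t ≤ -w t
    have hm_le : m ≤ E.sol t - E.lower t := hmle t
    linarith [(hw_le t).trans (min_le_right _ _)]
  · change w t ≤ 2 * M
    linarith [(hw_le t).trans (min_le_left _ _)]
  · linarith [mul_pos (mul_pos hμ (pow_pos ha 2)) hP]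

theorem eventually_exists_pair : ∀ᶠ k : ℕ in atTop, ∃ u₁ u₂ : ℝ → ℝ,
    (IsSol (fun t x => E.q t * E.γ x) u₁ ∧ IsSubharmonic u₁ E.T k ∧
      {t | t ∈ Ico (0 : ℝ) (k * E.T) ∧ u₁ t = E.sol t}.ncard = 2 ∧ ∀ t, E.lower t ≤ u₁ t) ∧
    (IsSol (fun t x => E.q t * E.γ x) u₂ ∧ IsSubharmonic u₂ E.T k ∧
      {t | t ∈ Ico (0 : ℝ) (k * E.T) ∧ u₂ t = E.sol t}.ncard = 2 ∧ ∀ t, E.lower t ≤ u₂ t) ∧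
    ¬SameClass u₁ u₂ E.T := by
  filter_upwards [E.eventually_sweepingFamily, eventually_gt_atTop 0] with k hsweep hk
  obtain ⟨A, hA⟩ := E.exists_forall_abs_le_of_isNodalSolution hk
  obtain ⟨δ, hδ⟩ := hsweep hk
  have hM : 0 ≤ max 0 (max A δ) := le_max_left _ _
  obtain ⟨X⟩ := hδ _ hM ((le_max_right A δ).trans (le_max_right _ _))
  obtain ⟨e₁, e₂, he₁, he₂, hne⟩ := E.exists_isNodalSolution_pair hk hM X
  have hle : ∀ e, (E.truncatedProblem hk hM).IsNodalSolution e → ∀ t, e t ≤ max 0 (max A δ) :=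
    fun e he t => (le_abs_self _).trans ((hA _ hM e he t).trans
      ((le_max_left A δ).trans (le_max_right _ _)))
  refine ⟨fun t => E.sol t + e₁ t, fun t => E.sol t + e₂ t,
    ⟨isSol_sol_add he₁ (hle e₁ he₁), isSubharmonic_sol_add he₁, ncard_setOf_sol_add_eq he₁,
      lower_le_sol_add he₁⟩,
    ⟨isSol_sol_add he₂ (hle e₂ he₂), isSubharmonic_sol_add he₂, ncard_setOf_sol_add_eq he₂,
      lower_le_sol_add he₂⟩, fun ⟨l, hl⟩ => hne ⟨l, funext fun t => ?_⟩⟩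
  have hsol : E.sol (t + l * E.T) = E.sol t := E.periodic_sol.int_mul l t
  exact add_left_cancel ((hl t).trans (congrArg (· + _) hsol))

end UnstableProblem

theorem stmt4_general (T : ℝ) (hT : 0 < T) (q : ℝ → ℝ)
    (hqper : Function.Periodic q T)
    (hqloc : LocallyIntegrable q volume)
    (g : ℝ → ℝ) (hg : ContDiffOn ℝ 1 g (Ici 0))
    (hg0 : g 0 = 0)
    (R : ℝ) (hR : 0 ≤ R)
    (ustar : ℝ → ℝ)
    (hustar : IsSol (hExt q g R) ustar) (hustarper : Function.Periodic ustar T)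
    (heig : ∃ lam : ℝ, lam < 0 ∧ ∃ v : ℝ → ℝ, (∀ t, 0 < v t) ∧ Function.Periodic v T ∧
      IsSol (fun t s => (lam + deriv (fun x => hExt q g R t x) (ustar t)) * s) v)
    (α : ℝ → ℝ) (hαper : Function.Periodic α T)
    (hαlow : ∃ α' w : ℝ → ℝ,
      (∀ t, HasDerivAt α (α' t) t) ∧
      LocallyIntegrable w volume ∧
      (∀ t, α' t = α' 0 + ∫ s in (0 : ℝ)..t, w s) ∧
      (∀ᵐ t, 0 ≤ w t + hExt q g R t (α t)))
    (hαlt : ∀ t, α t < ustar t) :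
    ∃ kstar : ℕ, 1 ≤ kstar ∧ ∀ k : ℕ, kstar ≤ k →
      ∃ mk : ℕ, 1 ≤ mk ∧ ∀ j : ℕ, Nat.Coprime j k → 1 ≤ j → j ≤ mk →
        ∃ u₁ u₂ : ℝ → ℝ,
          (IsSol (hExt q g R) u₁ ∧ IsSubharmonic u₁ T k ∧
            {t | t ∈ Ico (0 : ℝ) ((k : ℝ) * T) ∧ u₁ t = ustar t}.ncard = 2 * j ∧
            ∀ t, α t ≤ u₁ t) ∧
          (IsSol (hExt q g R) u₂ ∧ IsSubharmonic u₂ T k ∧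
            {t | t ∈ Ico (0 : ℝ) ((k : ℝ) * T) ∧ u₂ t = ustar t}.ncard = 2 * j ∧
            ∀ t, α t ≤ u₂ t) ∧
          ¬ SameClass u₁ u₂ T := by
  obtain ⟨K, hK⟩ := exists_lipschitzWith_affineExtension hg hR
  simp only [hExt_eq_mul_affineExtension hg hg0 hR] at *
  obtain ⟨u', hu⟩ := isSol_iff_exists_hasW21Deriv.1 hustar
  obtain ⟨lam, hlam, v, hvpos, hvper, hvsol⟩ := heig
  obtain ⟨v', hv⟩ := isSol_iff_exists_hasW21Deriv.1 hvsol
  obtain ⟨α', w, hα, hw, hα', hlow⟩ := hαlow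
  have hpos := hu.pos_of_eigenvalue_neg hT hustarper hqloc hK (fun _ => affineExtension_of_nonpos)
    hv hvpos hvper hlam
  have hlin : ∀ t, deriv (fun x => q t * affineExtension g R x) (ustar t) =
      q t * affineExtensionDeriv g R (ustar t) := fun t =>
    ((hasDerivAt_affineExtension hg (hpos t)).const_mul (q t)).deriv
  simp only [hlin] at hv
  let E : UnstableProblem :=
    { T, q, K, v, v', γ := affineExtension g R, sol := ustar, sol' := u', lower := α, lower' := α'
      lower'' := w, γ' := affineExtensionDeriv g R, μ := lam, T_pos := hT, periodic_q := hqper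
      locallyIntegrable_q := hqloc, lipschitzWith_γ := hK, hasW21Deriv_sol := hu
      periodic_sol := hustarper, hasW21Deriv_lower := ⟨hα, .of_eq_add_integral hw hα'⟩
      periodic_lower := hαper, lower''_add_nonneg := hlow, lower_lt_sol := hαlt
      continuous_γ' := continuous_affineExtensionDeriv hg, sol_pos := hpos, μ_neg := hlam
      hasDerivAt_γ := hasDerivAt_affineExtension hg, hasW21Deriv_v := hv, v_pos := hvpos
      periodic_v := hvper }
  obtain ⟨kstar, hk⟩ := eventually_atTop.1 (E.eventually_exists_pair.and (eventually_ge_atTop 1))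
  refine ⟨kstar, (hk kstar le_rfl).2, fun k hkk => ⟨1, le_rfl, fun j _ hj1 hj => ?_⟩⟩
  obtain rfl : j = 1 := le_antisymm hj hj1
  exact (hk k hkk).1

/-- Proposition 3.1: if the truncated equation `u'' + h(t,u) = 0` has a
`T`-periodic solution `u*` with negative principal eigenvalue of the linearization, and a
lower solution `α < u*`, then it has pairs of subharmonic solutions of every large order `k`
oscillating around `u*` and lying above `α`. -/
theorem stmt4 (T : ℝ) (hT : 0 < T) (q : ℝ → ℝ)
    (hqper : Function.Periodic q T)
    (hqloc : MeasureTheory.LocallyIntegrable q MeasureTheory.volume)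
    (g : ℝ → ℝ) (hgC2 : ContDiffOn ℝ 2 g (Set.Ici 0))
    (hg0 : g 0 = 0) (hgpos : ∀ s : ℝ, 0 < s → 0 < g s)
    (R : ℝ) (hR : 0 < R)
    (ustar : ℝ → ℝ)
    (hustar : IsSol (hExt q g R) ustar) (hustarper : Function.Periodic ustar T)
    -- (i) the principal eigenvalue of `v'' + (λ + ∂ₛ h(t,u*(t))) v = 0` is negative:
    (heig : ∃ lam : ℝ, lam < 0 ∧ ∃ v : ℝ → ℝ, (∀ t, 0 < v t) ∧ Function.Periodic v T ∧
      IsSol (fun t s => (lam + deriv (fun x => hExt q g R t x) (ustar t)) * s) v)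
    -- (ii) a `T`-periodic lower solution `α` of class `W²·¹_loc` with `α < u*`:
    (α : ℝ → ℝ) (hαper : Function.Periodic α T)
    (hαlow : ∃ α' w : ℝ → ℝ,
      (∀ t, HasDerivAt α (α' t) t) ∧
      MeasureTheory.LocallyIntegrable w MeasureTheory.volume ∧
      (∀ t, α' t = α' 0 + ∫ s in (0:ℝ)..t, w s) ∧
      (∀ᵐ t ∂MeasureTheory.volume, 0 ≤ w t + hExt q g R t (α t)))
    (hαlt : ∀ t, α t < ustar t) :
    ∃ kstar : ℕ, 1 ≤ kstar ∧ ∀ k : ℕ, kstar ≤ k →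
      ∃ mk : ℕ, 1 ≤ mk ∧ ∀ j : ℕ, Nat.Coprime j k → 1 ≤ j → j ≤ mk →
        ∃ u₁ u₂ : ℝ → ℝ,
          (IsSol (hExt q g R) u₁ ∧ IsSubharmonic u₁ T k ∧
            {t | t ∈ Set.Ico (0:ℝ) ((k:ℝ) * T) ∧ u₁ t = ustar t}.ncard = 2 * j ∧
            ∀ t, α t ≤ u₁ t) ∧
          (IsSol (hExt q g R) u₂ ∧ IsSubharmonic u₂ T k ∧
            {t | t ∈ Set.Ico (0:ℝ) ((k:ℝ) * T) ∧ u₂ t = ustar t}.ncard = 2 * j ∧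
            ∀ t, α t ≤ u₂ t) ∧
          ¬ SameClass u₁ u₂ T :=
  stmt4_general T hT q hqper hqloc g (hgC2.of_le one_le_two) hg0 R hR.le ustar hustar hustarper heig
    α hαper hαlow hαlt
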